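/- arXiv:1902.07201 — 2 statements merged into one kernel-verified Lean document; each statement's English description precedes it below -/
import Mathlib

section
/- Let m ≥ 2 and let S_1, …, S_m be pairwise disjoint, non-empty, finite subsets of the complex projective space ℙ(ℂ^{n+1}). If the union S_1 ∪ … ∪ S_m is not contained in any projective subspace of dimension 4 (i.e., the homogeneous vectors representing the points span a linear subspace of ℂ^{n+1} of dimension at least 6), then there exists a projective line ℓ such that ℓ intersects exactly two of the sets S_1, …, S_m (i.e., the set of indices i with ℓ ∩ S_i ≠ ∅ has exactly two elements). -/
/-!
Suppose every line joining points of two different classes meets a third class, and project from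
the line through points `p`, `q` of two different classes. The image spans dimension at least `4`,
so by Kelly's theorem (a complex Sylvester–Gallai configuration is coplanar) it has an ordinary
line, through the images of `x` and `y` say. A point of the preimage of `x` and a point of the
preimage of `y` must have the same class: otherwise the third class on the line joining them would
give another point on the ordinary line. The class of `x` differs from that of `p` or of `q`, and a
third point on the line from `x` to it lies over `x` but in another class, a contradiction.

For Kelly's theorem, suppose `n` vectors spanning a `4`-dimensional space form a Sylvester–Gallai
configuration. Every proper subspace contains fewer than half of them, which is what is needed to
move them by a linear isomorphism into radial isotropic position: the unit vectors `uᵢ` on their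
images satisfy `∑ᵢ |⟪x, uᵢ⟫|² = (n / 4) ‖x‖²`. Then `∑ |⟪uᵢ, uⱼ⟫|²` over all ordered pairs is
`n² / 4`. But by the Welch bound the `k ≥ 3` vectors on one line contribute at least `k (k - 1) / 4`
off the diagonal, so the total is at least `n + n (n - 1) / 4 > n² / 4`.
-/

open Module Submodule Finset
open scoped InnerProductSpace LinearAlgebra.Projectivization

/-! ### Radial isotropic position -/

section GreedyBasis

variable {ι : Type*}

theorem mul_sub_le_sum_mul_of_le_sum_superlevel [Fintype ι] {a t : ι → ℝ} {ε : ℝ} {i j : ι}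
    (ha : ∑ k, a k = 0) (hi : ∀ k, t k ≤ t i) (hj : ∀ k, t j ≤ t k)
    (h : ∀ r, t j < r → r ≤ t i → ε ≤ ∑ k with r ≤ t k, a k) :
    ε * (t i - t j) ≤ ∑ k, a k * t k := by
  -- Layer-cake: integrate the hypothesis over the levels `r` between `t j` and `t i`.
  have hint (k : ι) : IntervalIntegrable ({r | r ≤ t k}.indicator fun _ ↦ a k)
      MeasureTheory.volume (t j) (t i) :=
    ⟨intervalIntegrable_const.1.indicator measurableSet_Iic,
      intervalIntegrable_const.2.indicator measurableSet_Iic⟩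
  calc ε * (t i - t j)
      = ∫ _ in t j..t i, ε := by rw [intervalIntegral.integral_const, smul_eq_mul, mul_comm]
    _ ≤ ∫ r in t j..t i, ∑ k, {r | r ≤ t k}.indicator (fun _ ↦ a k) r := by
        refine intervalIntegral.integral_mono_on_of_le_Ioo (hi j) intervalIntegrable_const
          (by simpa only [Finset.sum_fn] using IntervalIntegrable.sum univ fun k _ ↦ hint k)
          fun r hr ↦ ?_
        simpa only [Set.indicator_apply, Set.mem_ofPred_eq, Finset.sum_filter]
          using h r hr.1 hr.2.le
    _ = ∑ k, ∫ r in t j..t i, {r | r ≤ t k}.indicator (fun _ ↦ a k) r :=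
        intervalIntegral.integral_finsetSum fun k _ ↦ hint k
    _ = ∑ k, a k * (t k - t j) := by
        refine sum_congr rfl fun k _ ↦ ?_
        rw [intervalIntegral.integral_indicator ⟨hj k, hi k⟩, intervalIntegral.integral_const,
          smul_eq_mul, mul_comm]
    _ = ∑ k, a k * t k := by
        simp only [mul_sub, sum_sub_distrib, ← sum_mul, ha, zero_mul, sub_zero]

theorem exists_linearIndepOn_forall_span_superlevel_le {K V : Type*} [DivisionRing K]
    [AddCommGroup V] [Module K V] (v : ι → V) (t : ι → ℝ) (s : Finset ι) :
    ∃ I ⊆ s, LinearIndepOn K v I ∧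
      ∀ r, span K (v '' ({i ∈ s | r ≤ t i} : Finset ι)) ≤
        span K (v '' ({i ∈ I | r ≤ t i} : Finset ι)) := by
  classical
  -- Greedy choice in order of decreasing `t`: each insertion adds an index of minimal value.
  induction s using Finset.induction_on_min_value t with
  | empty => exact ⟨∅, subset_rfl, by simp, by simp⟩
  | insert a s _ hmin ih =>
    obtain ⟨I, hIs, hI, hspan⟩ := ih
    obtain ⟨J, hIJ, hJs, hJ, haJ⟩ : ∃ J, I ⊆ J ∧ J ⊆ insert a s ∧ LinearIndepOn K v J ∧
        v a ∈ span K (v '' (J : Set ι)) := by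
      by_cases ha : v a ∈ span K (v '' (I : Set ι))
      · exact ⟨I, subset_rfl, hIs.trans (subset_insert a s), hI, ha⟩
      · refine ⟨insert a I, subset_insert a I, insert_subset_insert a hIs, ?_,
          subset_span ⟨a, by simp, rfl⟩⟩
        rw [coe_insert]
        exact hI.insert ha
    refine ⟨J, hJs, hJ, fun r ↦ span_le.2 ?_⟩
    rintro _ ⟨i, hi, rfl⟩
    obtain ⟨his, hri⟩ := mem_filter.1 (mem_coe.1 hi)
    obtain rfl | his := mem_insert.1 his
    · have hJr : {k ∈ J | r ≤ t k} = J := by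
        refine filter_true_of_mem fun k hk ↦ ?_
        obtain rfl | hk := mem_insert.1 (hJs hk)
        exacts [hri, hri.trans (hmin k hk)]
      rwa [hJr]
    · exact span_mono (Set.image_mono (coe_subset.2 (filter_subset_filter _ hIJ)))
        (hspan r (subset_span ⟨i, by simp [his, hri], rfl⟩))

theorem exists_linearIndepOn_span_eq_top_finrank_superlevel_le [Fintype ι] {K V : Type*}
    [DivisionRing K] [AddCommGroup V] [Module K V] {v : ι → V} (hv : span K (Set.range v) = ⊤)
    (t : ι → ℝ) :
    ∃ I : Finset ι, LinearIndepOn K v I ∧ span K (v '' I) = ⊤ ∧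
      ∀ r, finrank K (span K (v '' ({i | r ≤ t i} : Finset ι))) ≤ #{i ∈ I | r ≤ t i} := by
  classical
  obtain ⟨I, -, hI, hgreedy⟩ := exists_linearIndepOn_forall_span_superlevel_le (K := K) v t univ
  refine ⟨I, hI, ?_, fun r ↦ ?_⟩
  · obtain ⟨m, hm⟩ := (Set.finite_range t).bddBelow
    have hmt (k : ι) : m ≤ t k := hm ⟨k, rfl⟩
    refine top_le_iff.1 ?_
    simpa only [hmt, filter_true, coe_univ, Set.image_univ, hv] using hgreedy m
  · have hle := hgreedy r
    rw [← coe_image (s := {i ∈ I | r ≤ t i})] at hle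
    exact (finrank_mono hle).trans ((finrank_span_finset_le_card _).trans card_image_le)

end GreedyBasis

section Barthe

variable {ι 𝕜 E : Type*} [Fintype ι] [RCLike 𝕜]

/-- Barthe's condition on weights `c` for spanning nonzero vectors `v`: every nonempty proper
subfamily has total weight less than the dimension of its span. It guarantees that `v` can be moved
into radial isotropic position with weights `c`. -/
structure BartheCondition (𝕜 : Type*) {ι E : Type*} [Fintype ι] [DivisionRing 𝕜] [AddCommGroup E]
    [Module 𝕜 E] (c : ι → ℝ) (v : ι → E) : Prop where
  ne_zero : ∀ i, v i ≠ 0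
  span_range : span 𝕜 (Set.range v) = ⊤
  sum_eq : ∑ i, c i = finrank 𝕜 E
  sum_lt : ∀ A : Finset ι, A.Nonempty → A ≠ univ →
    ∑ i ∈ A, c i < finrank 𝕜 (span 𝕜 (v '' A))

theorem BartheCondition.exists_pos_add_sum_le_finrank {K V : Type*} [DivisionRing K]
    [AddCommGroup V] [Module K V] {c : ι → ℝ} {v : ι → V} (h : BartheCondition K c v) :
    ∃ ε > 0, ∀ A : Finset ι, A.Nonempty → A ≠ univ →
      ε + ∑ i ∈ A, c i ≤ finrank K (span K (v '' A)) := by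
  have hev : ∀ᶠ ε in nhdsWithin (0 : ℝ) (Set.Ioi 0), ∀ A : Finset ι, A.Nonempty → A ≠ univ →
      ε + ∑ i ∈ A, c i ≤ finrank K (span K (v '' A)) := by
    simp only [Filter.eventually_all]
    intro A hne huniv
    filter_upwards [Ioo_mem_nhdsGT (sub_pos.2 (h.sum_lt A hne huniv))] with ε hε
    linarith [hε.2]
  obtain ⟨ε, hε, hpos⟩ := (hev.and self_mem_nhdsWithin).exists
  exact ⟨ε, hpos, hε⟩

theorem BartheCondition.exists_linearIndepOn_mul_sub_le {K V : Type*} [DivisionRing K]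
    [AddCommGroup V] [Module K V] {c : ι → ℝ} {v : ι → V} (h : BartheCondition K c v) :
    ∃ ε > 0, ∀ t : ι → ℝ, ∃ I : Finset ι, LinearIndepOn K v I ∧ span K (v '' I) = ⊤ ∧
      ∀ i j, ε * (t i - t j) ≤ ∑ k ∈ I, t k - ∑ k, c k * t k := by
  classical
  obtain ⟨ε, hε, hgap⟩ := h.exists_pos_add_sum_le_finrank
  refine ⟨ε, hε, fun t ↦ ?_⟩
  obtain ⟨I, hI, hspan, hrank⟩ :=
    exists_linearIndepOn_span_eq_top_finrank_superlevel_le h.span_range t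
  have hcard : (#I : ℝ) = finrank K V := by
    rw [← finrank_top K V, ← hspan, Set.image_eq_range]
    exact_mod_cast (finrank_span_eq_card hI).symm ▸ (Fintype.card_coe I).symm
  refine ⟨I, hI, hspan, fun i j ↦ ?_⟩
  have : Nonempty ι := ⟨i⟩
  obtain ⟨top, htop⟩ := Finite.exists_max t
  obtain ⟨bot, hbot⟩ := Finite.exists_min t
  calc ε * (t i - t j) ≤ ε * (t top - t bot) := by gcongr <;> solve_by_elim
    _ ≤ ∑ k, ((if k ∈ I then 1 else 0) - c k) * t k := by
      refine mul_sub_le_sum_mul_of_le_sum_superlevel ?_ htop hbot fun r hbr hrt ↦ ?_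
      · simp [hcard, h.sum_eq]
      · have hgap_r := hgap {k | r ≤ t k} ⟨top, by simpa using hrt⟩
          fun hall ↦ hbr.not_ge (by simpa using hall.ge (mem_univ bot))
        have hcount : ∑ k with r ≤ t k, (if k ∈ I then (1 : ℝ) else 0) = #{k ∈ I | r ≤ t k} := by
          rw [sum_boole, filter_comm, filter_univ_mem]
        have : (finrank K (span K (v '' ({k | r ≤ t k} : Finset ι))) : ℝ) ≤ #{k ∈ I | r ≤ t k} :=
          mod_cast hrank r
        rw [sum_sub_distrib, hcount]
        linarith
    _ = ∑ k ∈ I, t k - ∑ k, c k * t k := by simp [sub_mul, sum_sub_distrib]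

theorem BartheCondition.map {K V V' : Type*} [DivisionRing K] [AddCommGroup V] [Module K V]
    [AddCommGroup V'] [Module K V'] {c : ι → ℝ} {v : ι → V} (h : BartheCondition K c v)
    (e : V ≃ₗ[K] V') : BartheCondition K c (e ∘ v) where
  ne_zero i := e.map_ne_zero_iff.2 (h.ne_zero i)
  span_range := by
    rw [Set.range_comp, ← LinearEquiv.coe_coe, span_image, h.span_range, Submodule.map_top,
      LinearEquiv.range]
  sum_eq := by rw [h.sum_eq, e.finrank_eq]
  sum_lt A hne huniv := by
    rw [Set.image_comp, ← LinearEquiv.coe_coe, span_image, LinearEquiv.finrank_map_eq]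
    exact h.sum_lt A hne huniv

variable [NormedAddCommGroup E]

section NormedSpace

variable [NormedSpace 𝕜 E]

/-- The functional on invertible operators `B` whose minimisers bring `v` into radial isotropic
position with weights `c`. Its values at singular `B` are meaningless, since `Real.log 0 = 0`. -/
noncomputable def bartheFunctional (c : ι → ℝ) (v : ι → E) (B : E →L[𝕜] E) : ℝ :=
  ∑ i, c i * Real.log ‖B (v i)‖ - Real.log ‖B.det‖

theorem exists_norm_det_le_mul_prod_norm_apply {κ : Type*} [Fintype κ] (b : Basis κ 𝕜 E) :
    ∃ C > 0, ∀ B : E →L[𝕜] E, ‖B.det‖ ≤ C * ∏ i, ‖B (b i)‖ := by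
  classical
  have := b.finiteDimensional_of_finite
  have hcont : Continuous b.det.toMultilinearMap := by
    have hrepr (i : κ) : Continuous fun x ↦ b.repr x i :=
      (b.coord i).continuous_of_finiteDimensional
    change Continuous fun w ↦ b.det w
    simp only [b.det_apply]
    exact Continuous.matrix_det <| continuous_matrix fun i j ↦ (hrepr i).comp (continuous_apply j)
  obtain ⟨C, hC, hbound⟩ := b.det.toMultilinearMap.exists_bound_of_continuous hcont
  refine ⟨C, hC, fun B ↦ ?_⟩
  have hdet : b.det (B ∘ b) = B.det := by
    rw [← ContinuousLinearMap.coe_coe, b.det_comp, b.det_self, mul_one, ContinuousLinearMap.det]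
  rw [← hdet]
  exact hbound (B ∘ b)

theorem exists_log_norm_det_le_add_sum {ι : Type*} [Finite ι] (v : ι → E) :
    ∃ C, ∀ I : Finset ι, LinearIndepOn 𝕜 v I → span 𝕜 (v '' I) = ⊤ → ∀ B : E →L[𝕜] E, B.det ≠ 0 →
      Real.log ‖B.det‖ ≤ C + ∑ i ∈ I, Real.log ‖B (v i)‖ := by
  have hI (I : Finset ι) : ∃ C, LinearIndepOn 𝕜 v I → span 𝕜 (v '' I) = ⊤ →
      ∀ B : E →L[𝕜] E, B.det ≠ 0 → Real.log ‖B.det‖ ≤ C + ∑ i ∈ I, Real.log ‖B (v i)‖ := by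
    by_cases hI : LinearIndepOn 𝕜 v I ∧ span 𝕜 (v '' I) = ⊤
    · let b : Basis I 𝕜 E := .mk hI.1 (by rw [← Set.image_eq_range, hI.2])
      obtain ⟨C, hC, hbound⟩ := exists_norm_det_le_mul_prod_norm_apply b
      refine ⟨Real.log C, fun _ _ B hB ↦ ?_⟩
      have hBb (i : I) : b i = v i := Basis.mk_apply ..
      have hprod := hbound B
      simp only [hBb, prod_coe_sort I fun i ↦ ‖B (v i)‖] at hprod
      have hprod_pos : 0 < ∏ i ∈ I, ‖B (v i)‖ :=
        pos_of_mul_pos_right ((norm_pos_iff.2 hB).trans_le hprod) hC.le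
      rw [← Real.log_prod fun i hi ↦ (prod_ne_zero_iff.1 hprod_pos.ne' i hi),
        ← Real.log_mul hC.ne' hprod_pos.ne']
      exact Real.log_le_log (norm_pos_iff.2 hB) hprod
    · exact ⟨0, fun h1 h2 ↦ (hI ⟨h1, h2⟩).elim⟩
  choose C hC using hI
  obtain ⟨M, hM⟩ := (Set.finite_range C).bddAbove
  exact ⟨M, fun I h1 h2 B hB ↦ (hC I h1 h2 B hB).trans <| by gcongr; exact hM ⟨I, rfl⟩⟩

theorem BartheCondition.exists_mul_sub_log_norm_le_add {c : ι → ℝ} {v : ι → E}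
    (h : BartheCondition 𝕜 c v) :
    ∃ ε > 0, ∃ C, ∀ B : E →L[𝕜] E, B.det ≠ 0 → ∀ i j,
      ε * (Real.log ‖B (v i)‖ - Real.log ‖B (v j)‖) ≤ bartheFunctional c v B + C := by
  obtain ⟨ε, hε, hbasis⟩ := h.exists_linearIndepOn_mul_sub_le
  obtain ⟨C, hC⟩ := exists_log_norm_det_le_add_sum (𝕜 := 𝕜) v
  refine ⟨ε, hε, C, fun B hB i j ↦ ?_⟩
  obtain ⟨I, hI, hspan, hle⟩ := hbasis fun k ↦ -Real.log ‖B (v k)‖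
  calc ε * (Real.log ‖B (v i)‖ - Real.log ‖B (v j)‖)
      = ε * (-Real.log ‖B (v j)‖ - -Real.log ‖B (v i)‖) := by ring
    _ ≤ ∑ k ∈ I, -Real.log ‖B (v k)‖ - ∑ k, c k * -Real.log ‖B (v k)‖ := hle j i
    _ = ∑ k, c k * Real.log ‖B (v k)‖ - ∑ k ∈ I, Real.log ‖B (v k)‖ := by
      simp only [sum_neg_distrib, mul_neg]; ring
    _ ≤ bartheFunctional c v B + C := by
      unfold bartheFunctional
      linarith [hC I hI hspan B hB]

theorem BartheCondition.exists_le_norm_det {c : ι → ℝ} {v : ι → E}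
    (h : BartheCondition 𝕜 c v) (M : ℝ) :
    ∃ δ > 0, ∀ B : E →L[𝕜] E, B.det ≠ 0 → bartheFunctional c v B ≤ M →
      (∀ i, ‖B (v i)‖ ≤ 1) → (∃ i, ‖B (v i)‖ = 1) → δ ≤ ‖B.det‖ := by
  obtain ⟨ε, hε, C, hcoer⟩ := h.exists_mul_sub_log_norm_le_add
  refine ⟨Real.exp (-(∑ i, |c i| * ((M + C) / ε)) - M), Real.exp_pos _,
    fun B hB hM hle ⟨i, hi⟩ ↦ ?_⟩
  rw [← Real.le_log_iff_exp_le (norm_pos_iff.2 hB)]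
  have hlog (j : ι) : |Real.log ‖B (v j)‖| ≤ (M + C) / ε := by
    rw [abs_of_nonpos (Real.log_nonpos (norm_nonneg _) (hle j)), le_div_iff₀' hε]
    have := hcoer B hB i j
    rw [hi, Real.log_one, zero_sub] at this
    linarith
  have hsum : -(∑ i, |c i| * ((M + C) / ε)) ≤ ∑ j, c j * Real.log ‖B (v j)‖ := by
    rw [← sum_neg_distrib]
    refine sum_le_sum fun j _ ↦ ?_
    refine (neg_le_neg ?_).trans (neg_abs_le _)
    rw [abs_mul]
    gcongr
    exact hlog j
  unfold bartheFunctional at hM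
  linarith

variable [FiniteDimensional 𝕜 E]

theorem apply_ne_zero_of_det_ne_zero {B : E →L[𝕜] E} (hB : B.det ≠ 0) {x : E} (hx : x ≠ 0) :
    B x ≠ 0 :=
  (map_ne_zero_iff B ((LinearMap.equivOfDetNeZero (B : E →ₗ[𝕜] E) hB).injective)).2 hx

theorem BartheCondition.bartheFunctional_smul {c : ι → ℝ} {v : ι → E}
    (h : BartheCondition 𝕜 c v) {B : E →L[𝕜] E} (hB : B.det ≠ 0) {r : 𝕜} (hr : r ≠ 0) :
    bartheFunctional c v (r • B) = bartheFunctional c v B := by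
  have hlog (i : ι) : Real.log ‖(r • B) (v i)‖ = Real.log ‖r‖ + Real.log ‖B (v i)‖ := by
    rw [smul_apply, norm_smul, Real.log_mul (norm_ne_zero_iff.2 hr)
      (norm_ne_zero_iff.2 (apply_ne_zero_of_det_ne_zero hB (h.ne_zero i)))]
  have hdet : Real.log ‖(r • B).det‖ = finrank 𝕜 E * Real.log ‖r‖ + Real.log ‖B.det‖ := by
    rw [ContinuousLinearMap.det, ContinuousLinearMap.toLinearMap_smul, LinearMap.det_smul, norm_mul,
      norm_pow, Real.log_mul (pow_ne_zero _ (norm_ne_zero_iff.2 hr)) (norm_ne_zero_iff.2 hB),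
      Real.log_pow]
  simp only [bartheFunctional, hlog, hdet, mul_add, sum_add_distrib, ← sum_mul, h.sum_eq]
  ring

theorem isCompact_setOf_norm_apply_le {ι : Type*} [Finite ι] {v : ι → E}
    (hv : span 𝕜 (Set.range v) = ⊤) (δ : ℝ) :
    IsCompact {B : E →L[𝕜] E | (∀ i, ‖B (v i)‖ ≤ 1) ∧ δ ≤ ‖B.det‖} := by
  have := FiniteDimensional.proper_rclike 𝕜 E
  cases nonempty_fintype ι
  let ev : (E →L[𝕜] E) →ₗ[𝕜] ι → E :=
    LinearMap.pi fun i ↦ (ContinuousLinearMap.apply 𝕜 E (v i)).toLinearMap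
  have hev : Function.Injective ev := fun B B' hBB' ↦
    ContinuousLinearMap.coe_injective <| LinearMap.ext_on hv <| by
      rintro _ ⟨i, rfl⟩
      exact congr_fun hBB' i
  have hball : IsCompact (ev ⁻¹' Metric.closedBall 0 1) :=
    (LinearMap.isClosedEmbedding_of_injective (LinearMap.ker_eq_bot.2 hev)).isCompact_preimage
      (isCompact_closedBall 0 1)
  convert! hball.inter_right
    (isClosed_le (continuous_const (y := δ)) ContinuousLinearMap.continuous_det.norm) using 1
  ext B
  simp [pi_norm_le_iff_of_nonneg, ev]

theorem exists_smul_norm_apply_le {ι : Type*} [Finite ι] [Nonempty ι] {v : ι → E}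
    (hv : ∀ i, v i ≠ 0) {B : E →L[𝕜] E} (hB : B.det ≠ 0) :
    ∃ r : 𝕜, r ≠ 0 ∧ (∀ i, ‖(r • B) (v i)‖ ≤ 1) ∧ ∃ i, ‖(r • B) (v i)‖ = 1 := by
  obtain ⟨i, hi⟩ := Finite.exists_max fun i ↦ ‖B (v i)‖
  have hpos : 0 < ‖B (v i)‖ := norm_pos_iff.2 (apply_ne_zero_of_det_ne_zero hB (hv i))
  have hsmul (j : ι) : ‖(((‖B (v i)‖⁻¹ : ℝ) : 𝕜) • B) (v j)‖ = ‖B (v j)‖ / ‖B (v i)‖ := by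
    simp [norm_smul, div_eq_inv_mul]
  refine ⟨(‖B (v i)‖⁻¹ : ℝ), by simpa using hpos.ne', fun j ↦ ?_, i, ?_⟩
  · rw [hsmul, div_le_one hpos]
    exact hi j
  · rw [hsmul, div_self hpos.ne']

theorem continuousOn_bartheFunctional (c : ι → ℝ) {v : ι → E} (hv : ∀ i, v i ≠ 0) :
    ContinuousOn (bartheFunctional (𝕜 := 𝕜) c v) {B | B.det ≠ 0} := by
  refine .sub (continuousOn_finsetSum _ fun i _ ↦ continuousOn_const.mul ?_) ?_
  · exact .log (by fun_prop) fun B hB ↦ norm_ne_zero_iff.2 (apply_ne_zero_of_det_ne_zero hB (hv i))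
  · exact .log ContinuousLinearMap.continuous_det.norm.continuousOn fun B hB ↦ norm_ne_zero_iff.2 hB

theorem BartheCondition.exists_forall_bartheFunctional_le [Nonempty ι] {c : ι → ℝ} {v : ι → E}
    (h : BartheCondition 𝕜 c v) :
    ∃ B : E →L[𝕜] E, B.det ≠ 0 ∧
      ∀ B' : E →L[𝕜] E, B'.det ≠ 0 → bartheFunctional c v B ≤ bartheFunctional c v B' := by
  have hone : (1 : E →L[𝕜] E).det ≠ 0 := by simp [ContinuousLinearMap.det]
  obtain ⟨δ, hδ, hdet⟩ := h.exists_le_norm_det (bartheFunctional (𝕜 := 𝕜) c v 1)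
  let K : Set (E →L[𝕜] E) := {B | (∀ i, ‖B (v i)‖ ≤ 1) ∧ δ ≤ ‖B.det‖}
  have hKdet {B : E →L[𝕜] E} (hB : B ∈ K) : B.det ≠ 0 := norm_pos_iff.1 (hδ.trans_le hB.2)
  have hK {B : E →L[𝕜] E} (hB : B.det ≠ 0)
      (hB1 : bartheFunctional c v B ≤ bartheFunctional (𝕜 := 𝕜) c v 1) :
      ∃ B' ∈ K, bartheFunctional c v B' = bartheFunctional c v B := by
    obtain ⟨r, hr, hle, hmax⟩ := exists_smul_norm_apply_le h.ne_zero hB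
    have hrB := h.bartheFunctional_smul hB hr
    have hdet_rB : (r • B).det ≠ 0 := by
      rw [ContinuousLinearMap.det, ContinuousLinearMap.toLinearMap_smul, LinearMap.det_smul]
      exact mul_ne_zero (pow_ne_zero _ hr) hB
    exact ⟨r • B, ⟨hle, hdet _ hdet_rB (hrB.trans_le hB1) hle hmax⟩, hrB⟩
  obtain ⟨B₁, hB₁, hB₁eq⟩ := hK hone le_rfl
  obtain ⟨B, hB, hmin⟩ := (isCompact_setOf_norm_apply_le h.span_range δ).exists_isMinOn ⟨B₁, hB₁⟩
    ((continuousOn_bartheFunctional c h.ne_zero).mono fun B hB ↦ hKdet hB)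
  refine ⟨B, hKdet hB, fun B' hB' ↦ ?_⟩
  obtain hle | hlt := le_or_gt (bartheFunctional c v B') (bartheFunctional (𝕜 := 𝕜) c v 1)
  · obtain ⟨B'', hB'', heq⟩ := hK hB' hle
    exact heq ▸ hmin hB''
  · exact (hmin hB₁).trans (hB₁eq.trans_le hlt.le)

end NormedSpace

section InnerProductSpace

variable [InnerProductSpace 𝕜 E]

theorem hasDerivAt_log_norm_add_smul {y z : E} (hy : y ≠ 0) :
    HasDerivAt (fun s : ℝ ↦ Real.log ‖y + (s : 𝕜) • z‖) (RCLike.re ⟪y, z⟫_𝕜 / ‖y‖ ^ 2) 0 := by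
  have hsq (s : ℝ) : ‖y + (s : 𝕜) • z‖ ^ 2 =
      ‖y‖ ^ 2 + s * (2 * RCLike.re ⟪y, z⟫_𝕜) + s ^ 2 * ‖z‖ ^ 2 := by
    rw [norm_add_sq (𝕜 := 𝕜), inner_smul_right, RCLike.re_ofReal_mul, norm_smul,
      RCLike.norm_ofReal, mul_pow, sq_abs]
    ring
  have hlog (s : ℝ) : Real.log ‖y + (s : 𝕜) • z‖ = Real.log (‖y + (s : 𝕜) • z‖ ^ 2) / 2 := by
    simp [Real.log_pow]
  simp only [hlog, hsq]
  have hpoly := ((((hasDerivAt_id (0 : ℝ)).mul_const (2 * RCLike.re ⟪y, z⟫_𝕜)).const_add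
    (‖y‖ ^ 2)).add (((hasDerivAt_id (0 : ℝ)).pow 2).mul_const (‖z‖ ^ 2))).log (by simpa using hy)
  refine (hpoly.div_const 2).congr_deriv ?_
  simp
  ring

variable [FiniteDimensional 𝕜 E]

theorem det_one_add_smul_rankOne_self_mul (x : E) (s : ℝ) (B : E →L[𝕜] E) :
    ((1 + (s : 𝕜) • InnerProductSpace.rankOne 𝕜 x x) * B).det =
      (1 + s * ‖x‖ ^ 2 : ℝ) * B.det := by
  have hcoe : (((1 + (s : 𝕜) • InnerProductSpace.rankOne 𝕜 x x) * B : E →L[𝕜] E) : E →ₗ[𝕜] E) =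
      LinearMap.transvection ((s : 𝕜) • innerₛₗ 𝕜 x) x * B := by
    ext y
    simp [LinearMap.transvection, RCLike.real_smul_eq_coe_mul, mul_smul]
  rw [ContinuousLinearMap.det, hcoe, map_mul, LinearMap.transvection.det]
  simp [ContinuousLinearMap.det, inner_self_eq_norm_sq_to_K, RCLike.real_smul_eq_coe_mul]

theorem sum_mul_norm_inner_sq_div_eq_of_bartheFunctional_min {c : ι → ℝ} {v : ι → E}
    (hv : ∀ i, v i ≠ 0) {B : E →L[𝕜] E} (hB : B.det ≠ 0)
    (hmin : ∀ B' : E →L[𝕜] E, B'.det ≠ 0 → bartheFunctional c v B ≤ bartheFunctional c v B')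
    (x : E) : ∑ i, c i * (‖⟪x, B (v i)⟫_𝕜‖ ^ 2 / ‖B (v i)‖ ^ 2) = ‖x‖ ^ 2 := by
  -- First variation of the functional at `B` along `s ↦ (1 + s • rankOne x x) * B`.
  let P (s : ℝ) : E →L[𝕜] E := (1 + (s : 𝕜) • InnerProductSpace.rankOne 𝕜 x x) * B
  have hP (s : ℝ) (y : E) : P s y = B y + (s : 𝕜) • ⟪x, B y⟫_𝕜 • x := by simp [P]
  have hdet (s : ℝ) : (P s).det = (1 + s * ‖x‖ ^ 2 : ℝ) * B.det := by
    simpa only [P] using det_one_add_smul_rankOne_self_mul x s B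
  have hfun (s : ℝ) (hs : 1 + s * ‖x‖ ^ 2 ≠ 0) : bartheFunctional c v (P s) =
      ∑ i, c i * Real.log ‖B (v i) + (s : 𝕜) • ⟪x, B (v i)⟫_𝕜 • x‖ -
        (Real.log (1 + s * ‖x‖ ^ 2) + Real.log ‖B.det‖) := by
    rw [bartheFunctional, hdet, norm_mul, RCLike.norm_ofReal,
      Real.log_mul (abs_ne_zero.2 hs) (norm_ne_zero_iff.2 hB), Real.log_abs]
    simp only [hP]
  have hne : ∀ᶠ s : ℝ in nhds 0, 1 + s * ‖x‖ ^ 2 ≠ 0 :=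
    ContinuousAt.eventually_ne (by fun_prop) (by simp)
  have hderiv : HasDerivAt (fun s ↦ bartheFunctional c v (P s))
      (∑ i, c i * (‖⟪x, B (v i)⟫_𝕜‖ ^ 2 / ‖B (v i)‖ ^ 2) - ‖x‖ ^ 2) 0 := by
    have hlog (i : ι) := (hasDerivAt_log_norm_add_smul (𝕜 := 𝕜)
      (z := ⟪x, B (v i)⟫_𝕜 • x) (apply_ne_zero_of_det_ne_zero hB (hv i))).const_mul (c i)
    have hlogdet : HasDerivAt (fun s : ℝ ↦ Real.log (1 + s * ‖x‖ ^ 2)) (‖x‖ ^ 2) 0 := by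
      simpa using (((hasDerivAt_id (0 : ℝ)).mul_const (‖x‖ ^ 2)).const_add 1).log (by simp)
    refine (((HasDerivAt.fun_sum fun i _ ↦ hlog i).sub
      (hlogdet.add_const (Real.log ‖B.det‖))).congr_of_eventuallyEq (hne.mono hfun)).congr_deriv ?_
    congr! 4 with i
    rw [inner_smul_right, inner_mul_symm_re_eq_norm, norm_mul, norm_inner_symm (B (v i)) x, ← sq]
  have hlocal : IsLocalMin (fun s ↦ bartheFunctional c v (P s)) 0 := by
    filter_upwards [hne] with s hs
    have hP0 : P 0 = B := by simp [P]
    rw [hP0]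
    exact hmin _ (hdet s ▸ mul_ne_zero (by exact_mod_cast hs) hB)
  exact sub_eq_zero.1 (hlocal.hasDerivAt_eq_zero hderiv)

theorem BartheCondition.exists_linearEquiv_sum_mul_norm_inner_sq_div_eq [Nonempty ι] {V : Type*}
    [AddCommGroup V] [Module 𝕜 V] [FiniteDimensional 𝕜 V] {c : ι → ℝ} {v : ι → V}
    (h : BartheCondition 𝕜 c v) (hVE : finrank 𝕜 V = finrank 𝕜 E) :
    ∃ A : V ≃ₗ[𝕜] E, ∀ x, ∑ i, c i * (‖⟪x, A (v i)⟫_𝕜‖ ^ 2 / ‖A (v i)‖ ^ 2) = ‖x‖ ^ 2 := by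
  let e : V ≃ₗ[𝕜] E := LinearEquiv.ofFinrankEq V E hVE
  have he := h.map e
  obtain ⟨B, hB, hmin⟩ := he.exists_forall_bartheFunctional_le
  exact ⟨e.trans (LinearMap.equivOfDetNeZero (B : E →ₗ[𝕜] E) hB),
    sum_mul_norm_inner_sq_div_eq_of_bartheFunctional_min he.ne_zero hB hmin⟩

end InnerProductSpace

end Barthe

/-! ### The Welch bound -/

section Welch

variable {ι 𝕜 E : Type*} [RCLike 𝕜] [NormedAddCommGroup E] [InnerProductSpace 𝕜 E]

theorem sum_norm_sum_inner_mul_inner_sq {κ : Type*} [Fintype ι] [Fintype κ]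
    (e : OrthonormalBasis κ 𝕜 E) (x : ι → E) :
    ∑ a, ∑ b, ‖∑ i, ⟪e a, x i⟫_𝕜 * ⟪x i, e b⟫_𝕜‖ ^ 2 = ∑ i, ∑ j, ‖⟪x i, x j⟫_𝕜‖ ^ 2 := by
  have hcast : ((∑ a, ∑ b, ‖∑ i, ⟪e a, x i⟫_𝕜 * ⟪x i, e b⟫_𝕜‖ ^ 2 : ℝ) : 𝕜) =
      (∑ i, ∑ j, ‖⟪x i, x j⟫_𝕜‖ ^ 2 : ℝ) := by
    push_cast
    calc ∑ a, ∑ b, (‖∑ i, ⟪e a, x i⟫_𝕜 * ⟪x i, e b⟫_𝕜‖ : 𝕜) ^ 2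
        = ∑ a, ∑ b, ∑ i, ∑ j,
            (⟪x j, e a⟫_𝕜 * ⟪e a, x i⟫_𝕜) * (⟪x i, e b⟫_𝕜 * ⟪e b, x j⟫_𝕜) := by
          refine sum_congr rfl fun a _ ↦ sum_congr rfl fun b _ ↦ ?_
          rw [← RCLike.mul_conj, map_sum, sum_mul_sum]
          simp only [map_mul, inner_conj_symm]
          exact sum_congr rfl fun i _ ↦ sum_congr rfl fun j _ ↦ by ring
      _ = ∑ i, ∑ j, ∑ a, ∑ b,
            (⟪x j, e a⟫_𝕜 * ⟪e a, x i⟫_𝕜) * (⟪x i, e b⟫_𝕜 * ⟪e b, x j⟫_𝕜) := by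
          simp only [sum_comm (s := univ (α := κ)) (t := univ (α := ι))]
      _ = ∑ i, ∑ j, (‖⟪x i, x j⟫_𝕜‖ : 𝕜) ^ 2 := by
          simp only [← sum_mul_sum, e.sum_inner_mul_inner, ← RCLike.conj_mul, inner_conj_symm]
  exact_mod_cast hcast

theorem sq_sum_norm_sq_le_finrank_mul_sum [Fintype ι] [FiniteDimensional 𝕜 E] (x : ι → E) :
    (∑ i, ‖x i‖ ^ 2) ^ 2 ≤ finrank 𝕜 E * ∑ i, ∑ j, ‖⟪x i, x j⟫_𝕜‖ ^ 2 := by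
  let e := stdOrthonormalBasis 𝕜 E
  let T (a b : Fin (finrank 𝕜 E)) : 𝕜 := ∑ i, ⟪e a, x i⟫_𝕜 * ⟪x i, e b⟫_𝕜
  have hdiag (a) : ‖T a a‖ = ∑ i, ‖⟪e a, x i⟫_𝕜‖ ^ 2 := by
    have : T a a = ((∑ i, ‖⟪e a, x i⟫_𝕜‖ ^ 2 : ℝ) : 𝕜) := by
      push_cast
      exact sum_congr rfl fun i _ ↦ by rw [← inner_conj_symm (x i), RCLike.mul_conj]
    rw [this, RCLike.norm_ofReal, abs_of_nonneg (by positivity)]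
  calc (∑ i, ‖x i‖ ^ 2) ^ 2 = (∑ a, ‖T a a‖) ^ 2 := by
        simp only [hdiag, ← e.sum_sq_norm_inner_right (x _)]
        rw [sum_comm]
    _ ≤ finrank 𝕜 E * ∑ a, ‖T a a‖ ^ 2 := by
      simpa using sq_sum_le_card_mul_sum_sq (s := univ) (f := fun a ↦ ‖T a a‖)
    _ ≤ finrank 𝕜 E * ∑ a, ∑ b, ‖T a b‖ ^ 2 := by
      gcongr with a
      exact single_le_sum (f := fun b ↦ ‖T a b‖ ^ 2) (fun _ _ ↦ by positivity) (mem_univ a)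
    _ = finrank 𝕜 E * ∑ i, ∑ j, ‖⟪x i, x j⟫_𝕜‖ ^ 2 := by
      rw [sum_norm_sum_inner_mul_inner_sq e x]

theorem sq_sum_norm_sq_le_finrank_mul_sum_of_mem {W : Submodule 𝕜 E} [FiniteDimensional 𝕜 W]
    {s : Finset ι} {x : ι → E} (hx : ∀ i ∈ s, x i ∈ W) :
    (∑ i ∈ s, ‖x i‖ ^ 2) ^ 2 ≤ finrank 𝕜 W * ∑ i ∈ s, ∑ j ∈ s, ‖⟪x i, x j⟫_𝕜‖ ^ 2 := by
  have := sq_sum_norm_sq_le_finrank_mul_sum (𝕜 := 𝕜) fun i : s ↦ (⟨x i, hx i i.2⟩ : W)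
  simp only [coe_norm, coe_inner] at this
  rwa [sum_coe_sort s fun i ↦ ‖x i‖ ^ 2, sum_coe_sort s fun i ↦ ∑ j : s, ‖⟪x i, x j⟫_𝕜‖ ^ 2,
    sum_congr rfl fun i _ ↦ sum_coe_sort s fun j ↦ ‖⟪x i, x j⟫_𝕜‖ ^ 2] at this

theorem sum_diag_norm_inner_sq {s : Finset ι} {u : ι → E}
    (hu : ∀ i ∈ s, ‖u i‖ = 1) : ∑ p ∈ s.diag, ‖⟪u p.1, u p.2⟫_𝕜‖ ^ 2 = #s := by
  rw [sum_diag, sum_congr rfl fun i hi ↦ by rw [inner_self_eq_norm_sq_to_K, hu i hi]]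
  simp

theorem card_add_sum_offDiag_norm_inner_sq [Fintype ι] {u : ι → E} {r : ℝ}
    (hu : ∀ i, ‖u i‖ = 1) (hframe : ∀ x, ∑ i, ‖⟪x, u i⟫_𝕜‖ ^ 2 = r * ‖x‖ ^ 2) :
    Fintype.card ι + ∑ p ∈ univ.offDiag, ‖⟪u p.1, u p.2⟫_𝕜‖ ^ 2 = Fintype.card ι * r := by
  classical
  calc (Fintype.card ι + ∑ p ∈ univ.offDiag, ‖⟪u p.1, u p.2⟫_𝕜‖ ^ 2 : ℝ)
      = ∑ j, ∑ i, ‖⟪u j, u i⟫_𝕜‖ ^ 2 := by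
        rw [← sum_product' univ univ fun i j ↦ ‖⟪u i, u j⟫_𝕜‖ ^ 2, ← diag_union_offDiag,
          sum_union (disjoint_diag_offDiag univ), sum_diag_norm_inner_sq fun i _ ↦ hu i, card_univ]
    _ = Fintype.card ι * r := by simp [hframe, hu]

theorem card_offDiag_div_four_le_sum_norm_inner_sq {W : Submodule 𝕜 E} (hW : finrank 𝕜 W = 2)
    {s : Finset ι} {u : ι → E} (hu : ∀ i ∈ s, ‖u i‖ = 1) (hs : ∀ i ∈ s, u i ∈ W)
    (hcard : 3 ≤ #s) :
    (#s.offDiag : ℝ) / 4 ≤ ∑ p ∈ s.offDiag, ‖⟪u p.1, u p.2⟫_𝕜‖ ^ 2 := by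
  classical
  have : FiniteDimensional 𝕜 W := .of_finrank_pos (by omega)
  have hwelch := sq_sum_norm_sq_le_finrank_mul_sum_of_mem hs
  rw [sum_congr rfl fun i hi ↦ by rw [hu i hi, one_pow], sum_const, nsmul_one, hW,
    ← sum_product', ← diag_union_offDiag, sum_union (disjoint_diag_offDiag s),
    sum_diag_norm_inner_sq hu] at hwelch
  rw [offDiag_card, Nat.cast_sub (Nat.le_mul_self _), Nat.cast_mul]
  have : (3 : ℝ) ≤ #s := mod_cast hcard
  push_cast at hwelch
  nlinarith

end Welch

/-! ### Kelly's theorem -/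

section SylvesterGallai

theorem finrank_span_pair_eq_two {K V : Type*} [DivisionRing K] [AddCommGroup V] [Module K V]
    {x y : V} (h : LinearIndependent K ![x, y]) : finrank K (span K {x, y}) = 2 := by
  rw [← Matrix.range_cons_cons_empty x y ![], finrank_span_eq_card h, Fintype.card_fin]

/-- A Sylvester–Gallai configuration: vectors representing pairwise distinct points of a projective
space, such that the line through any two of the points contains a third one. -/
structure IsSylvesterGallai (K : Type*) {ι V : Type*} [DivisionRing K] [AddCommGroup V] [Module K V]
    (v : ι → V) : Prop where
  linearIndependent_pair : ∀ ⦃i j⦄, i ≠ j → LinearIndependent K ![v i, v j]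
  exists_third : ∀ ⦃i j⦄, i ≠ j → ∃ k, k ≠ i ∧ k ≠ j ∧ v k ∈ span K {v i, v j}

namespace IsSylvesterGallai

section DivisionRing

variable {ι K V : Type*} [DivisionRing K] [AddCommGroup V] [Module K V] {v : ι → V}

theorem finrank_span_pair (h : IsSylvesterGallai K v) {i j : ι} (hij : i ≠ j) :
    finrank K (span K {v i, v j}) = 2 :=
  finrank_span_pair_eq_two (h.linearIndependent_pair hij)

theorem span_pair_eq_iff (h : IsSylvesterGallai K v) {W : Submodule K V} (hW : finrank K W = 2)
    {i j : ι} (hij : i ≠ j) : span K {v i, v j} = W ↔ v i ∈ W ∧ v j ∈ W := by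
  have : FiniteDimensional K W := .of_finrank_pos (by omega)
  refine ⟨?_, fun hmem ↦ eq_of_le_of_finrank_eq ?_ ?_⟩
  · rintro rfl
    exact ⟨subset_span (by simp), subset_span (by simp)⟩
  · exact span_le.2 (Set.insert_subset hmem.1 (Set.singleton_subset_iff.2 hmem.2))
  · rw [h.finrank_span_pair hij, hW]

theorem span_pair_eq_of_mem (h : IsSylvesterGallai K v) {i j k : ι} (hij : i ≠ j) (hik : i ≠ k)
    (hk : v k ∈ span K {v i, v j}) : span K {v i, v k} = span K {v i, v j} :=
  (h.span_pair_eq_iff (h.finrank_span_pair hij) hik).2 ⟨subset_span (by simp), hk⟩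

theorem restrict (h : IsSylvesterGallai K v) (U : Submodule K V) :
    IsSylvesterGallai K fun i : {i // v i ∈ U} ↦ (⟨v i, i.2⟩ : U) where
  linearIndependent_pair i j hij := by
    refine LinearIndependent.of_comp U.subtype ?_
    convert h.linearIndependent_pair (Subtype.coe_ne_coe.2 hij) using 1
    ext a
    fin_cases a <;> rfl
  exists_third i j hij := by
    obtain ⟨k, hki, hkj, hk⟩ := h.exists_third (Subtype.coe_ne_coe.2 hij)
    have hkU : v k ∈ U :=
      span_le.2 (Set.insert_subset i.2 (Set.singleton_subset_iff.2 j.2)) hk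
    obtain ⟨a, b, hab⟩ := mem_span_pair.1 hk
    exact ⟨⟨k, hkU⟩, fun hi ↦ hki (congrArg Subtype.val hi), fun hj ↦ hkj (congrArg Subtype.val hj),
      mem_span_pair.2 ⟨a, b, Subtype.ext hab⟩⟩

theorem two_mul_card_mem_lt [Fintype ι] (h : IsSylvesterGallai K v) (W : Submodule K V)
    [DecidablePred (v · ∈ W)] {p : ι} (hp : v p ∉ W) :
    2 * #{i | v i ∈ W} < Fintype.card ι := by
  classical
  have hne {i : ι} (hi : v i ∈ W) : p ≠ i := fun hpi ↦ hp (hpi ▸ hi)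
  have hline {i j : ι} (hi : v i ∈ W) (hj : v j ∈ W) : v p ∉ span K {v i, v j} := fun hmem ↦
    hp (span_le.2 (Set.insert_subset hi (Set.singleton_subset_iff.2 hj)) hmem)
  -- Sending `i` to a third point on the line through `p` and `i` injects the points of `W` into the
  -- points outside `W` other than `p`.
  choose! third hthird_ne_p hthird_ne hthird using fun i (hi : v i ∈ W) ↦ h.exists_third (hne hi)
  have hnotMem {i : ι} (hi : v i ∈ W) : v (third i) ∉ W := fun hk ↦ by
    refine hline hi hk ?_
    rw [h.span_pair_eq_of_mem (hne hi).symm (hthird_ne i hi).symm (Set.pair_comm _ _ ▸ hthird i hi)]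
    exact subset_span (by simp)
  have hinj : Set.InjOn third {i | v i ∈ W} := fun i hi j hj heq ↦ by
    by_contra hij
    have hpij : span K {v p, v i} = span K {v p, v j} := by
      rw [← h.span_pair_eq_of_mem (hne hi) (hthird_ne_p i hi).symm (hthird i hi), heq,
        h.span_pair_eq_of_mem (hne hj) (hthird_ne_p j hj).symm (hthird j hj)]
    refine hline hi hj ?_
    rw [(h.span_pair_eq_iff (h.finrank_span_pair (hne hi)) hij).2
      ⟨subset_span (by simp), hpij ▸ subset_span (by simp)⟩]
    exact subset_span (by simp)
  have hcard : #{i | v i ∈ W} < #{i | v i ∉ W} := by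
    rw [← card_image_of_injOn (f := third) (by simpa using hinj)]
    refine card_lt_card (ssubset_iff_of_subset ?_ |>.2 ⟨p, by simpa using hp, ?_⟩)
    · simpa [image_subset_iff] using fun i ↦ hnotMem
    · simpa using fun i ↦ hthird_ne_p i
  have := card_filter_add_card_filter_not (s := univ) (v · ∈ W)
  rw [card_univ] at this
  omega

theorem ne_zero [Nontrivial ι] (h : IsSylvesterGallai K v) (i : ι) : v i ≠ 0 := by
  obtain ⟨j, hj⟩ := exists_ne i
  exact (h.linearIndependent_pair hj).ne_zero 1

variable [Fintype ι]

theorem three_le_card_mem_span_pair (h : IsSylvesterGallai K v) {i j : ι} (hij : i ≠ j)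
    [DecidablePred (v · ∈ span K {v i, v j})] : 3 ≤ #{k | v k ∈ span K {v i, v j}} := by
  classical
  obtain ⟨k, hki, hkj, hk⟩ := h.exists_third hij
  rw [← card_eq_three.2 ⟨i, j, k, hij, hki.symm, hkj.symm, rfl⟩]
  refine card_le_card fun l hl ↦ ?_
  simp only [mem_insert, mem_singleton] at hl
  simp only [mem_filter_univ]
  obtain rfl | rfl | rfl := hl
  exacts [subset_span (by simp), subset_span (by simp), hk]

theorem two_mul_card_mem_lt_of_ne_top (h : IsSylvesterGallai K v)
    (hspan : span K (Set.range v) = ⊤) {W : Submodule K V} [DecidablePred (v · ∈ W)]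
    (hW : W ≠ ⊤) : 2 * #{i | v i ∈ W} < Fintype.card ι := by
  obtain ⟨p, hp⟩ : ∃ p, v p ∉ W := by
    by_contra! hall
    exact hW (top_le_iff.1 (hspan ▸ span_le.2 (Set.range_subset_iff.2 hall)))
  exact h.two_mul_card_mem_lt W hp

variable [Nontrivial ι]

theorem four_mul_card_lt (h : IsSylvesterGallai K v) (hspan : span K (Set.range v) = ⊤)
    (hrank : finrank K V = 4) {A : Finset ι} (hA : A.Nonempty) (hAuniv : A ≠ univ) :
    4 * #A < finrank K (span K (v '' A)) * Fintype.card ι := by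
  classical
  have : FiniteDimensional K V := .of_finrank_pos (by omega)
  by_cases htop : span K (v '' A) = ⊤
  · rw [htop, finrank_top, hrank]
    have := (card_lt_iff_ne_univ A).2 hAuniv
    omega
  obtain ⟨i, rfl⟩ | hA := hA.exists_eq_singleton_or_nontrivial
  · obtain ⟨j, hij⟩ := exists_ne i
    have hline : span K {v i, v j} ≠ ⊤ := fun hline ↦ by
      have := h.finrank_span_pair hij.symm
      rw [hline, finrank_top] at this
      omega
    have := h.two_mul_card_mem_lt_of_ne_top hspan hline
    have := h.three_le_card_mem_span_pair hij.symm
    rw [coe_singleton, Set.image_singleton, finrank_span_singleton (h.ne_zero i), card_singleton]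
    omega
  · obtain ⟨i, hi, j, hj, hij⟩ := hA
    have hrank_A : 2 ≤ finrank K (span K (v '' A)) := by
      rw [← h.finrank_span_pair hij]
      refine finrank_mono (span_mono (Set.insert_subset ⟨i, hi, rfl⟩ ?_))
      exact Set.singleton_subset_iff.2 ⟨j, hj, rfl⟩
    have hcard_A : #A ≤ #{i | v i ∈ span K (v '' A)} :=
      card_le_card fun i hi ↦ mem_filter_univ i |>.2 (subset_span (Set.mem_image_of_mem v hi))
    have := h.two_mul_card_mem_lt_of_ne_top hspan htop
    nlinarith

theorem bartheCondition (h : IsSylvesterGallai K v) (hspan : span K (Set.range v) = ⊤)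
    (hrank : finrank K V = 4) : BartheCondition K (fun _ ↦ (4 / Fintype.card ι : ℝ)) v where
  ne_zero := h.ne_zero
  span_range := hspan
  sum_eq := by
    rw [sum_const, card_univ, nsmul_eq_mul, hrank]
    field_simp
    norm_num
  sum_lt A hA hAuniv := by
    rw [sum_const, nsmul_eq_mul, mul_div_assoc', mul_comm, div_lt_iff₀ (by positivity)]
    exact_mod_cast h.four_mul_card_lt hspan hrank hA hAuniv

end DivisionRing

theorem offDiag_filter_span_pair_eq {ι K V : Type*} [Fintype ι] [DivisionRing K] [AddCommGroup V]
    [Module K V] {v : ι → V} (h : IsSylvesterGallai K v) {W : Submodule K V} (hW : finrank K W = 2)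
    [DecidablePred (v · ∈ W)] [DecidablePred fun p : ι × ι ↦ span K {v p.1, v p.2} = W] :
    (univ.offDiag : Finset (ι × ι)).filter (fun p ↦ span K {v p.1, v p.2} = W) =
      ({i | v i ∈ W} : Finset ι).offDiag := by
  ext ⟨i, j⟩
  simp only [mem_filter, mem_offDiag, mem_univ, true_and]
  constructor
  · rintro ⟨hij, hspan⟩
    exact ⟨((h.span_pair_eq_iff hW hij).1 hspan).1, ((h.span_pair_eq_iff hW hij).1 hspan).2, hij⟩
  · rintro ⟨hi, hj, hij⟩
    exact ⟨hij, (h.span_pair_eq_iff hW hij).2 ⟨hi, hj⟩⟩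

section RCLike

variable {ι 𝕜 V : Type*} [RCLike 𝕜] [AddCommGroup V] [Module 𝕜 V] {v : ι → V}

theorem card_offDiag_div_four_le_sum [Fintype ι] {E : Type*} [NormedAddCommGroup E]
    [InnerProductSpace 𝕜 E] (h : IsSylvesterGallai 𝕜 v) (A : V ≃ₗ[𝕜] E)
    {u : ι → E} (hu : ∀ i, ‖u i‖ = 1) (huA : ∀ i, u i ∈ span 𝕜 {A (v i)}) :
    (#(univ : Finset ι).offDiag : ℝ) / 4 ≤ ∑ p ∈ univ.offDiag, ‖⟪u p.1, u p.2⟫_𝕜‖ ^ 2 := by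
  classical
  let line (p : ι × ι) : Submodule 𝕜 V := span 𝕜 {v p.1, v p.2}
  have hmaps : ∀ p ∈ (univ : Finset ι).offDiag, line p ∈ univ.offDiag.image line :=
    fun p hp ↦ mem_image_of_mem line hp
  rw [div_eq_mul_inv, ← nsmul_eq_mul, ← sum_const, ← sum_fiberwise_of_maps_to hmaps,
    ← sum_fiberwise_of_maps_to hmaps fun p ↦ ‖⟪u p.1, u p.2⟫_𝕜‖ ^ 2]
  refine sum_le_sum fun W hW ↦ ?_
  obtain ⟨⟨i, j⟩, hp, rfl⟩ := mem_image.1 hW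
  have hij : i ≠ j := (mem_offDiag.1 hp).2.2
  have hrank := h.finrank_span_pair hij
  rw [h.offDiag_filter_span_pair_eq hrank, sum_const, nsmul_eq_mul, ← div_eq_mul_inv]
  refine card_offDiag_div_four_le_sum_norm_inner_sq
    (W := (span 𝕜 {v i, v j}).map (A : V →ₗ[𝕜] E)) ?_ (fun k _ ↦ hu k) (fun k hk ↦ ?_)
    (h.three_le_card_mem_span_pair hij)
  · rw [LinearEquiv.finrank_map_eq, hrank]
  · refine (span_singleton_le_iff_mem (A (v k)) _).2 ?_ (huA k)
    exact mem_map_of_mem (mem_filter_univ k |>.1 hk)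

theorem finrank_ne_four [Finite ι] (h : IsSylvesterGallai 𝕜 v)
    (hspan : span 𝕜 (Set.range v) = ⊤) : finrank 𝕜 V ≠ 4 := by
  classical
  cases nonempty_fintype ι
  intro hrank
  have : FiniteDimensional 𝕜 V := .of_finrank_pos (by omega)
  have : Nontrivial ι := by
    have := finrank_range_le_card (R := 𝕜) v
    rw [Set.finrank, hspan, finrank_top, hrank] at this
    exact Fintype.one_lt_card_iff_nontrivial.1 (by omega)
  obtain ⟨A, hA⟩ := (h.bartheCondition hspan hrank).exists_linearEquiv_sum_mul_norm_inner_sq_div_eq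
    (E := EuclideanSpace 𝕜 (Fin 4)) (by simp [hrank])
  let n : ℝ := Fintype.card ι
  have hn : 0 < n := Nat.cast_pos.2 Fintype.card_pos
  let u (i : ι) : EuclideanSpace 𝕜 (Fin 4) := ((‖A (v i)‖⁻¹ : ℝ) : 𝕜) • A (v i)
  have hu (i : ι) : ‖u i‖ = 1 := by
    have : A (v i) ≠ 0 := A.map_ne_zero_iff.2 (h.ne_zero i)
    simp [u, norm_smul, this]
  have hframe (x : EuclideanSpace 𝕜 (Fin 4)) :
      ∑ i, ‖⟪x, u i⟫_𝕜‖ ^ 2 = n / 4 * ‖x‖ ^ 2 := by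
    have hinner (i : ι) : ‖⟪x, u i⟫_𝕜‖ ^ 2 = ‖⟪x, A (v i)⟫_𝕜‖ ^ 2 / ‖A (v i)‖ ^ 2 := by
      simp only [u, inner_smul_right x, norm_mul, RCLike.norm_ofReal, abs_inv, abs_norm]
      ring
    rw [← hA x, ← mul_sum, ← sum_congr rfl fun i _ ↦ hinner i]
    change _ = n / 4 * (4 / n * _)
    field_simp
  have htotal := card_add_sum_offDiag_norm_inner_sq hu hframe
  have hlines := h.card_offDiag_div_four_le_sum A hu
    fun i ↦ smul_mem _ _ (mem_span_singleton_self _)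
  rw [offDiag_card, Nat.cast_sub (Nat.le_mul_self _), Nat.cast_mul, card_univ] at hlines
  change n + _ = n * (n / 4) at htotal
  change (n * n - n) / 4 ≤ _ at hlines
  linarith

theorem finrank_span_range_lt_four [Finite ι] (h : IsSylvesterGallai 𝕜 v) :
    finrank 𝕜 (span 𝕜 (Set.range v)) < 4 := by
  by_contra! hfour
  have := FiniteDimensional.span_of_finite 𝕜 (Set.finite_range v)
  obtain ⟨b, hb, -, hb_indep⟩ := exists_fun_fin_finrank_span_eq 𝕜 (Set.range v)
  let t := b ∘ Fin.castLE hfour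
  have ht : LinearIndependent 𝕜 t := hb_indep.comp _ (Fin.castLE_injective hfour)
  refine (h.restrict (span 𝕜 (Set.range t))).finrank_ne_four ?_ ?_
  · rw [eq_top_iff, ← map_le_map_iff_of_injective (injective_subtype _), map_subtype_top, map_span,
      ← Set.range_comp]
    refine span_mono (Set.range_subset_iff.2 fun a ↦ ?_)
    obtain ⟨i, hi⟩ := hb (Fin.castLE hfour a)
    exact ⟨⟨i, hi ▸ subset_span (Set.mem_range_self a)⟩, hi⟩
  · rw [finrank_span_eq_card ht, Fintype.card_fin]

end RCLike

end IsSylvesterGallai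

end SylvesterGallai

section Ordinary

/-- The line through the points represented by `v i` and `v j` is ordinary: it contains no other
point of the family. The family may list a point repeatedly and may contain zero vectors. -/
structure IsOrdinaryPair (K : Type*) {ι V : Type*} [DivisionRing K] [AddCommGroup V] [Module K V]
    (v : ι → V) (i j : ι) : Prop where
  linearIndependent : LinearIndependent K ![v i, v j]
  mem_or_mem : ∀ ⦃k⦄, v k ∈ span K {v i, v j} → v k ∈ span K {v i} ∨ v k ∈ span K {v j}

theorem IsOrdinaryPair.disjoint {ι K V : Type*} [DivisionRing K] [AddCommGroup V] [Module K V]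
    {v : ι → V} {i j : ι} (h : IsOrdinaryPair K v i j) :
    Disjoint (span K {v i}) (span K {v j}) := by
  refine disjoint_span_singleton_of_notMem fun hmem ↦ ?_
  obtain ⟨c, hc⟩ := mem_span_singleton.1 hmem
  exact (LinearIndependent.pair_iff' (h.linearIndependent.ne_zero 0)).1 h.linearIndependent c hc

theorem linearIndependent_pair_of_span_singleton_ne {K V : Type*} [DivisionRing K]
    [AddCommGroup V] [Module K V] {x y : V} (hx : x ≠ 0) (hy : y ≠ 0)
    (hxy : span K {x} ≠ span K {y}) : LinearIndependent K ![x, y] := by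
  refine (LinearIndependent.pair_iff' hx).2 fun a hay ↦ hxy ?_
  have ha : a ≠ 0 := by rintro rfl; exact hy (by rw [← hay, zero_smul])
  rw [← hay, span_singleton_smul_eq ha.isUnit]

theorem exists_isSylvesterGallai_or_isOrdinaryPair {ι K V : Type*} [DivisionRing K]
    [AddCommGroup V] [Module K V] (v : ι → V) :
    (∃ s : Set ι, IsSylvesterGallai K (s.domRestrict v) ∧
      span K (Set.range (s.domRestrict v)) = span K (Set.range v)) ∨
      ∃ i j, IsOrdinaryPair K v i j := by
  obtain ⟨s, hs, hbij⟩ := Set.exists_subset_bijOn {i | v i ≠ 0} fun i ↦ span K {v i}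
  have hrep {k : ι} (hk : v k ≠ 0) : ∃ l : s, span K {v l} = span K {v k} := by
    obtain ⟨l, hl, hlk⟩ := hbij.surjOn (Set.mem_image_of_mem _ hk)
    exact ⟨⟨l, hl⟩, hlk⟩
  have hindep {i j : s} (hij : i ≠ j) : LinearIndependent K ![v i, v j] :=
    linearIndependent_pair_of_span_singleton_ne (hs i.2) (hs j.2) fun heq ↦
      hij (Subtype.ext (hbij.injOn i.2 j.2 heq))
  refine or_iff_not_imp_right.2 fun hord ↦ ⟨s, ⟨fun i j hij ↦ hindep hij, fun i j hij ↦ ?_⟩, ?_⟩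
  · obtain ⟨k, hk, hki, hkj⟩ : ∃ k, v k ∈ span K {v i, v j} ∧ v k ∉ span K {v i} ∧
        v k ∉ span K {v j} := by
      by_contra! hall
      exact hord ⟨i, j, hindep hij, fun k hk ↦ or_iff_not_imp_left.2 (hall k hk)⟩
    have hk0 : v k ≠ 0 := fun hk0 ↦ hki (hk0.symm ▸ zero_mem _)
    obtain ⟨l, hl⟩ := hrep hk0
    refine ⟨l, ?_, ?_, ?_⟩
    · rintro rfl
      exact hki (hl ▸ mem_span_singleton_self _)
    · rintro rfl
      exact hkj (hl ▸ mem_span_singleton_self _)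
    · rw [← span_singleton_le_iff_mem] at hk ⊢
      exact hl.trans_le hk
  · refine le_antisymm (span_mono ?_) (span_le.2 ?_)
    · rw [Set.range_domRestrict]
      exact Set.image_subset_range v s
    rintro _ ⟨k, rfl⟩
    by_cases hk : v k = 0
    · exact hk.symm ▸ zero_mem _
    · obtain ⟨l, hl⟩ := hrep hk
      have hle : span K {v k} ≤ span K (Set.range (s.domRestrict v)) :=
        hl ▸ span_mono (Set.singleton_subset_iff.2 ⟨l, rfl⟩)
      exact hle (mem_span_singleton_self _)

theorem exists_isOrdinaryPair {ι 𝕜 V : Type*} [Finite ι] [RCLike 𝕜] [AddCommGroup V] [Module 𝕜 V]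
    {v : ι → V} (hrank : 4 ≤ finrank 𝕜 (span 𝕜 (Set.range v))) :
    ∃ i j, IsOrdinaryPair 𝕜 v i j := by
  refine (exists_isSylvesterGallai_or_isOrdinaryPair v).resolve_left ?_
  rintro ⟨s, hs, hspan⟩
  have := hs.finrank_span_range_lt_four
  rw [hspan] at this
  omega

end Ordinary

/-! ### Coloured configurations -/

section Coloring

/-- Every line through two vectors of different colours passes through a vector of a third colour,
which is independent of each of the two. -/
def NoBichromaticLine (K : Type*) {α ι V : Type*} [DivisionRing K] [AddCommGroup V] [Module K V]
    (v : α → V) (color : α → ι) : Prop :=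
  ∀ ⦃a b⦄, color a ≠ color b → ∃ k, color k ≠ color a ∧ color k ≠ color b ∧
    ∃ s t : K, s ≠ 0 ∧ t ≠ 0 ∧ v k = s • v a + t • v b

section DivisionRing

variable {α ι K V : Type*} [DivisionRing K] [AddCommGroup V] [Module K V]
  {v : α → V} {color : α → ι}

theorem noBichromaticLine_or_exists_forall_mem_span_pair
    (hind : ∀ a b, color a ≠ color b → LinearIndependent K ![v a, v b]) :
    NoBichromaticLine K v color ∨ ∃ a b, color a ≠ color b ∧
      ∀ k, v k ∈ span K {v a, v b} → color k = color a ∨ color k = color b := by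
  refine or_iff_not_imp_right.2 fun hline a b hab ↦ ?_
  push Not at hline
  obtain ⟨k, hk, hka, hkb⟩ := hline a b hab
  obtain ⟨s, t, hst⟩ := mem_span_pair.1 hk
  refine ⟨k, hka, hkb, s, t, ?_, ?_, hst.symm⟩
  · rintro rfl
    have hbk := hind b k hkb.symm
    exact (LinearIndependent.pair_iff' (hbk.ne_zero 0)).1 hbk t (by simpa using hst)
  · rintro rfl
    have hak := hind a k hka.symm
    exact (LinearIndependent.pair_iff' (hak.ne_zero 0)).1 hak s (by simpa using hst)

variable {V' : Type*} [AddCommGroup V'] [Module K V'] {π : V →ₗ[K] V'}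

theorem NoBichromaticLine.color_eq (h : NoBichromaticLine K v color) {x y x' y' : α}
    (hxy : IsOrdinaryPair K (π ∘ v) x y) (hx' : π (v x') ∈ span K {π (v x)}) (hx0 : π (v x') ≠ 0)
    (hy' : π (v y') ∈ span K {π (v y)}) (hy0 : π (v y') ≠ 0) : color x' = color y' := by
  by_contra hne
  obtain ⟨k, -, -, s, t, hs, ht, hk⟩ := h hne
  have hπk : π (v k) = s • π (v x') + t • π (v y') := by rw [hk, map_add, map_smul, map_smul]
  have hmem : π (v k) ∈ span K {π (v x), π (v y)} := by
    rw [hπk, span_insert]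
    exact add_mem (smul_mem _ s (mem_sup_left hx')) (smul_mem _ t (mem_sup_right hy'))
  obtain hkx | hky := hxy.mem_or_mem hmem
  · refine hy0 (disjoint_def.1 hxy.disjoint _ ?_ hy')
    exact (smul_mem_iff _ ht).1 ((Submodule.add_mem_iff_right _ (smul_mem _ s hx')).1 (hπk ▸ hkx))
  · refine hx0 (disjoint_def.1 hxy.disjoint _ hx' ?_)
    exact (smul_mem_iff _ hs).1 ((Submodule.add_mem_iff_left _ (smul_mem _ t hy')).1 (hπk ▸ hky))

theorem NoBichromaticLine.color_eq_of_map_eq_zero (h : NoBichromaticLine K v color) {x y u : α}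
    (hxy : IsOrdinaryPair K (π ∘ v) x y) (hu : π (v u) = 0) : color u = color x := by
  by_contra hne
  obtain ⟨k, -, hkx, s, t, -, ht, hk⟩ := h hne
  have hπk : π (v k) = t • π (v x) := by
    rw [hk, map_add, map_smul, map_smul, hu, smul_zero, zero_add]
  have hx0 : π (v x) ≠ 0 := hxy.linearIndependent.ne_zero 0
  have hy0 : π (v y) ≠ 0 := hxy.linearIndependent.ne_zero 1
  have hk_mem : π (v k) ∈ span K {π (v x)} := hπk ▸ smul_mem _ t (mem_span_singleton_self _)
  refine hkx ?_
  rw [h.color_eq hxy hk_mem (hπk ▸ smul_ne_zero ht hx0) (mem_span_singleton_self _) hy0,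
    h.color_eq hxy (mem_span_singleton_self _) hx0 (mem_span_singleton_self _) hy0]

end DivisionRing

theorem finrank_le_finrank_map_mkQ_add {K V : Type*} [DivisionRing K] [AddCommGroup V]
    [Module K V] (W N : Submodule K V) [FiniteDimensional K W] :
    finrank K N ≤ finrank K (N.map W.mkQ) + finrank K W := by
  by_cases hN : FiniteDimensional K N
  · have hker : finrank K (LinearMap.ker (W.mkQ.domRestrict N)) ≤ finrank K W := by
      rw [← finrank_map_subtype_eq]
      refine finrank_mono ?_
      rintro _ ⟨x, hx, rfl⟩
      exact (Submodule.Quotient.mk_eq_zero W).1 hx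
    have := LinearMap.finrank_range_add_finrank_ker (W.mkQ.domRestrict N)
    rw [LinearMap.range_domRestrict] at this
    omega
  · rw [finrank_of_not_finite hN]
    exact Nat.zero_le _

theorem exists_forall_mem_span_pair_color {α ι 𝕜 V : Type*} [Finite α] [RCLike 𝕜] [AddCommGroup V]
    [Module 𝕜 V] {v : α → V} {color : α → ι}
    (hind : ∀ a b, color a ≠ color b → LinearIndependent 𝕜 ![v a, v b])
    (hcolor : ∃ p q, color p ≠ color q) (hrank : 6 ≤ finrank 𝕜 (span 𝕜 (Set.range v))) :
    ∃ a b, color a ≠ color b ∧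
      ∀ k, v k ∈ span 𝕜 {v a, v b} → color k = color a ∨ color k = color b := by
  refine (noBichromaticLine_or_exists_forall_mem_span_pair hind).resolve_left fun h ↦ ?_
  obtain ⟨p, q, hpq⟩ := hcolor
  let W : Submodule 𝕜 V := span 𝕜 {v p, v q}
  have hW : finrank 𝕜 W = 2 := finrank_span_pair_eq_two (hind p q hpq)
  have : FiniteDimensional 𝕜 W := .of_finrank_pos (by omega)
  have hrank_quot := finrank_le_finrank_map_mkQ_add W (span 𝕜 (Set.range v))
  rw [hW, map_span, ← Set.range_comp] at hrank_quot
  obtain ⟨x, y, hxy⟩ := exists_isOrdinaryPair (𝕜 := 𝕜) (v := W.mkQ ∘ v) (by omega)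
  have hp : W.mkQ (v p) = 0 := (Submodule.Quotient.mk_eq_zero W).2 (subset_span (by simp))
  have hq : W.mkQ (v q) = 0 := (Submodule.Quotient.mk_eq_zero W).2 (subset_span (by simp))
  exact hpq ((h.color_eq_of_map_eq_zero hxy hp).trans (h.color_eq_of_map_eq_zero hxy hq).symm)

end Coloring

section Projectivization

variable {K V : Type*} [DivisionRing K] [AddCommGroup V] [Module K V]

theorem linearIndependent_rep_pair {p q : ℙ K V} (hpq : p ≠ q) :
    LinearIndependent K ![p.rep, q.rep] := by
  have := Projectivization.independent_iff.1 ((Projectivization.independent_pair_iff_ne p q).2 hpq)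
  convert this using 1
  ext a
  fin_cases a <;> rfl

theorem span_range_rep_eq_iSup (T : Set (ℙ K V)) :
    span K (Set.range fun p : T ↦ p.1.rep) = ⨆ p ∈ T, p.submodule := by
  simp only [span_range_eq_iSup, iSup_subtype, Projectivization.submodule_eq]

end Projectivization

theorem projective_sets_span_six_exists_line_meeting_exactly_two_general {𝕜 V ι : Type*}
    [RCLike 𝕜] [AddCommGroup V] [Module 𝕜 V] {S : ι → Set (ℙ 𝕜 V)}
    (hdisj : Pairwise (Function.onFun Disjoint S))
    (hfin : (⋃ i, S i).Finite) (hne : ∃ i j, i ≠ j ∧ (S i).Nonempty ∧ (S j).Nonempty)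
    (hdim : 6 ≤ finrank 𝕜 ↥(⨆ p ∈ ⋃ i, S i, p.submodule)) :
    ∃ W : Submodule 𝕜 V, finrank 𝕜 W = 2 ∧ {i | ∃ p ∈ S i, p.submodule ≤ W}.encard = 2 := by
  have := hfin.to_subtype
  choose color hcolor using fun p : ⋃ i, S i ↦ Set.mem_iUnion.1 p.2
  have hcolor_eq {p : ⋃ i, S i} {i : ι} (hp : p.1 ∈ S i) : color p = i := by
    by_contra hne
    exact Set.disjoint_left.1 (hdisj hne) (hcolor p) hp
  have hind (p q : ⋃ i, S i) (hpq : color p ≠ color q) :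
      LinearIndependent 𝕜 ![p.1.rep, q.1.rep] :=
    linearIndependent_rep_pair fun h ↦ hpq (congrArg color (Subtype.ext h))
  obtain ⟨i, j, hij, ⟨p, hp⟩, ⟨q, hq⟩⟩ := hne
  obtain ⟨a, b, hab, hline⟩ := exists_forall_mem_span_pair_color hind
    ⟨⟨p, Set.mem_iUnion_of_mem i hp⟩, ⟨q, Set.mem_iUnion_of_mem j hq⟩, by
      rwa [hcolor_eq hp, hcolor_eq hq]⟩ (span_range_rep_eq_iSup (⋃ i, S i) ▸ hdim)
  refine ⟨span 𝕜 {a.1.rep, b.1.rep}, finrank_span_pair_eq_two (hind a b hab), ?_⟩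
  rw [← Set.encard_pair hab]
  congr 1
  ext k
  simp only [Set.mem_ofPred_eq, Set.mem_insert_iff, Set.mem_singleton_iff,
    Projectivization.submodule_eq, span_singleton_le_iff_mem]
  constructor
  · rintro ⟨r, hr, hrab⟩
    have := hline ⟨r, Set.mem_iUnion_of_mem k hr⟩ hrab
    rwa [hcolor_eq hr] at this
  · rintro (rfl | rfl)
    exacts [⟨a, hcolor a, subset_span (by simp)⟩, ⟨b, hcolor b, subset_span (by simp)⟩]

/-- If `S₁, …, Sₘ` (m ≥ 2) are pairwise disjoint non-empty finite subsets of the complex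
projective space `ℙ(ℂ^{n+1})` whose union is not contained in any projective subspace of
dimension `4` (the homogeneous representatives span a linear subspace of dimension at
least `6`), then there is a projective line meeting exactly two of the sets. -/
theorem projective_sets_span_six_exists_line_meeting_exactly_two
    (n m : ℕ) (hm : 2 ≤ m)
    (S : Fin m → Set (Projectivization ℂ (Fin (n + 1) → ℂ)))
    (hdisj : ∀ i j, i ≠ j → Disjoint (S i) (S j))
    (hne : ∀ i, (S i).Nonempty) (hfin : ∀ i, (S i).Finite)
    (hdim : 6 ≤ Module.finrank ℂ
      ↥(⨆ p ∈ ⋃ i, S i, Projectivization.submodule p)) :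
    ∃ W : Submodule ℂ (Fin (n + 1) → ℂ), Module.finrank ℂ W = 2 ∧
      {i : Fin m | ∃ p ∈ S i, Projectivization.submodule p ≤ W}.encard = 2 :=
  projective_sets_span_six_exists_line_meeting_exactly_two_general (fun i j ↦ hdisj i j)
    (Set.finite_iUnion hfin) ⟨⟨0, by omega⟩, ⟨1, by omega⟩, by simp, hne _, hne _⟩ hdim
end

section
/- For every pair of natural numbers k and r there exists a natural number f = f(k, r) with the following property: for all n and d ≥ 1, if P_1, …, P_d, Q_1, …, Q_k ∈ ℂ[x_0, …, x_n] are homogeneous polynomials, each of degree at most r, and the product P_1 · P_2 ⋯ P_d lies in the ideal ⟨Q_1, …, Q_k⟩, then there exists a non-empty subset {i_1, …, i_m} ⊆ {1, …, d} with m ≤ f(k, r) such that the product P_{i_1} ⋯ P_{i_m} lies in ⟨Q_1, …, Q_k⟩. The bound f(k, r) depends only on k and r, not on n or d. -/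
/-!
Let `R` be the polynomial ring and `I = ⟨Q₁, …, Q_k⟩`. Suppose that `R ⧸ I` has a filtration of
length `l` with cyclic quotients on each of which every form of degree at most `r` acts either as
zero or injectively. On each quotient one of the factors `Pᵢ` acts as zero, or all of them can be
cancelled, so that `l` factors suffice, or one factor if `I` is the unit ideal. It remains to bound
`l` in terms of `k` and `r`.

Were there no bound, counterexamples could be assembled into an ultraproduct, the ring of germs of
sequences of polynomials. As in the work of Erman, Sam and Snowden on Stillman's conjecture, the
homogeneous germs generate a polynomial ring: germs of positive degree that are independent modulo
decomposable ones are algebraically independent, because derivations of degree `-1` lower the degree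
of a relation. Moreover, the whole germ ring is flat over that polynomial ring. Indeed, after a
generic translation by `N` new variables, `N` of the generators have leading forms with nonvanishing
discriminant, so that the polynomials in the new variables are free, with a basis of monomials, over
the polynomials in these generators. What remains is the flatness of germs of polynomials over
polynomials with germs as coefficients, which follows from division with remainder by a polynomial
made monic by a shear.

The germs of the `Qⱼ` thus come from a Noetherian polynomial ring, where a filtration with prime
annihilators exists. Flat base change turns it into a filtration of the germ ring on which the
homogeneous germs of degree at most `r` act as zero or injectively, and a finite filtration descends
from germs to almost all terms of the original sequence.
-/

open Filter MvPolynomial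
open scoped Polynomial TensorProduct

section CyclicFiltrations

variable {R A : Type*} [CommRing R] [CommRing A]

/-- `CyclicFiltration step l I` says that `I` can be enlarged to the unit ideal by adjoining `l`
elements one after the other, each adjunction satisfying `step`. This encodes a filtration of
`R ⧸ I` of length `l` with cyclic quotients. -/
inductive CyclicFiltration (step : Ideal R → R → Prop) : ℕ → Ideal R → Prop
  | top : CyclicFiltration step 0 ⊤
  | cons {l : ℕ} {I : Ideal R} {c : R} : step I c →
      CyclicFiltration step l (I ⊔ Ideal.span {c}) → CyclicFiltration step (l + 1) I

/-- Every element of `S` acts on the cyclic module `(I + (c)) / I` either as zero or injectively. -/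
def IsTameStep (S : Set R) (I : Ideal R) (c : R) : Prop :=
  ∀ p ∈ S, p * c ∈ I ∨ ∀ x, p * (c * x) ∈ I → c * x ∈ I

/-- The annihilator of the cyclic module `(I + (c)) / I` is a prime ideal. -/
def IsPrimeStep (I : Ideal R) (c : R) : Prop :=
  ∃ 𝔭 : Ideal R, 𝔭.IsPrime ∧ ∀ a, a * c ∈ I ↔ a ∈ 𝔭

namespace CyclicFiltration

theorem map {step : Ideal R → R → Prop} {step' : Ideal A → A → Prop} (φ : R →+* A)
    (h : ∀ I c, step I c → step' (I.map φ) (φ c)) {l : ℕ} {I : Ideal R}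
    (hI : CyclicFiltration step l I) : CyclicFiltration step' l (I.map φ) := by
  induction hI with
  | top => simpa only [Ideal.map_top] using CyclicFiltration.top
  | cons hc _ ih =>
    refine .cons (h _ _ hc) ?_
    rwa [Ideal.map_sup, Ideal.map_span, Set.image_singleton] at ih

theorem exists_isPrimeStep [IsNoetherianRing R] (I : Ideal R) :
    ∃ l, CyclicFiltration IsPrimeStep l I := by
  induction I using WellFoundedGT.induction with
  | ind I ih =>
    rcases eq_or_ne I ⊤ with rfl | hI
    · exact ⟨0, .top⟩
    have := Ideal.Quotient.nontrivial_iff.2 hI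
    obtain ⟨𝔭, h𝔭⟩ := associatedPrimes.nonempty R (R ⧸ I)
    obtain ⟨hprime, y, rfl⟩ := isAssociatedPrime_iff.1 (AssociatedPrimes.mem_iff.1 h𝔭)
    obtain ⟨c, rfl⟩ := Ideal.Quotient.mk_surjective y
    have hc : ∀ a, a * c ∈ I ↔ a ∈ (⊥ : Submodule R (R ⧸ I)).colon {Ideal.Quotient.mk I c} := by
      intro a
      rw [Submodule.mem_colon_singleton, Submodule.mem_bot, ← Ideal.Quotient.eq_zero_iff_mem,
        map_mul, Algebra.smul_def, Ideal.Quotient.algebraMap_eq]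
    have hcI : c ∉ I := fun h => hprime.ne_top <| by
      rwa [Ideal.eq_top_iff_one, ← hc, one_mul]
    have hlt : I < I ⊔ Ideal.span {c} :=
      left_lt_sup.2 fun h => hcI (h (Ideal.mem_span_singleton_self c))
    obtain ⟨l, hl⟩ := ih _ hlt
    exact ⟨l + 1, .cons ⟨_, hprime, hc⟩ hl⟩

end CyclicFiltration

theorem mul_mem_of_prod_mul_mem {ι : Type*} {I : Ideal R} {P : ι → R} {y : R} (s : Finset ι)
    (h : ∀ i ∈ s, ∀ x, P i * (y * x) ∈ I → y * x ∈ I) (hy : (∏ i ∈ s, P i) * y ∈ I) : y ∈ I := by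
  classical
  induction s using Finset.induction_on with
  | empty => simpa using hy
  | insert i s hi ih =>
    refine ih (fun j hj => h j (Finset.mem_insert_of_mem hj)) ?_
    rw [mul_comm]
    refine h i (Finset.mem_insert_self i s) _ ?_
    rwa [Finset.prod_insert hi, mul_assoc, mul_comm _ y] at hy

theorem CyclicFiltration.exists_subset_prod_mul_mem {S : Set R} {l : ℕ} {I : Ideal R}
    (hI : CyclicFiltration (IsTameStep S) l I) {ι : Type*} {s : Finset ι} {P : ι → R}
    (hP : ∀ i ∈ s, P i ∈ S) {x : R} (hx : (∏ i ∈ s, P i) * x ∈ I) :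
    ∃ t ⊆ s, t.card ≤ l ∧ (∏ i ∈ t, P i) * x ∈ I := by
  classical
  induction hI with
  | top => exact ⟨∅, s.empty_subset, le_rfl, Submodule.mem_top⟩
  | @cons l I c hc _ ih =>
    obtain ⟨t, hts, htl, ht⟩ := ih (Ideal.mem_sup_left hx)
    obtain ⟨a, ha, b, hb, hab⟩ := Submodule.mem_sup.1 ht
    obtain ⟨u, rfl⟩ := Ideal.mem_span_singleton'.1 hb
    by_cases hzero : ∃ j ∈ s \ t, P j * c ∈ I
    · obtain ⟨j, hj, hjc⟩ := hzero
      obtain ⟨hjs, hjt⟩ := Finset.mem_sdiff.1 hj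
      refine ⟨insert j t, Finset.insert_subset hjs hts,
        (Finset.card_insert_le _ _).trans (Nat.succ_le_succ htl), ?_⟩
      rw [Finset.prod_insert hjt, mul_assoc, ← hab, mul_add, mul_left_comm]
      exact I.add_mem (I.mul_mem_left _ ha) (I.mul_mem_left _ hjc)
    · push Not at hzero
      have hinj : ∀ i ∈ s \ t, ∀ x, P i * (c * x) ∈ I → c * x ∈ I := fun i hi =>
        (hc _ (hP i (Finset.mem_sdiff.1 hi).1)).resolve_left (hzero i hi)
      refine ⟨t, hts, htl.trans l.le_succ, ?_⟩
      rw [← hab]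
      refine I.add_mem ha (mul_mem_of_prod_mul_mem (P := P) (s \ t) ?_ ?_)
      · intro i hi x h
        rw [mul_comm u c, mul_assoc] at h ⊢
        exact hinj i hi _ h
      · have : (∏ i ∈ s \ t, P i) * (u * c) =
            (∏ i ∈ s, P i) * x - (∏ i ∈ s \ t, P i) * a := by
          rw [← Finset.prod_sdiff hts, mul_assoc, ← hab]; ring
        rw [this]
        exact I.sub_mem hx (I.mul_mem_left _ ha)

theorem CyclicFiltration.exists_nonempty_subset_prod_mem {S : Set R} {l : ℕ} {I : Ideal R}
    (hI : CyclicFiltration (IsTameStep S) l I) {ι : Type*} {s : Finset ι} (hs : s.Nonempty)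
    {P : ι → R} (hP : ∀ i ∈ s, P i ∈ S) (hPI : ∏ i ∈ s, P i ∈ I) :
    ∃ t ⊆ s, t.Nonempty ∧ t.card ≤ l + 1 ∧ ∏ i ∈ t, P i ∈ I := by
  obtain ⟨t, hts, htl, ht⟩ := hI.exists_subset_prod_mul_mem hP (x := 1) (by rwa [mul_one])
  rw [mul_one] at ht
  rcases t.eq_empty_or_nonempty with rfl | hne
  · obtain ⟨i, hi⟩ := hs
    have htop : I = ⊤ := (Ideal.eq_top_iff_one I).2 ht
    exact ⟨{i}, Finset.singleton_subset_iff.2 hi, Finset.singleton_nonempty i,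
      Nat.succ_le_succ l.zero_le, htop ▸ Submodule.mem_top⟩
  · exact ⟨t, hts, hne, htl.trans l.le_succ, ht⟩

theorem IsPrimeStep.map_C {σ : Type*} {I : Ideal R} {c : R} (h : IsPrimeStep I c) :
    IsPrimeStep (I.map (C : R →+* MvPolynomial σ R)) (C c) := by
  obtain ⟨𝔭, h𝔭, hc⟩ := h
  refine ⟨𝔭.map C, ?_, fun f => ?_⟩
  · have : 𝔭.map (C : R →+* MvPolynomial σ R) =
        RingHom.ker (MvPolynomial.map (σ := σ) (Ideal.Quotient.mk 𝔭)) := by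
      rw [MvPolynomial.ker_map, Ideal.mk_ker]
    rw [this]
    exact RingHom.ker_isPrime _
  · simp only [mem_map_C_iff, mul_comm f, coeff_C_mul, mul_comm c, hc]

theorem mul_mem_map_of_flat {φ : R →+* A} (hφ : φ.Flat) {I : Ideal R} {b c : R}
    (h : ∀ a, a * b ∈ I → a * c ∈ I) {x : A} (hx : φ b * x ∈ I.map φ) : φ c * x ∈ I.map φ := by
  let _ : Algebra R A := φ.toAlgebra
  have : Module.Flat R A := hφ
  obtain ⟨n, f, g, hfg⟩ := Submodule.mem_span_set'.1 hx
  choose a haI hga using fun i => (g i).2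
  simp only [smul_eq_mul] at hfg
  have hrel : ∑ i : Option (Fin n), i.elim b a • i.elim x (fun i => -f i) = 0 := by
    simp only [Fintype.sum_option, Option.elim, Algebra.smul_def, RingHom.algebraMap_toAlgebra,
      ← hfg, hga, mul_neg, Finset.sum_neg_distrib, mul_comm (f _), add_neg_cancel]
  obtain ⟨m, d, y, hy, hd⟩ := Module.Flat.isTrivialRelation_of_sum_smul_eq_zero
    (f := fun i : Option (Fin n) => i.elim b a) (x := fun i => i.elim x fun i => -f i) hrel
  have hdI : ∀ j, c * d none j ∈ I := fun j => by
    have hj := hd j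
    simp only [Fintype.sum_option, Option.elim] at hj
    rw [mul_comm]
    refine h _ ?_
    rw [mul_comm, eq_neg_of_add_eq_zero_left hj]
    exact neg_mem (sum_mem fun i _ => I.mul_mem_right _ (haI i))
  have hx : x = ∑ j, φ (d none j) * y j := by
    simpa only [Algebra.smul_def, RingHom.algebraMap_toAlgebra, Option.elim] using hy none
  simp only [hx, Finset.mul_sum, ← mul_assoc, ← map_mul]
  exact sum_mem fun j _ => Ideal.mul_mem_right _ _ (Ideal.mem_map_of_mem φ (hdI j))

theorem IsPrimeStep.isTameStep_map {φ : R →+* A} (hφ : φ.Flat) {I : Ideal R} {c : R}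
    (h : IsPrimeStep I c) : IsTameStep (Set.range φ) (I.map φ) (φ c) := by
  obtain ⟨𝔭, h𝔭, hc⟩ := h
  rintro _ ⟨p, rfl⟩
  by_cases hp : p * c ∈ I
  · exact .inl (map_mul φ p c ▸ Ideal.mem_map_of_mem φ hp)
  refine .inr fun x hx => mul_mem_map_of_flat hφ (b := p * c) (fun a ha => ?_) ?_
  · rw [hc] at hp ⊢
    rw [← mul_assoc, hc] at ha
    exact (h𝔭.mem_or_mem ha).resolve_right hp
  · rwa [map_mul, mul_assoc]

end CyclicFiltrations

section Germs

variable {α : Type*} {U : Filter α} {R A B M N : Type*}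

instance germAlgebra [CommSemiring R] [Semiring A] [Algebra R A] :
    Algebra (Germ U R) (Germ U A) :=
  Algebra.ofModule
    (fun c x y => Germ.inductionOn₃ c x y fun c x y =>
      Germ.coe_eq.2 <| .of_forall fun n => smul_mul_assoc (c n) (x n) (y n))
    (fun c x y => Germ.inductionOn₃ c x y fun c x y =>
      Germ.coe_eq.2 <| .of_forall fun n => mul_smul_comm (c n) (x n) (y n))

theorem algebraMap_germ_coe [CommSemiring R] [Semiring A] [Algebra R A] (c : α → R) :
    algebraMap (Germ U R) (Germ U A) c = ((fun n => algebraMap R A (c n)) : α → A) := by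
  rw [Algebra.algebraMap_eq_smul_one]
  exact Germ.coe_eq.2 <| .of_forall fun n => (Algebra.algebraMap_eq_smul_one (c n)).symm

instance germCharZero [NeBot U] [Ring R] [CharZero R] : CharZero (Germ U R) :=
  charZero_of_inj_zero fun n hn => by
    have : ∀ᶠ _ in U, (n : R) = 0 := Germ.coe_eq.1 hn
    exact_mod_cast this.exists.choose_spec

theorem exists_germ_coe_eq {κ : Type*} (c : κ → Germ U A) :
    ∃ a : κ → α → A, (fun i => (a i : Germ U A)) = c := by
  choose a ha using fun i => Quotient.exists_rep (c i)
  exact ⟨a, funext ha⟩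

theorem germ_coe_eq_zero [Zero A] {a : α → A} : (a : Germ U A) = 0 ↔ ∀ᶠ n in U, a n = 0 :=
  Germ.coe_eq

theorem germ_coe_sum [CommRing A] {ι : Type*} (s : Finset ι) (a : ι → α → A) :
    ((fun n => ∑ i ∈ s, a i n : α → A) : Germ U A) = ∑ i ∈ s, (a i : Germ U A) := by
  rw [← Finset.sum_fn]
  exact map_sum (Germ.coeRingHom U) a s

theorem prod_germ_coe_pow [CommRing A] {ι : Type*} (γ : ι →₀ ℕ) (a : ι → α → A) :
    (γ.prod fun i m => (a i : Germ U A) ^ m) =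
      ((fun n => γ.prod fun i m => a i n ^ m : α → A) : Germ U A) := by
  refine (map_finsuppProd (Germ.coeRingHom U) γ fun i m => a i ^ m).symm.trans
    (congrArg _ (funext fun n => ?_))
  exact Finset.prod_apply n γ.support fun i => a i ^ γ i

/-- The linear map induced on germs by a family of linear maps. -/
def germLinearMap [CommRing R] [AddCommGroup M] [Module R M] [AddCommGroup N] [Module R N]
    (f : α → M →ₗ[R] N) : Germ U M →ₗ[Germ U R] Germ U N where
  toFun := Germ.map₂ (fun (g : M →ₗ[R] N) x => g x) (f : Germ U (M →ₗ[R] N))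
  map_add' x y := Germ.inductionOn₂ x y fun x y =>
    Germ.coe_eq.2 <| .of_forall fun n => map_add (f n) (x n) (y n)
  map_smul' c x := Germ.inductionOn₂ c x fun c x =>
    Germ.coe_eq.2 <| .of_forall fun n => map_smul (f n) (c n) (x n)

/-- The ring homomorphism induced on germs by a family of ring homomorphisms. -/
def germRingHom [CommRing A] [CommRing B] (f : α → A →+* B) : Germ U A →+* Germ U B where
  toFun := Germ.map₂ (fun (g : A →+* B) x => g x) (f : Germ U (A →+* B))
  map_one' := Germ.coe_eq.2 <| .of_forall fun n => map_one (f n)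
  map_mul' x y := Germ.inductionOn₂ x y fun x y =>
    Germ.coe_eq.2 <| .of_forall fun n => map_mul (f n) (x n) (y n)
  map_zero' := Germ.coe_eq.2 <| .of_forall fun n => map_zero (f n)
  map_add' x y := Germ.inductionOn₂ x y fun x y =>
    Germ.coe_eq.2 <| .of_forall fun n => map_add (f n) (x n) (y n)

/-- The ring isomorphism induced on germs by a family of ring isomorphisms. -/
def germRingEquiv [CommRing A] [CommRing B] (e : α → A ≃+* B) : Germ U A ≃+* Germ U B :=
  .ofRingHom (germRingHom fun n => (e n).toRingHom) (germRingHom fun n => (e n).symm.toRingHom)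
    (RingHom.ext fun x => Germ.inductionOn x fun x =>
      Germ.coe_eq.2 <| .of_forall fun n => (e n).apply_symm_apply (x n))
    (RingHom.ext fun x => Germ.inductionOn x fun x =>
      Germ.coe_eq.2 <| .of_forall fun n => (e n).symm_apply_apply (x n))

/-- The algebra homomorphism induced on germs by a family of algebra homomorphisms. -/
def germAlgHom [CommRing R] [CommRing A] [Algebra R A] [CommRing B] [Algebra R B]
    (f : α → A →ₐ[R] B) : Germ U A →ₐ[Germ U R] Germ U B :=
  { germRingHom fun n => (f n : A →+* B) with
    commutes' := fun c => Germ.inductionOn c fun c =>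
      (congrArg _ (algebraMap_germ_coe c)).trans <| .trans
        (Germ.coe_eq.2 <| .of_forall fun n => (f n).commutes (c n)) (algebraMap_germ_coe c).symm }

/-- The derivation induced on germs by a family of derivations. -/
def germDerivation [CommRing R] [CommRing A] [Algebra R A] (D : α → Derivation R A A) :
    Derivation (Germ U R) (Germ U A) (Germ U A) :=
  .mk' (germLinearMap fun n => (D n).toLinearMap) fun x y => Germ.inductionOn₂ x y fun x y =>
    Germ.coe_eq.2 <| .of_forall fun n => (D n).leibniz (x n) (y n)

/-- The ideal of germs of sequences whose terms eventually lie in given ideals. -/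
def germIdeal [CommRing A] (U : Filter α) (I : α → Ideal A) : Ideal (Germ U A) where
  carrier := {x | ∃ a : α → A, (∀ᶠ n in U, a n ∈ I n) ∧ (a : Germ U A) = x}
  zero_mem' := ⟨0, .of_forall fun n => (I n).zero_mem, rfl⟩
  add_mem' := by
    rintro _ _ ⟨a, ha, rfl⟩ ⟨b, hb, rfl⟩
    exact ⟨a + b, by filter_upwards [ha, hb] with n using (I n).add_mem, rfl⟩
  smul_mem' := by
    rintro c _ ⟨a, ha, rfl⟩
    induction c using Germ.inductionOn with
    | _ c => exact ⟨c * a, ha.mono fun n => (I n).mul_mem_left (c n), rfl⟩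

variable [CommRing A]

theorem coe_mem_germIdeal {I : α → Ideal A} {a : α → A} :
    (a : Germ U A) ∈ germIdeal U I ↔ ∀ᶠ n in U, a n ∈ I n := by
  refine ⟨fun ⟨b, hb, hab⟩ => ?_, fun h => ⟨a, h, rfl⟩⟩
  filter_upwards [hb, Germ.coe_eq.1 hab] with n hn hab using hab ▸ hn

theorem germIdeal_span_range {k : ℕ} (Q : α → Fin k → A) :
    germIdeal U (fun n => Ideal.span (Set.range (Q n))) =
      Ideal.span (Set.range fun j => ((fun n => Q n j : α → A) : Germ U A)) := by
  ext x
  induction x using Germ.inductionOn with | _ x => ?_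
  simp only [coe_mem_germIdeal, Ideal.mem_span_range_iff_exists_fun]
  constructor
  · intro h
    obtain ⟨c, hc⟩ := skolem.1 h
    refine ⟨fun j => ((fun n => c n j : α → A) : Germ U A), ?_⟩
    rw [← Germ.coe_eq.2 hc, germ_coe_sum]
    rfl
  · rintro ⟨c, hc⟩
    obtain ⟨d, rfl⟩ := exists_germ_coe_eq c
    have : ((fun n => ∑ j, d j n * Q n j : α → A) : Germ U A) = x := by
      rw [germ_coe_sum, ← hc]
      rfl
    exact (Germ.coe_eq.1 this).mono fun n hn => ⟨fun j => d j n, hn⟩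

theorem germIdeal_sup_span_singleton (I : α → Ideal A) (c : α → A) :
    germIdeal U (fun n => I n ⊔ Ideal.span {c n}) =
      germIdeal U I ⊔ Ideal.span {(c : Germ U A)} := by
  ext x
  induction x using Germ.inductionOn with | _ x => ?_
  simp only [coe_mem_germIdeal, sup_comm _ (Ideal.span _), Ideal.mem_span_singleton_sup]
  constructor
  · intro h
    obtain ⟨a, ha⟩ := skolem.1 h
    obtain ⟨b, hb⟩ := skolem.1 ha
    exact ⟨a, b, ⟨b, hb.mono fun n h => h.1, rfl⟩, Germ.coe_eq.2 <| hb.mono fun n h => h.2⟩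
  · rintro ⟨a, _, ⟨b, hb, rfl⟩, hx⟩
    induction a using Germ.inductionOn with | _ a => ?_
    filter_upwards [hb, Germ.coe_eq.1 hx] with n hn hxn using ⟨a n, b n, hn, hxn⟩

theorem IsTameStep.of_germIdeal {U : Ultrafilter α} {S : Set A} {I : α → Ideal A} {c : α → A}
    (h : IsTameStep {x : Germ (U : Filter α) A | x.LiftPred (· ∈ S)} (germIdeal U I) c) :
    ∀ᶠ n in U, IsTameStep S (I n) (c n) := by
  by_contra hcon
  rw [← Ultrafilter.eventually_not] at hcon
  simp only [IsTameStep] at hcon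
  push Not at hcon
  obtain ⟨p, hp⟩ := skolem.1 hcon
  obtain ⟨x, hx⟩ := skolem.1 (hp.mono fun n hn => hn.2.2)
  rcases h p (hp.mono fun n hn => hn.1) with hpc | hpc
  · obtain ⟨n, hn, hn'⟩ := (hp.and (coe_mem_germIdeal.1 hpc)).exists
    exact hn.2.1 hn'
  · have hcx := hpc x (coe_mem_germIdeal.2 (hx.mono fun n hn => hn.1))
    obtain ⟨n, hn, hn'⟩ := (hx.and (coe_mem_germIdeal.1 hcx)).exists
    exact hn.2 hn'

theorem CyclicFiltration.of_germIdeal {U : Ultrafilter α} {S : Set A} {l : ℕ} {I : α → Ideal A}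
    (h : CyclicFiltration (IsTameStep {x : Germ (U : Filter α) A | x.LiftPred (· ∈ S)}) l
      (germIdeal U I)) :
    ∀ᶠ n in U, CyclicFiltration (IsTameStep S) l (I n) := by
  generalize hJ : germIdeal (U : Filter α) I = J at h
  induction h generalizing I with
  | top =>
    have hone : ((1 : α → A) : Germ (U : Filter α) A) ∈ germIdeal U I := hJ ▸ Submodule.mem_top
    filter_upwards [coe_mem_germIdeal.1 hone] with n hn
    rw [(Ideal.eq_top_iff_one _).2 hn]
    exact .top
  | @cons l _ c hc _ ih =>
    subst hJ
    induction c using Germ.inductionOn with | _ c => ?_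
    filter_upwards [ih (germIdeal_sup_span_singleton I c), hc.of_germIdeal] with n hn hcn
    exact .cons hcn hn

theorem aeval_germ_map_const {E : Type*} [CommRing R] [Algebra R A] (z : E → α → A)
    (F : MvPolynomial E R) :
    aeval (fun p => (z p : Germ U A)) (map ((Germ.coeRingHom U).comp (Pi.constRingHom α R)) F) =
      ((fun n => aeval (fun p => z p n) F : α → A) : Germ U A) := by
  induction F using MvPolynomial.induction_on with
  | C c =>
    rw [map_C, aeval_C]
    simp only [aeval_C]
    exact algebraMap_germ_coe _
  | add p q hp hq =>
    simp only [map_add, hp, hq]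
    rfl
  | mul_X p i hp =>
    simp only [map_mul, map_X, aeval_X, hp]
    rfl

end Germs

section WeightedHomogeneous

variable {K S E : Type*} [CommRing K] [CommRing S] [Algebra K S] {w : E → ℕ}

theorem aeval_mem_of_isWeightedHomogeneous {M : ℕ → Submodule K S} [SetLike.GradedMonoid M]
    {y : E → S} (hy : ∀ i, y i ∈ M (w i)) {F : MvPolynomial E K} {n : ℕ}
    (hF : IsWeightedHomogeneous w F n) : aeval y F ∈ M n := by
  induction hF using IsWeightedHomogeneous.induction_on with
  | zero => simp only [map_zero, zero_mem]
  | add p q _ _ hp hq => simpa only [map_add] using add_mem hp hq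
  | monomial d c hd =>
    rw [aeval_monomial, ← Algebra.smul_def, ← hd, Finsupp.weight_apply]
    exact Submodule.smul_mem _ _ (SetLike.prod_pow_mem_graded M w y d fun i _ => hy i)

theorem weight_le_of_mem_vars {F : MvPolynomial E K} {n : ℕ} (hF : IsWeightedHomogeneous w F n)
    {i : E} (hi : i ∈ F.vars) : w i ≤ n := by
  obtain ⟨d, hd, hid⟩ := (mem_vars_iff_mem_support _).1 hi
  rw [← hF (mem_support_iff.1 hd)]
  exact Finsupp.le_weight_of_ne_zero' w (Finsupp.mem_support_iff.1 hid)

theorem eq_C_of_isWeightedHomogeneous_zero (hw : ∀ i, 0 < w i) {F : MvPolynomial E K}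
    (hF : IsWeightedHomogeneous w F 0) : F = C (coeff 0 F) := by
  rw [← weightedHomogeneousComponent_zero F fun i => (hw i).ne',
    hF.weightedHomogeneousComponent_same]

theorem pderiv_ne_zero_of_mem_vars [NoZeroDivisors K] [CharZero K] {F : MvPolynomial E K} {i : E}
    (hi : i ∈ F.vars) : pderiv i F ≠ 0 := by
  classical
  obtain ⟨d, hd, hid⟩ := (mem_vars_iff_mem_support _).1 hi
  have hle : Finsupp.single i 1 ≤ d :=
    Finsupp.single_le_iff.2 (Nat.one_le_iff_ne_zero.2 (Finsupp.mem_support_iff.1 hid))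
  intro h
  have hcoeff := coeff_pderiv (i := i) F (d - Finsupp.single i 1)
  rw [h, coeff_zero, tsub_add_cancel_of_le hle] at hcoeff
  exact mul_ne_zero (mem_support_iff.1 hd) (Nat.cast_add_one_ne_zero _) hcoeff.symm

theorem isWeightedHomogeneous_mkDerivation (hw : ∀ i, 0 < w i) {G : E → MvPolynomial E K}
    (hG : ∀ i, IsWeightedHomogeneous w (G i) (w i - 1)) {F : MvPolynomial E K} {n : ℕ}
    (hF : IsWeightedHomogeneous w F (n + 1)) :
    IsWeightedHomogeneous w (mkDerivation K G F) n := by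
  classical
  induction hF using IsWeightedHomogeneous.induction_on with
  | zero => simpa only [map_zero] using isWeightedHomogeneous_zero K w n
  | add p q _ _ hp hq => simpa only [map_add] using hp.add hq
  | monomial d c hd =>
    rw [mkDerivation_monomial, smul_eq_C_mul]
    refine .C_mul (.sum _ _ _ fun i hi => ?_) _
    have hle : Finsupp.single i 1 ≤ d :=
      Finsupp.single_le_iff.2 (Nat.one_le_iff_ne_zero.2 (Finsupp.mem_support_iff.1 hi))
    have hweight : Finsupp.weight w (d - Finsupp.single i 1) + w i = n + 1 := by
      rw [← hd]
      conv_rhs => rw [← tsub_add_cancel_of_le hle]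
      rw [map_add, Finsupp.weight_single, one_smul]
    have hmul :=
      (isWeightedHomogeneous_monomial w (d - Finsupp.single i 1) (d i : K) rfl).mul (hG i)
    have hdegree : Finsupp.weight w (d - Finsupp.single i 1) + (w i - 1) = n := by
      have := hw i
      lia
    rwa [hdegree] at hmul

theorem derivation_aeval (D : Derivation K S S) {y : E → S} {G : E → MvPolynomial E K}
    (hG : ∀ i, aeval y (G i) = D (y i)) (F : MvPolynomial E K) :
    D (aeval y F) = aeval y (mkDerivation K G F) := by
  induction F using MvPolynomial.induction_on with
  | C a => simp
  | add p q hp hq => simp only [map_add, hp, hq]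
  | mul_X p i hp =>
    simp only [map_mul, aeval_X, Derivation.leibniz, hp, mkDerivation_X, map_add, smul_eq_mul, hG]

theorem mkDerivation_pderiv_eq_zero {G : E → MvPolynomial E K} {F : MvPolynomial E K} {i : E}
    (hF : mkDerivation K G F = 0) (hi : ∀ j ∈ F.vars, i ∉ (G j).vars) :
    mkDerivation K G (pderiv i F) = 0 := by
  classical
  have hcomm : ⁅pderiv (R := K) i, mkDerivation K G⁆ F = 0 := by
    refine derivation_eq_zero_of_forall_mem_vars fun j hj => ?_
    rw [Derivation.commutator_apply, mkDerivation_X, pderiv_X,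
      pderiv_eq_zero_of_notMem_vars (hi j hj), Pi.single_apply]
    split_ifs <;> simp only [Derivation.map_one_eq_zero, map_zero, sub_zero]
  rwa [Derivation.commutator_apply, hF, map_zero, zero_sub, neg_eq_zero] at hcomm

end WeightedHomogeneous

section Graded

variable {K S : Type*} [Field K] [CommRing S] [Algebra K S] {H : ℕ → Submodule K S}
  {𝒟 : Set (Derivation K S S)} {E : Type*} {w : E → ℕ} {y : E → S}

/-- The derivations in `𝒟` detect nonzero elements in the family `H` of homogeneous parts of `S`:
they lower the degree by one, and only `0` is killed by all of them in positive degree. The parts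
are independent, but `S` need not be their sum. -/
structure HasEnoughDerivations (H : ℕ → Submodule K S) (𝒟 : Set (Derivation K S S)) : Prop where
  le_one : H 0 ≤ 1
  exists_proj (e : ℕ) :
    ∃ p : S →ₗ[K] S, (∀ f ∈ H e, p f = f) ∧ ∀ e' ≠ e, ∀ f ∈ H e', p f = 0
  map_mem {D : Derivation K S S} {e : ℕ} {f : S} : D ∈ 𝒟 → f ∈ H (e + 1) → D f ∈ H e
  eq_zero {e : ℕ} {f : S} : f ∈ H (e + 1) → (∀ D ∈ 𝒟, D f = 0) → f = 0

/-- The span of the products of two homogeneous elements of positive degree. -/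
def decomposables (H : ℕ → Submodule K S) : Submodule K S :=
  ⨆ i, ⨆ j, H (i + 1) * H (j + 1)

/-- The family `y` consists of homogeneous elements of positive degrees `w` which are linearly
independent modulo decomposable elements. -/
structure IsIndecomposableFamily (H : ℕ → Submodule K S) (w : E → ℕ) (y : E → S) : Prop where
  pos (i : E) : 0 < w i
  mem (i : E) : y i ∈ H (w i)
  linearIndependent : LinearIndependent K ((decomposables H).mkQ ∘ y)

/-- Every homogeneous element is a weighted homogeneous polynomial in the family `y`. -/
def IsGeneratingFamily (H : ℕ → Submodule K S) (w : E → ℕ) (y : E → S) : Prop :=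
  ∀ e, H e ≤ (weightedHomogeneousSubmodule K w e).map (aeval y).toLinearMap

theorem mul_mem_decomposables {m n : ℕ} (hm : 0 < m) (hn : 0 < n) {a b : S} (ha : a ∈ H m)
    (hb : b ∈ H n) : a * b ∈ decomposables H := by
  obtain ⟨m, rfl⟩ := Nat.exists_eq_add_one.2 hm
  obtain ⟨n, rfl⟩ := Nat.exists_eq_add_one.2 hn
  exact Submodule.mem_iSup_of_mem m (Submodule.mem_iSup_of_mem n (Submodule.mul_mem_mul ha hb))

variable [SetLike.GradedMonoid H]

theorem exists_linear_part (hw : ∀ i, 0 < w i) (hy : ∀ i, y i ∈ H (w i)) (F : MvPolynomial E K) :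
    ∃ c : E →₀ K, (∀ i, c i = coeff (Finsupp.single i 1) F) ∧
      aeval y F - algebraMap K S (coeff 0 F) - Finsupp.linearCombination K y c ∈
        decomposables H := by
  classical
  induction F using MvPolynomial.induction_on' with
  | add p q hp hq =>
    obtain ⟨c, hc, hcp⟩ := hp
    obtain ⟨c', hc', hcq⟩ := hq
    refine ⟨c + c', fun i => by rw [Finsupp.add_apply, hc, hc', coeff_add], ?_⟩
    convert add_mem hcp hcq using 1
    simp only [map_add, coeff_add]
    ring
  | monomial d a =>
    rcases eq_or_ne d 0 with rfl | hd
    · exact ⟨0, fun i => by simp [coeff_C, Finsupp.single_eq_zero, eq_comm], by simp⟩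
    obtain ⟨i, hi⟩ := Finsupp.ne_iff.1 hd
    obtain ⟨d, rfl⟩ : ∃ d', d = Finsupp.single i 1 + d' :=
      exists_add_of_le (Finsupp.single_le_iff.2 (Nat.one_le_iff_ne_zero.2 hi))
    rcases eq_or_ne d 0 with rfl | hd'
    · exact ⟨Finsupp.single i a, fun j => by simp [coeff_monomial, Finsupp.single_apply,
        Finsupp.single_left_inj], by simp [aeval_monomial, coeff_monomial, Algebra.smul_def]⟩
    · refine ⟨0, fun j => ?_, ?_⟩
      · rw [coeff_monomial, if_neg, Finsupp.zero_apply]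
        intro h
        have := congrArg Finsupp.degree h
        simp only [map_add, Finsupp.degree_single] at this
        exact hd' ((Finsupp.degree_eq_zero_iff d).1 (by lia))
      · have hdw : aeval y (monomial d a) ∈ H (Finsupp.weight w d) :=
          aeval_mem_of_isWeightedHomogeneous hy (isWeightedHomogeneous_monomial w d a rfl)
        have hpos : 0 < Finsupp.weight w d := by
          obtain ⟨j, hj⟩ := Finsupp.ne_iff.1 hd'
          exact (hw j).trans_le (Finsupp.le_weight_of_ne_zero' w hj)
        have hmul :
            aeval y (monomial (Finsupp.single i 1 + d) a) = y i * aeval y (monomial d a) := by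
          rw [← one_mul a, ← monomial_mul, map_mul, one_mul, ← X, aeval_X]
        rw [coeff_monomial, if_neg hd, map_zero, map_zero, sub_zero, sub_zero, hmul]
        exact mul_mem_decomposables (hw i) hpos (hy i) hdw

theorem IsIndecomposableFamily.coeff_single_eq_zero (h : IsIndecomposableFamily H w y)
    {F : MvPolynomial E K} (h0 : coeff 0 F = 0) (hF : aeval y F = 0) (i : E) :
    coeff (Finsupp.single i 1) F = 0 := by
  obtain ⟨c, hc, hmem⟩ := exists_linear_part h.pos h.mem F
  rw [h0, hF, map_zero, sub_zero, zero_sub, neg_mem_iff, ← Submodule.Quotient.mk_eq_zero,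
    ← Submodule.mkQ_apply, LinearMap.map_finsupp_linearCombination] at hmem
  rw [← hc, linearIndependent_iff.1 h.linearIndependent c hmem, Finsupp.zero_apply]

/-- A weighted homogeneous relation `F` of minimal degree is constant: if `i` has maximal weight
among its variables, then `∂F/∂yᵢ` evaluates to an element killed by all derivations, since these
commute with `∂/∂yᵢ` on polynomials in the variables of `F`. -/
theorem HasEnoughDerivations.eq_zero_of_aeval_eq_zero [Nontrivial S] [CharZero K]
    (h : HasEnoughDerivations H 𝒟) (hy : IsIndecomposableFamily H w y)
    (hgen : IsGeneratingFamily H w y) {n : ℕ} {F : MvPolynomial E K}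
    (hF : IsWeightedHomogeneous w F n) (h0 : aeval y F = 0) : F = 0 := by
  induction n using Nat.strong_induction_on generalizing F with | _ n ih => ?_
  rcases n with _ | n
  · rw [eq_C_of_isWeightedHomogeneous_zero hy.pos hF, aeval_C] at h0
    rw [eq_C_of_isWeightedHomogeneous_zero hy.pos hF,
      (map_eq_zero_iff _ (FaithfulSMul.algebraMap_injective K S)).1 h0, map_zero]
  have hconst : coeff 0 F = 0 := hF.coeff_eq_zero 0 (by simp)
  by_contra hF0
  have hvars : F.vars.Nonempty := by
    rw [Finset.nonempty_iff_ne_empty, Ne, vars_eq_empty_iff_eq_C, hconst, map_zero]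
    exact hF0
  obtain ⟨i, hi, hmax⟩ := F.vars.exists_max_image w hvars
  have hin := weight_le_of_mem_vars hF hi
  have hpderiv : IsWeightedHomogeneous w (pderiv i F) (n + 1 - w i) :=
    hF.pderiv (Nat.sub_add_cancel hin)
  have hD : ∀ D ∈ 𝒟, D (aeval y (pderiv i F)) = 0 := by
    intro D hD
    choose G hG hGy using fun j => hgen _
      (h.map_mem (e := w j - 1) hD (by rw [Nat.sub_add_cancel (hy.pos j)]; exact hy.mem j))
    have hGF : mkDerivation K G F = 0 :=
      ih n n.lt_succ_self (isWeightedHomogeneous_mkDerivation hy.pos hG hF)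
        (by rw [← derivation_aeval D hGy, h0, map_zero])
    have hGi : ∀ j ∈ F.vars, i ∉ (G j).vars := fun j hj hij => by
      have := weight_le_of_mem_vars (hG j) hij
      have := hmax j hj
      have := hy.pos j
      lia
    rw [derivation_aeval D hGy, mkDerivation_pderiv_eq_zero hGF hGi, map_zero]
  have hne := pderiv_ne_zero_of_mem_vars hi
  rcases hin.lt_or_eq with hlt | heq
  · obtain ⟨m, hm⟩ : ∃ m, n + 1 - w i = m + 1 := ⟨n - w i, by lia⟩
    have hpos := hy.pos i
    rw [hm] at hpderiv
    exact hne (ih (m + 1) (by lia) hpderiv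
      (h.eq_zero (aeval_mem_of_isWeightedHomogeneous hy.mem hpderiv) hD))
  · rw [heq, Nat.sub_self] at hpderiv
    apply hne
    rw [eq_C_of_isWeightedHomogeneous_zero hy.pos hpderiv, coeff_pderiv, zero_add,
      hy.coeff_single_eq_zero hconst h0, zero_mul, map_zero]

theorem aeval_weightedHomogeneousComponent (hy : ∀ i, y i ∈ H (w i)) {n : ℕ} {p : S →ₗ[K] S}
    (hp : ∀ f ∈ H n, p f = f) (hp' : ∀ m ≠ n, ∀ f ∈ H m, p f = 0) (F : MvPolynomial E K) :
    aeval y (weightedHomogeneousComponent w n F) = p (aeval y F) := by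
  induction F using MvPolynomial.induction_on' with
  | monomial d c =>
    have hm := isWeightedHomogeneous_monomial w d c rfl
    rcases eq_or_ne (Finsupp.weight w d) n with rfl | hn
    · rw [hp _ (aeval_mem_of_isWeightedHomogeneous hy hm), hm.weightedHomogeneousComponent_same]
    · rw [hp' _ hn _ (aeval_mem_of_isWeightedHomogeneous hy hm),
        hm.weightedHomogeneousComponent_ne _ hn.symm, map_zero]
  | add p q hp hq => simp only [map_add, hp, hq]

theorem HasEnoughDerivations.isGeneratingFamily (h : HasEnoughDerivations H 𝒟)
    (hy : ∀ i, y i ∈ H (w i))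
    (hspan : ∀ e, H (e + 1) ≤ decomposables H ⊔ Submodule.span K (Set.range y)) :
    IsGeneratingFamily H w y := by
  intro e
  induction e using Nat.strong_induction_on with | _ e ih => ?_
  rcases e with _ | e
  · intro f hf
    obtain ⟨c, rfl⟩ := Submodule.mem_one.1 (h.le_one hf)
    exact ⟨C c, isWeightedHomogeneous_C w c, aeval_C y c⟩
  obtain ⟨p, hp, hp'⟩ := h.exists_proj (e + 1)
  suffices decomposables H ⊔ Submodule.span K (Set.range y) ≤
      ((weightedHomogeneousSubmodule K w (e + 1)).map (aeval y).toLinearMap).comap p from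
    fun f hf => hp f hf ▸ this (hspan e hf)
  refine sup_le (iSup₂_le fun i j => Submodule.mul_le.2 fun a ha b hb => ?_)
    (Submodule.span_le.2 ?_)
  · rcases eq_or_ne (i + 1 + (j + 1)) (e + 1) with hij | hij
    · rw [Submodule.mem_comap, hp _ (hij ▸ SetLike.mul_mem_graded ha hb)]
      obtain ⟨F, hF, rfl⟩ := ih (i + 1) (by lia) ha
      obtain ⟨G, hG, rfl⟩ := ih (j + 1) (by lia) hb
      exact ⟨F * G, hij ▸ IsWeightedHomogeneous.mul hF hG, map_mul (aeval y) F G⟩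
    · rw [Submodule.mem_comap, hp' _ hij _ (SetLike.mul_mem_graded ha hb)]
      exact zero_mem _
  · rintro _ ⟨i, rfl⟩
    rcases eq_or_ne (w i) (e + 1) with hi | hi
    · rw [SetLike.mem_coe, Submodule.mem_comap, hp _ (hi ▸ hy i)]
      exact ⟨X i, hi ▸ isWeightedHomogeneous_X K w i, aeval_X y i⟩
    · rw [SetLike.mem_coe, Submodule.mem_comap, hp' _ hi _ (hy i)]
      exact zero_mem _

theorem HasEnoughDerivations.exists_extension (h : HasEnoughDerivations H 𝒟)
    (hy : IsIndecomposableFamily H w y) :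
    ∃ (b : Set (E ⊕ Σ e, H (e + 1))) (w' : b → ℕ) (y' : b → S) (g : E → b),
      g.Injective ∧ y' ∘ g = y ∧ IsIndecomposableFamily H w' y' ∧ IsGeneratingFamily H w' y' := by
  let wt : (E ⊕ Σ e, H (e + 1)) → ℕ := Sum.elim w fun x => x.1 + 1
  let u : (E ⊕ Σ e, H (e + 1)) → S := Sum.elim y fun x => x.2
  have hrange : LinearIndepOn K ((decomposables H).mkQ ∘ u) (Set.range Sum.inl) :=
    (linearIndepOn_range_iff Sum.inl_injective _).2 hy.linearIndependent
  obtain ⟨b, -, hb, hspan, hli⟩ := exists_linearIndepOn_extension hrange (Set.subset_univ _)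
  have hmem : ∀ i : b, u i ∈ H (wt i) := by
    rintro ⟨i | x, _⟩
    exacts [hy.mem i, x.2.2]
  have hpos : ∀ i : b, 0 < wt i := by
    rintro ⟨i | x, _⟩
    exacts [hy.pos i, x.1.succ_pos]
  refine ⟨b, fun i => wt i, fun i => u i, fun i => ⟨.inl i, hb (Set.mem_range_self i)⟩, ?_, rfl,
    ⟨hpos, hmem, hli⟩, h.isGeneratingFamily hmem fun e f hf => ?_⟩
  · exact fun i j hij => Sum.inl_injective (Subtype.ext_iff.1 hij)
  · have hmk : (decomposables H).mkQ f ∈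
        Submodule.map (decomposables H).mkQ (Submodule.span K (u '' b)) := by
      rw [Submodule.map_span, ← Set.image_comp]
      exact hspan ⟨.inr ⟨e, f, hf⟩, trivial, rfl⟩
    rwa [← Submodule.mem_comap, Submodule.comap_map_mkQ, Set.image_eq_range] at hmk

theorem IsIndecomposableFamily.algebraicIndependent [Nontrivial S] [CharZero K]
    (hy : IsIndecomposableFamily H w y) (h : HasEnoughDerivations H 𝒟) :
    AlgebraicIndependent K y := by
  obtain ⟨b, w', y', g, hg, rfl, hy', hgen⟩ := h.exists_extension hy
  refine AlgebraicIndependent.comp (algebraicIndependent_iff.2 fun F hF => ?_) g hg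
  have hcomp : ∀ n, weightedHomogeneousComponent w' n F = 0 := fun n => by
    obtain ⟨p, hp, hp'⟩ := h.exists_proj n
    refine h.eq_zero_of_aeval_eq_zero hy' hgen
      (weightedHomogeneousComponent_isWeightedHomogeneous n F) ?_
    rw [aeval_weightedHomogeneousComponent hy'.mem hp hp', hF, map_zero]
  rw [← finsum_weightedHomogeneousComponent w' F, finsum_congr hcomp, finsum_zero]

end Graded

section HomogeneousGerms

variable {α : Type*}

/-- Germs of sequences of polynomials that are eventually homogeneous of degree `e`. -/
def homogeneousGerms (U : Filter α) (σ K : Type*) [CommRing K] (e : ℕ) :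
    Submodule (Germ U K) (Germ U (MvPolynomial σ K)) where
  carrier := {x | x.LiftPred (·.IsHomogeneous e)}
  zero_mem' := .of_forall fun _ => isHomogeneous_zero σ K e
  add_mem' {x y} := Germ.inductionOn₂ x y fun _ _ hx hy =>
    hx.mp (hy.mono fun _ hyn hxn => hxn.add hyn)
  smul_mem' c x := Germ.inductionOn₂ c x fun c _ hx => hx.mono fun n hn =>
    (homogeneousSubmodule σ K e).smul_mem (c n) hn

theorem coe_mem_homogeneousGerms {U : Filter α} {σ K : Type*} [CommRing K] {e : ℕ}
    {f : α → MvPolynomial σ K} :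
    (f : Germ U (MvPolynomial σ K)) ∈ homogeneousGerms U σ K e ↔
      ∀ᶠ n in U, (f n).IsHomogeneous e :=
  Iff.rfl

instance {U : Filter α} {σ K : Type*} [CommRing K] :
    SetLike.GradedMonoid (homogeneousGerms U σ K) where
  one_mem := .of_forall fun _ => isHomogeneous_one σ K
  mul_mem _ _ x y := Germ.inductionOn₂ x y fun _ _ hx hy =>
    hx.mp (hy.mono fun _ hyn hxn => hxn.mul hyn)

variable {U : Ultrafilter α} {σ K : Type*} [Field K]

/-- Germs of sequences of derivations that lower degrees by one. -/
def degreeLoweringDerivations (U : Filter α) (σ K : Type*) [CommRing K] :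
    Set (Derivation (Germ U K) (Germ U (MvPolynomial σ K)) (Germ U (MvPolynomial σ K))) :=
  germDerivation '' {D : α → Derivation K (MvPolynomial σ K) (MvPolynomial σ K) |
    ∀ n e f, f.IsHomogeneous (e + 1) → (D n f).IsHomogeneous e}

theorem exists_derivation_eq_zero_imp [CharZero K] (f : MvPolynomial σ K) :
    ∃ D : Derivation K (MvPolynomial σ K) (MvPolynomial σ K),
      (∀ e g, g.IsHomogeneous (e + 1) → (D g).IsHomogeneous e) ∧
        ∀ e, f.IsHomogeneous (e + 1) → D f = 0 → f = 0 := by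
  rcases f.vars.eq_empty_or_nonempty with hf | ⟨i, hi⟩
  · refine ⟨0, fun e g _ => isHomogeneous_zero σ K e, fun e he _ => ?_⟩
    rw [vars_eq_empty_iff_eq_C] at hf
    rw [hf, IsHomogeneous.coeff_eq_zero he (by simp), map_zero]
  · exact ⟨pderiv i, fun e g hg => hg.pderiv,
      fun e _ h => absurd h (pderiv_ne_zero_of_mem_vars hi)⟩

theorem hasEnoughDerivations_homogeneousGerms [CharZero K] :
    HasEnoughDerivations (homogeneousGerms (U : Filter α) σ K)
      (degreeLoweringDerivations (U : Filter α) σ K) where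
  le_one x := Germ.inductionOn x fun f hf => by
    refine Submodule.mem_one.2 ⟨((fun n => coeff 0 (f n) : α → K) : Germ (U : Filter α) K), ?_⟩
    refine (algebraMap_germ_coe _).trans (Germ.coe_eq.2 (hf.mono fun n hn => ?_))
    exact (totalDegree_eq_zero_iff_eq_C.1 ((totalDegree_zero_iff_isHomogeneous _).2 hn)).symm
  exists_proj e := by
    refine ⟨germLinearMap fun _ => homogeneousComponent e, fun x => ?_, fun e' he' x => ?_⟩
    · exact Germ.inductionOn x fun f hf => Germ.coe_eq.2 <| hf.mono fun n hn =>
        (homogeneousComponent_of_mem hn).trans (if_pos rfl)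
    · exact Germ.inductionOn x fun f hf => Germ.coe_eq.2 <| hf.mono fun n hn =>
        (homogeneousComponent_of_mem hn).trans (if_neg he'.symm)
  map_mem {_ e x} := by
    rintro ⟨D, hD, rfl⟩
    exact Germ.inductionOn x fun f hf => hf.mono fun n hn => hD n e _ hn
  eq_zero {e x} := Germ.inductionOn x fun f hf h => by
    choose D hD hDf using fun n => exists_derivation_eq_zero_imp (f n)
    exact germ_coe_eq_zero.2 <|
      hf.mp ((germ_coe_eq_zero.1 (h _ ⟨D, hD, rfl⟩)).mono fun n h0 hn => hDf n e hn h0)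

end HomogeneousGerms

section LinearSubstitution

variable {K B B' σ ι : Type*} [CommRing K] [CommRing B] [Algebra K B] [CommRing B'] [Algebra K B']

theorem aeval_mul_of_isHomogeneous (g : σ → B) (b : B) {f : MvPolynomial σ K} {e : ℕ}
    (hf : f.IsHomogeneous e) : aeval (fun k => g k * b) f = aeval g f * b ^ e := by
  induction hf using IsWeightedHomogeneous.induction_on with
  | zero => simp only [map_zero, zero_mul]
  | add p q _ _ hp hq => simp only [map_add, hp, hq, add_mul]
  | monomial d c hd =>
    simp only [aeval_monomial, mul_pow, Finsupp.prod_mul, mul_assoc]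
    rw [← hd, Finsupp.weight_apply, Finsupp.sum, ← Finset.prod_pow_eq_pow_sum]
    simp only [Pi.one_apply, smul_eq_mul, mul_one, Finsupp.prod]

variable [Fintype ι]

/-- The substitution `xₖ ↦ ∑ⱼ vⱼₖ Xⱼ`. -/
noncomputable def linearSubstitution (v : ι → σ → B) : MvPolynomial σ K →ₐ[K] MvPolynomial ι B :=
  aeval fun k => ∑ j, C (v j k) * X j

theorem map_linearSubstitution (φ : B →ₐ[K] B') (v : ι → σ → B) (f : MvPolynomial σ K) :
    map (φ : B →+* B') (linearSubstitution v f) = linearSubstitution (fun j k => φ (v j k)) f := by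
  suffices (mapAlgHom φ).comp (linearSubstitution v) =
      linearSubstitution (K := K) fun j k => φ (v j k) from DFunLike.congr_fun this f
  ext1 k
  simp [linearSubstitution]

/-- The polynomials all of whose coefficients lie in `M`. -/
def polynomialsWithCoeffsIn (ι : Type*) (M : Submodule K B) : Submodule K (MvPolynomial ι B) where
  carrier := {q | ∀ γ, coeff γ q ∈ M}
  zero_mem' _ := M.zero_mem
  add_mem' hp hq γ := M.add_mem (hp γ) (hq γ)
  smul_mem' c _ hq γ := M.smul_mem c (hq γ)

instance (M : ℕ → Submodule K B) [SetLike.GradedMonoid M] :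
    SetLike.GradedMonoid fun e => polynomialsWithCoeffsIn ι (M e) where
  one_mem γ := by
    classical
    rw [coeff_one]
    split_ifs
    exacts [SetLike.one_mem_graded M, zero_mem _]
  mul_mem _ _ p q hp hq γ := by
    classical
    rw [coeff_mul]
    exact sum_mem fun _ _ => SetLike.mul_mem_graded (hp _) (hq _)

theorem coeff_linearSubstitution_mem (M : ℕ → Submodule K B) [SetLike.GradedMonoid M]
    {v : ι → σ → B} (hv : ∀ j k, v j k ∈ M 1) {f : MvPolynomial σ K} {e : ℕ}
    (hf : f.IsHomogeneous e) (γ : ι →₀ ℕ) : coeff γ (linearSubstitution v f) ∈ M e := by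
  classical
  refine aeval_mem_of_isWeightedHomogeneous (M := fun e => polynomialsWithCoeffsIn ι (M e))
    (fun k γ => ?_) hf γ
  rw [coeff_sum]
  refine sum_mem fun j _ => ?_
  rw [coeff_C_mul, coeff_X, mul_ite, mul_one, mul_zero]
  split_ifs
  exacts [hv j k, zero_mem _]

theorem coeff_linearSubstitution_C_mul_X (s : ι → K) {f : MvPolynomial σ K} {γ : ι →₀ ℕ}
    (hf : f.IsHomogeneous γ.degree) :
    coeff γ (linearSubstitution (fun j k => C (s j) * X k) f) =
      ((γ.multinomial : K) * γ.prod fun j m => s j ^ m) • f := by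
  have hsum : (fun k => ∑ j, C (C (s j) * X k) * X j : σ → MvPolynomial ι (MvPolynomial σ K)) =
      fun k => C (X k) * ∑ j, (C (s j) : MvPolynomial σ K) • X j := by
    ext1 k
    rw [Finset.mul_sum]
    refine Finset.sum_congr rfl fun j _ => ?_
    rw [smul_eq_C_mul, map_mul]
    ring
  have hC : aeval (fun k => (C (X k) : MvPolynomial ι (MvPolynomial σ K))) f = C f := by
    rw [← algebraMap_eq]
    exact (aeval_algebraMap_apply _ X f).trans (congrArg _ (aeval_X_left_apply f))
  rw [linearSubstitution, hsum, aeval_mul_of_isHomogeneous _ _ hf, hC, coeff_C_mul,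
    coeff_linearCombination_X_pow_of_fintype,
    if_pos (show γ.sum (fun _ m => m) = _ from (Finsupp.degree_apply γ).symm), smul_eq_C_mul,
    mul_comm, map_mul, map_natCast, Finsupp.prod, Finsupp.prod, map_prod]
  simp only [map_pow]

end LinearSubstitution

section Specialization

variable {ι : Type*} [Finite ι]

noncomputable instance (d : ℕ) : Fintype {γ : ι →₀ ℕ // γ.degree = d} :=
  (Finsupp.finite_of_degree_eq d).fintype

/-- The indices of the coefficients of a system of forms of degrees `w` in the variables `ι`. -/
abbrev FormIndex (w : ι → ℕ) : Type _ :=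
  Σ i, {γ : ι →₀ ℕ // γ.degree = w i}

variable {K S S' : Type*} [Field K] [CommRing S] [Algebra K S] [CommRing S'] [Algebra K S']
  {H : ℕ → Submodule K S} {H' : ℕ → Submodule K S'} {w : ι → ℕ} {y : ι → S}

theorem map_mem_decomposables {Θ : S' →ₐ[K] S} (hΘ : ∀ e, ∀ f ∈ H' e, Θ f ∈ H e) {f : S'}
    (hf : f ∈ decomposables H') : Θ f ∈ decomposables H := by
  suffices decomposables H' ≤ (decomposables H).comap Θ.toLinearMap from this hf
  refine iSup₂_le fun i j => Submodule.mul_le.2 fun a ha b hb => ?_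
  rw [Submodule.mem_comap, AlgHom.toLinearMap_apply, map_mul]
  exact mul_mem_decomposables i.succ_pos j.succ_pos (hΘ _ a ha) (hΘ _ b hb)

/-- If the elements `z` specialize to all multiples of `y` by monomials in `s`, a linear relation
between them specializes to relations between the `y` whose coefficients are polynomials in `s`. -/
theorem IsIndecomposableFamily.of_specializations [CharZero K]
    (hy : IsIndecomposableFamily H w y) {z : FormIndex w → S'} (hz : ∀ p, z p ∈ H' (w p.1))
    (hΘ : ∀ s : ι → K, ∃ Θ : S' →ₐ[K] S, (∀ e, ∀ f ∈ H' e, Θ f ∈ H e) ∧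
      ∀ p, Θ (z p) = ((p.2.1.multinomial : K) * p.2.1.prod fun j m => s j ^ m) • y p.1) :
    IsIndecomposableFamily H' (fun p : FormIndex w => w p.1) z := by
  classical
  have := Fintype.ofFinite ι
  refine ⟨fun p => hy.pos p.1, hz, Fintype.linearIndependent_iff.2 fun c hc => ?_⟩
  have hdec : ∑ p, c p • z p ∈ decomposables H' := by
    rw [← Submodule.Quotient.mk_eq_zero, ← Submodule.mkQ_apply, map_sum, ← hc]
    exact Finset.sum_congr rfl fun p _ => map_smul _ _ _
  let q (i : ι) : MvPolynomial ι K :=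
    ∑ γ : {γ : ι →₀ ℕ // γ.degree = w i}, monomial γ.1 (c ⟨i, γ⟩ * γ.1.multinomial)
  have hq (i : ι) : q i = 0 := by
    refine MvPolynomial.funext fun s => ?_
    obtain ⟨Θ, hΘH, hΘz⟩ := hΘ s
    have hmem := map_mem_decomposables hΘH hdec
    have hsum : Θ (∑ p, c p • z p) = ∑ i, eval s (q i) • y i := by
      simp only [map_sum, map_smul, hΘz, Fintype.sum_sigma, q, eval_monomial, Finset.sum_smul,
        smul_smul, mul_assoc]
    rw [hsum, ← Submodule.Quotient.mk_eq_zero, ← Submodule.mkQ_apply, map_sum] at hmem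
    simp only [map_smul] at hmem
    rw [Fintype.linearIndependent_iff.1 hy.linearIndependent _ hmem i, map_zero]
  rintro ⟨i, γ⟩
  have hcoeff : coeff γ.1 (q i) = c ⟨i, γ⟩ * γ.1.multinomial := by
    simp only [q, coeff_sum, coeff_monomial, Subtype.coe_inj, Finset.sum_ite_eq',
      Finset.mem_univ, if_true]
  rw [hq, coeff_zero, eq_comm] at hcoeff
  refine (mul_eq_zero.1 hcoeff).resolve_right (Nat.cast_ne_zero.2 ?_)
  exact (Nat.multinomial_pos _ _).ne'

end Specialization

section GenericCoefficients

variable {α : Type*} {U : Ultrafilter α} {σ K ι : Type*} [Field K] [Fintype ι] {w : ι → ℕ}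

theorem isIndecomposableFamily_coeff_linearSubstitution [CharZero K]
    {a : ι → α → MvPolynomial σ K}
    (ha : IsIndecomposableFamily (homogeneousGerms (U : Filter α) σ K) w
      fun i => (a i : Germ (U : Filter α) (MvPolynomial σ K))) :
    IsIndecomposableFamily (homogeneousGerms (U : Filter α) (ι × σ) K)
      (fun p : FormIndex w => w p.1) fun p =>
        ((fun n => coeff p.2.1 (linearSubstitution (fun j k => X (j, k)) (a p.1 n)) :
          α → MvPolynomial (ι × σ) K) : Germ (U : Filter α) (MvPolynomial (ι × σ) K)) := by
  refine ha.of_specializations (fun p => ?_) fun s => ?_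
  · exact (ha.mem p.1).mono fun n hn =>
      coeff_linearSubstitution_mem (homogeneousSubmodule (ι × σ) K)
        (fun j k => isHomogeneous_X K (j, k)) hn p.2.1
  obtain ⟨r, rfl⟩ := exists_germ_coe_eq s
  let θ (n : α) : MvPolynomial (ι × σ) K →ₐ[K] MvPolynomial σ K :=
    aeval fun p => C (r p.1 n) * X p.2
  have hθ (n : α) (i : ι) (γ : ι →₀ ℕ) (h : (a i n).IsHomogeneous γ.degree) :
      θ n (coeff γ (linearSubstitution (fun j k => X (j, k)) (a i n))) =
        ((γ.multinomial : K) * γ.prod fun j m => r j n ^ m) • a i n := by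
    rw [← coeff_linearSubstitution_C_mul_X _ h, ← AlgHom.coe_toRingHom, ← coeff_map,
      map_linearSubstitution]
    simp only [θ, aeval_X]
  have hθH (n : α) (e : ℕ) (f : MvPolynomial (ι × σ) K) (h : f.IsHomogeneous e) :
      (θ n f).IsHomogeneous e := by
    simpa only [one_mul] using h.aeval _ fun p => isHomogeneous_C_mul_X (r p.1 n) p.2
  refine ⟨germAlgHom θ, fun e x => ?_, fun p => ?_⟩
  · exact Germ.inductionOn x fun f hf => hf.mono fun n => hθH n e (f n)
  · beta_reduce
    rw [prod_germ_coe_pow]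
    exact Germ.coe_eq.2 <| (ha.mem p.1).mono fun n hn => hθ n p.1 p.2.1 (p.2.2.symm ▸ hn)

theorem eventually_exists_eval_coeff_ne_zero [CharZero K] {a : ι → α → MvPolynomial σ K}
    (ha : IsIndecomposableFamily (homogeneousGerms (U : Filter α) σ K) w
      fun i => (a i : Germ (U : Filter α) (MvPolynomial σ K)))
    {Δ : MvPolynomial (FormIndex w) K} (hΔ : Δ ≠ 0) :
    ∀ᶠ n in U, ∃ v : ι → σ → K,
      eval (fun p : FormIndex w => coeff p.2.1 (linearSubstitution v (a p.1 n))) Δ ≠ 0 := by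
  let z (p : FormIndex w) (n : α) : MvPolynomial (ι × σ) K :=
    coeff p.2.1 (linearSubstitution (fun j k => X (j, k)) (a p.1 n))
  have hz : AlgebraicIndependent (Germ (U : Filter α) K) fun p =>
      (z p : Germ (U : Filter α) (MvPolynomial (ι × σ) K)) :=
    (isIndecomposableFamily_coeff_linearSubstitution ha).algebraicIndependent
      hasEnoughDerivations_homogeneousGerms
  have hne : ∀ᶠ n in U, aeval (fun p => z p n) Δ ≠ 0 := by
    rw [Ultrafilter.eventually_not, ← germ_coe_eq_zero, ← aeval_germ_map_const]
    refine (map_ne_zero_iff _ hz).2 ((map_ne_zero_iff _ (map_injective _ ?_)).2 hΔ)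
    exact RingHom.injective _
  refine hne.mono fun n hn => ?_
  obtain ⟨v, hv⟩ : ∃ v : ι × σ → K, aeval v (aeval (fun p => z p n) Δ) ≠ 0 := by
    by_contra! h
    exact hn (MvPolynomial.funext fun v => (h v).trans (map_zero _).symm)
  refine ⟨fun j k => v (j, k), fun h => hv ?_⟩
  rw [← AlgHom.comp_apply, comp_aeval]
  refine .trans (congrArg (aeval · Δ) (funext fun p => ?_)) h
  rw [← AlgHom.coe_toRingHom, ← coeff_map, map_linearSubstitution]
  simp only [aeval_X]

end GenericCoefficients

section BoxBasis

theorem aeval_X_pow_monomial {ι A : Type*} [Finite ι] [CommRing A] {w : ι → ℕ}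
    (δ : ι →₀ ℕ) (c : A) :
    aeval (fun i => (X i : MvPolynomial ι A) ^ w i) (monomial δ c) =
      monomial (Finsupp.equivFunOnFinite.symm fun i => w i * δ i) c := by
  have := Fintype.ofFinite ι
  rw [aeval_monomial, monomial_eq, algebraMap_eq, Finsupp.prod_fintype _ _ fun i => pow_zero _,
    Finsupp.prod_fintype _ _ fun i => pow_zero _]
  simp only [← pow_mul]
  rfl

variable {ι A : Type*} [Fintype ι] [DecidableEq ι] [CommRing A] {w : ι → ℕ}

/-- The exponent vector of the box monomial with exponents `β i < w i`. -/
noncomputable def boxExponent (β : ∀ i, Fin (w i)) : ι →₀ ℕ :=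
  Finsupp.equivFunOnFinite.symm fun i => β i

/-- The combination `∑ Xᵝ uᵦ(G)` of the monomials `Xᵝ` with `β i < w i`, whose coefficients are
polynomials in `G`. -/
noncomputable def boxSum (w : ι → ℕ) (G : ι → MvPolynomial ι A) :
    ((∀ i, Fin (w i)) → MvPolynomial ι A) →ₗ[A] MvPolynomial ι A :=
  ∑ β, LinearMap.mulLeft A (monomial (boxExponent β) 1) ∘ₗ (aeval G).toLinearMap ∘ₗ .proj β

theorem boxSum_apply (G : ι → MvPolynomial ι A) (u : (∀ i, Fin (w i)) → MvPolynomial ι A) :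
    boxSum w G u = ∑ β, monomial (boxExponent β) 1 * aeval G (u β) := by
  simp only [boxSum, LinearMap.sum_apply, LinearMap.comp_apply, LinearMap.proj_apply,
    LinearMap.mulLeft_apply, AlgHom.toLinearMap_apply]

theorem boxSum_single (G : ι → MvPolynomial ι A) (β : ∀ i, Fin (w i))
    (F : MvPolynomial ι A) :
    boxSum w G (Pi.single β F) = monomial (boxExponent β) 1 * aeval G F := by
  rw [boxSum_apply, Fintype.sum_eq_single β fun γ hγ => by
    rw [Pi.single_eq_of_ne hγ, map_zero, mul_zero], Pi.single_eq_same]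

theorem boxSum_mul (G : ι → MvPolynomial ι A) (u : (∀ i, Fin (w i)) → MvPolynomial ι A)
    (F : MvPolynomial ι A) : boxSum w G (fun β => u β * F) = boxSum w G u * aeval G F := by
  simp only [boxSum_apply, map_mul, ← mul_assoc, Finset.sum_mul]

variable [∀ i, NeZero (w i)]

/-- Division with remainder of exponent vectors by `w`, as pairs of a remainder and a quotient. -/
noncomputable def exponentDivMod (w : ι → ℕ) [∀ i, NeZero (w i)] :
    (ι →₀ ℕ) ≃ Σ _ : (∀ i, Fin (w i)), (ι →₀ ℕ) where
  toFun α := ⟨fun i => Fin.ofNat (w i) (α i), Finsupp.equivFunOnFinite.symm fun i => α i / w i⟩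
  invFun p := boxExponent p.1 + Finsupp.equivFunOnFinite.symm fun i => w i * p.2 i
  left_inv α := by
    ext i
    exact Nat.mod_add_div _ _
  right_inv := by
    rintro ⟨β, δ⟩
    refine Sigma.ext (funext fun i => Fin.ext ?_) (heq_of_eq (Finsupp.ext fun i => ?_))
    · exact (Nat.add_mul_mod_self_left _ _ _).trans (Nat.mod_eq_of_lt (β i).2)
    · refine (Nat.add_mul_div_left _ _ (NeZero.pos (w i))).trans ?_
      rw [show boxExponent β i / w i = 0 from Nat.div_eq_of_lt (β i).2, zero_add]

omit [DecidableEq ι] in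
theorem degree_eq_add_sum_exponentDivMod (α : ι →₀ ℕ) :
    α.degree = (boxExponent (exponentDivMod w α).1).degree +
      ∑ i, (exponentDivMod w α).2 i * w i := by
  rw [Finsupp.degree_eq_sum, Finsupp.degree_eq_sum, ← Finset.sum_add_distrib]
  exact Finset.sum_congr rfl fun i _ => by
    rw [mul_comm]; exact (Nat.mod_add_div (α i) (w i)).symm

theorem boxSum_X_pow_bijective :
    Function.Bijective (boxSum w fun i => (X i : MvPolynomial ι A) ^ w i) := by
  let b : Module.Basis (Σ _ : (∀ i, Fin (w i)), (ι →₀ ℕ)) A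
      ((∀ i, Fin (w i)) → MvPolynomial ι A) := Pi.basis fun _ => basisMonomials ι A
  let e := b.equiv (basisMonomials ι A) (exponentDivMod w).symm
  suffices boxSum w (fun i => (X i : MvPolynomial ι A) ^ w i) = e.toLinearMap by
    rw [this]
    exact e.bijective
  refine b.ext fun p => ?_
  have hp : b p = Pi.single p.1 (monomial p.2 1) := by
    simp only [b, Pi.basis_apply, coe_basisMonomials]
  rw [LinearEquiv.coe_coe, Module.Basis.equiv_apply, hp, boxSum_single, aeval_X_pow_monomial,
    monomial_mul, one_mul, coe_basisMonomials]
  rfl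

/-- The linear endomorphism of the polynomial ring replacing `X i ^ w i` by `G i` as often as
possible in each monomial. -/
noncomputable def replacePowers (w : ι → ℕ) [∀ i, NeZero (w i)] (G : ι → MvPolynomial ι A) :
    MvPolynomial ι A →ₗ[A] MvPolynomial ι A :=
  boxSum w G ∘ₗ (LinearEquiv.ofBijective _ boxSum_X_pow_bijective).symm.toLinearMap

theorem replacePowers_boxSum (G : ι → MvPolynomial ι A)
    (u : (∀ i, Fin (w i)) → MvPolynomial ι A) :
    replacePowers w G (boxSum w (fun i => X i ^ w i) u) = boxSum w G u :=
  congrArg (boxSum w G) (LinearEquiv.ofBijective_symm_apply_apply _ u)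

theorem boxSum_bijective_iff {G : ι → MvPolynomial ι A} :
    Function.Bijective (boxSum w G) ↔ Function.Bijective (replacePowers w G) :=
  (Function.Bijective.of_comp_iff _ (LinearEquiv.bijective _)).symm

theorem replacePowers_mul_aeval (G : ι → MvPolynomial ι A) (q F : MvPolynomial ι A) :
    replacePowers w G (q * aeval (fun i => X i ^ w i) F) = replacePowers w G q * aeval G F := by
  obtain ⟨u, rfl⟩ := (boxSum_X_pow_bijective (w := w)).2 q
  rw [← boxSum_mul, replacePowers_boxSum, replacePowers_boxSum, boxSum_mul]

theorem replacePowers_monomial (G : ι → MvPolynomial ι A) (α : ι →₀ ℕ) :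
    replacePowers w G (monomial α 1) = monomial (boxExponent (exponentDivMod w α).1) 1 *
      ∏ i, G i ^ (exponentDivMod w α).2 i := by
  have hα : boxSum w (fun i => (X i : MvPolynomial ι A) ^ w i)
      (Pi.single (exponentDivMod w α).1 (monomial (exponentDivMod w α).2 1)) = monomial α 1 := by
    rw [boxSum_single, aeval_X_pow_monomial, monomial_mul, one_mul]
    exact congrArg (monomial · 1) ((exponentDivMod w).symm_apply_apply α)
  rw [← hα, replacePowers_boxSum, boxSum_single, aeval_monomial, (algebraMap A _).map_one,
    one_mul, Finsupp.prod_fintype _ _ fun i => pow_zero _]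

theorem replacePowers_X_pow :
    replacePowers w (fun i => (X i : MvPolynomial ι A) ^ w i) = LinearMap.id :=
  LinearMap.ext fun q => by
    obtain ⟨u, rfl⟩ := (boxSum_X_pow_bijective (w := w)).2 q
    exact replacePowers_boxSum _ u

end BoxBasis

section LeadingForms

variable (ι A : Type*) [CommRing A]

/-- The polynomials of total degree less than `d`. -/
noncomputable abbrev degreeLT (d : ℕ) : Submodule A (MvPolynomial ι A) :=
  restrictSupport A {γ | γ.degree < d}

/-- The pairs of polynomials of total degree at most `d` with the same component of degree `d`. -/
noncomputable def leadingPairs (d : ℕ) : Submodule A (MvPolynomial ι A × MvPolynomial ι A) :=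
  (degreeLT ι A (d + 1)).comap (.fst A _ _) ⊓ (degreeLT ι A d).comap (.fst A _ _ - .snd A _ _)

variable {ι A}

theorem mem_leadingPairs {d : ℕ} {x : MvPolynomial ι A × MvPolynomial ι A} :
    x ∈ leadingPairs ι A d ↔ x.1 ∈ degreeLT ι A (d + 1) ∧ x.1 - x.2 ∈ degreeLT ι A d :=
  Iff.rfl

theorem degreeLT_mono {d e : ℕ} (h : d ≤ e) : degreeLT ι A d ≤ degreeLT ι A e :=
  restrictSupport_mono A fun _ hγ => lt_of_lt_of_le hγ h

theorem leadingPairs_mono {d e : ℕ} (h : d ≤ e) : leadingPairs ι A d ≤ leadingPairs ι A e :=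
  inf_le_inf (Submodule.comap_mono (degreeLT_mono (Nat.succ_le_succ h)))
    (Submodule.comap_mono (degreeLT_mono h))

theorem monomial_mem_degreeLT {γ : ι →₀ ℕ} {d : ℕ} (h : γ.degree < d) (c : A) :
    monomial γ c ∈ degreeLT ι A d :=
  (monomial_mem_restrictSupport A).2 (.inl h)

theorem degreeLT_le {d : ℕ} {M : Submodule A (MvPolynomial ι A)}
    (h : ∀ γ : ι →₀ ℕ, γ.degree < d → monomial γ 1 ∈ M) : degreeLT ι A d ≤ M := by
  rw [degreeLT, restrictSupport_eq_span, Submodule.span_le]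
  rintro _ ⟨γ, hγ, rfl⟩
  exact h γ hγ

theorem mul_mem_degreeLT {d e : ℕ} {p q : MvPolynomial ι A} (hp : p ∈ degreeLT ι A (d + 1))
    (hq : q ∈ degreeLT ι A e) : p * q ∈ degreeLT ι A (d + e) := by
  have hpq := Submodule.mul_mem_mul hp hq
  rw [← restrictSupport_add] at hpq
  refine restrictSupport_mono A ?_ hpq
  rintro _ ⟨γ, hγ : γ.degree < d + 1, δ, hδ : δ.degree < e, rfl⟩
  change (γ + δ).degree < d + e
  rw [map_add]
  lia

instance : SetLike.GradedMonoid (leadingPairs ι A) where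
  one_mem := by
    refine mem_leadingPairs.2 ⟨monomial_mem_degreeLT (γ := 0) (by simp) 1, ?_⟩
    rw [Prod.fst_one, Prod.snd_one, sub_self]
    exact zero_mem _
  mul_mem d e x y hx hy := by
    obtain ⟨hx₁, hx₂⟩ := mem_leadingPairs.1 hx
    obtain ⟨hy₁, hy₂⟩ := mem_leadingPairs.1 hy
    have hx₃ : x.2 ∈ degreeLT ι A (d + 1) := by
      simpa only [sub_sub_cancel] using sub_mem hx₁ (degreeLT_mono d.le_succ hx₂)
    refine mem_leadingPairs.2 ⟨mul_mem_degreeLT (e := e + 1) hx₁ hy₁, ?_⟩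
    rw [Prod.fst_mul, Prod.snd_mul,
      show x.1 * y.1 - x.2 * y.2 = y.1 * (x.1 - x.2) + x.2 * (y.1 - y.2) by ring]
    refine add_mem ?_ (mul_mem_degreeLT hx₃ hy₂)
    rw [add_comm d]
    exact mul_mem_degreeLT hy₁ hx₂

theorem mem_degreeLT_of_isHomogeneous {p : MvPolynomial ι A} {d : ℕ} (hp : p.IsHomogeneous d) :
    p ∈ degreeLT ι A (d + 1) := by
  refine (mem_restrictSupport_iff A).2 fun γ hγ => Nat.lt_succ_of_le (Eq.le ?_)
  by_contra h
  exact mem_support_iff.1 hγ (hp.coeff_eq_zero h)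

theorem exists_mem_degreeLT (p : MvPolynomial ι A) : ∃ d, p ∈ degreeLT ι A d :=
  ⟨p.support.sup Finsupp.degree + 1, (mem_restrictSupport_iff A).2 fun _ hγ =>
    Nat.lt_succ_of_le (Finset.le_sup hγ)⟩

variable [Fintype ι] [DecidableEq ι] {w : ι → ℕ} [∀ i, NeZero (w i)] {G g : ι → MvPolynomial ι A}

theorem replacePowers_mem_leadingPairs (h : ∀ i, (G i, g i) ∈ leadingPairs ι A (w i)) {d : ℕ}
    {q : MvPolynomial ι A} (hq : q ∈ degreeLT ι A (d + 1)) :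
    (replacePowers w G q, replacePowers w g q) ∈ leadingPairs ι A d := by
  suffices degreeLT ι A (d + 1) ≤
      (leadingPairs ι A d).comap ((replacePowers w G).prod (replacePowers w g)) from this hq
  refine degreeLT_le fun γ hγ => leadingPairs_mono (Nat.le_of_lt_succ hγ) ?_
  let β := boxExponent (exponentDivMod w γ).1
  have hβ : (monomial β 1, monomial β 1) ∈ leadingPairs ι A β.degree :=
    mem_leadingPairs.2 ⟨monomial_mem_degreeLT β.degree.lt_succ_self 1, by simp⟩
  have hprod := SetLike.mul_mem_graded hβ <| SetLike.prod_pow_mem_graded (leadingPairs ι A) w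
    (fun i => (G i, g i)) (exponentDivMod w γ).2 (F := Finset.univ) fun i _ => h i
  rw [show γ.degree = _ from degree_eq_add_sum_exponentDivMod (w := w) γ]
  refine (congrArg (· ∈ _) (Prod.ext ?_ ?_)).mpr hprod
  · simp only [LinearMap.prod_apply, Function.prod_apply, replacePowers_monomial, Prod.fst_mul,
      Prod.fst_prod, Prod.pow_fst, β]
  · simp only [LinearMap.prod_apply, Function.prod_apply, replacePowers_monomial, Prod.snd_mul,
      Prod.snd_prod, Prod.pow_snd, β]

theorem replacePowers_mem_degreeLT (h : ∀ i, (G i, g i) ∈ leadingPairs ι A (w i)) {d : ℕ}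
    {q : MvPolynomial ι A} (hq : q ∈ degreeLT ι A d) : replacePowers w G q ∈ degreeLT ι A d := by
  rcases d with _ | d
  · rw [(degreeLT_le (M := ⊥) fun γ hγ => absurd hγ γ.degree.not_lt_zero) hq, map_zero]
    exact zero_mem _
  · exact (mem_leadingPairs.1 (replacePowers_mem_leadingPairs h hq)).1

theorem degreeLT_le_map_replacePowers_of_leadingPairs
    (h : ∀ i, (G i, g i) ∈ leadingPairs ι A (w i)) {d : ℕ}
    (hg : ∀ e ≤ d, degreeLT ι A e ≤ (degreeLT ι A e).map (replacePowers w g)) :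
    degreeLT ι A d ≤ (degreeLT ι A d).map (replacePowers w G) := by
  induction d with
  | zero => exact degreeLT_le fun γ hγ => absurd hγ γ.degree.not_lt_zero
  | succ d ih =>
    intro p hp
    obtain ⟨q, hq, rfl⟩ := hg (d + 1) le_rfl hp
    obtain ⟨q', hq', hqq'⟩ := ih (fun e he => hg e (he.trans d.le_succ))
      (mem_leadingPairs.1 (replacePowers_mem_leadingPairs h hq)).2
    refine ⟨q - q', sub_mem hq (degreeLT_mono d.le_succ hq'), ?_⟩
    rw [map_sub, hqq', sub_sub_cancel]

theorem X_mul_mem_map_replacePowers {D : ℕ} (hD : ∑ i, w i + 2 ≤ D)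
    (hG : ∀ d ≤ D, degreeLT ι A d ≤ (degreeLT ι A d).map (replacePowers w G)) {d : ℕ} (i : ι)
    {q : MvPolynomial ι A} (hq : q ∈ (degreeLT ι A d).map (replacePowers w G)) :
    X i * q ∈ (degreeLT ι A (d + 1)).map (replacePowers w G) := by
  suffices degreeLT ι A d ≤ ((degreeLT ι A (d + 1)).map (replacePowers w G)).comap
      (LinearMap.mulLeft A (X i) ∘ₗ replacePowers w G) by
    obtain ⟨p, hp, rfl⟩ := hq
    exact this hp
  refine degreeLT_le fun γ hγ => ?_
  set β := boxExponent (exponentDivMod w γ).1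
  set δ := (exponentDivMod w γ).2
  have hdeg : γ.degree = β.degree + ∑ i, δ i * w i := degree_eq_add_sum_exponentDivMod γ
  have hβw : β.degree ≤ ∑ i, w i := by
    rw [Finsupp.degree_eq_sum]
    exact Finset.sum_le_sum fun i _ => ((exponentDivMod w γ).1 i).2.le
  obtain ⟨p, hp, hpβ⟩ : monomial (.single i 1 + β) 1 ∈
      (degreeLT ι A (β.degree + 2)).map (replacePowers w G) :=
    hG _ (by lia) (monomial_mem_degreeLT (by rw [map_add, Finsupp.degree_single]; lia) 1)
  have hδdeg : aeval (fun i => X i ^ w i) (monomial δ (1 : A)) ∈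
      degreeLT ι A (∑ i, δ i * w i + 1) := by
    rw [aeval_X_pow_monomial]
    refine monomial_mem_degreeLT (Nat.lt_succ_of_le (Eq.le ?_)) 1
    rw [Finsupp.degree_eq_sum]
    exact Finset.sum_congr rfl fun i _ => mul_comm _ _
  refine ⟨p * aeval (fun i => X i ^ w i) (monomial δ (1 : A)), ?_, ?_⟩
  · rw [mul_comm]
    exact degreeLT_mono (by lia) (mul_mem_degreeLT hδdeg hp)
  · rw [replacePowers_mul_aeval, hpβ, LinearMap.comp_apply, LinearMap.mulLeft_apply,
      replacePowers_monomial, aeval_monomial, (algebraMap A _).map_one, one_mul,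
      Finsupp.prod_fintype _ _ fun i => pow_zero _, ← mul_assoc, X, monomial_mul, one_mul]

theorem degreeLT_le_map_replacePowers {D : ℕ} (hD : ∑ i, w i + 2 ≤ D)
    (hG : ∀ d ≤ D, degreeLT ι A d ≤ (degreeLT ι A d).map (replacePowers w G)) (d : ℕ) :
    degreeLT ι A d ≤ (degreeLT ι A d).map (replacePowers w G) := by
  induction d with
  | zero => exact hG 0 D.zero_le
  | succ d ih =>
    refine degreeLT_le fun γ hγ => ?_
    rcases eq_or_ne γ 0 with rfl | hγ0
    · exact Submodule.map_mono (degreeLT_mono (Nat.le_add_left 1 d))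
        (hG 1 (by lia) (monomial_mem_degreeLT (by simp) 1))
    · obtain ⟨i, hi⟩ := Finsupp.support_nonempty_iff.2 hγ0
      obtain ⟨γ', rfl⟩ : ∃ γ', γ = .single i 1 + γ' :=
        exists_add_of_le (Finsupp.single_le_iff.2
          (Nat.one_le_iff_ne_zero.2 (Finsupp.mem_support_iff.1 hi)))
      have hmul := X_mul_mem_map_replacePowers hD hG i
        (ih (monomial_mem_degreeLT (γ := γ') (by
          rw [map_add, Finsupp.degree_single] at hγ; lia) 1))
      rwa [X, monomial_mul, one_mul] at hmul

theorem replacePowers_bijective (h : ∀ i, (G i, g i) ∈ leadingPairs ι A (w i))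
    (hg : ∀ d ≤ ∑ i, w i + 2, degreeLT ι A d ≤ (degreeLT ι A d).map (replacePowers w g)) :
    Function.Bijective (replacePowers w G) := by
  have hG := degreeLT_le_map_replacePowers le_rfl fun d hd =>
    degreeLT_le_map_replacePowers_of_leadingPairs h fun e he => hg e (he.trans hd)
  refine ⟨(injective_iff_map_eq_zero _).2 fun q hq => ?_, fun q => ?_⟩
  · obtain ⟨d, hqd⟩ := exists_mem_degreeLT q
    have : Finite {γ : ι →₀ ℕ | γ.degree < d} := Finsupp.finite_of_degree_lt d
    have : Module.Finite A (degreeLT ι A d) := .of_basis (basisRestrictSupport A _)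
    let Φ : degreeLT ι A d →ₗ[A] degreeLT ι A d :=
      (replacePowers w G).restrict fun _ hp => replacePowers_mem_degreeLT h hp
    have hΦ : Function.Surjective Φ := fun p => by
      obtain ⟨q, hq, hqp⟩ := hG d p.2
      exact ⟨⟨q, hq⟩, Subtype.ext hqp⟩
    refine congrArg Subtype.val (OrzechProperty.injective_of_surjective_endomorphism Φ hΦ
      (a₁ := ⟨q, hqd⟩) (a₂ := 0) ?_)
    rw [map_zero]
    exact Subtype.ext hq
  · obtain ⟨d, hqd⟩ := exists_mem_degreeLT q
    obtain ⟨p, -, hp⟩ := hG d hqd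
    exact ⟨p, hp⟩

end LeadingForms

section Discriminant

variable {ι A A' : Type*} [Fintype ι] [CommRing A] [CommRing A'] {w : ι → ℕ}

/-- The system of forms of degrees `w` with the given coefficients. -/
noncomputable def formOfCoeffs (x : FormIndex w → A) (i : ι) : MvPolynomial ι A :=
  ∑ γ : {γ : ι →₀ ℕ // γ.degree = w i}, monomial γ.1 (x ⟨i, γ⟩)

theorem map_formOfCoeffs (φ : A →+* A') (x : FormIndex w → A) (i : ι) :
    map φ (formOfCoeffs x i) = formOfCoeffs (φ ∘ x) i := by
  simp only [formOfCoeffs, map_sum, map_monomial, Function.comp_apply]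

theorem formOfCoeffs_coeff {g : ι → MvPolynomial ι A} (hg : ∀ i, (g i).IsHomogeneous (w i)) :
    formOfCoeffs (fun p : FormIndex w => coeff p.2.1 (g p.1)) = g := by
  classical
  ext i δ
  rw [formOfCoeffs, coeff_sum]
  simp only [coeff_monomial]
  by_cases hδ : δ.degree = w i
  · rw [Fintype.sum_eq_single ⟨δ, hδ⟩ fun γ hγ => if_neg fun h => hγ (Subtype.ext h), if_pos rfl]
  · rw [(hg i).coeff_eq_zero hδ]
    exact Finset.sum_eq_zero fun γ _ => if_neg fun h => hδ (by rw [← h, γ.2])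

variable [DecidableEq ι] [∀ i, NeZero (w i)] {g : ι → MvPolynomial ι A}

noncomputable instance (d : ℕ) : Fintype {γ : ι →₀ ℕ // γ.degree < d} :=
  (Finsupp.finite_of_degree_lt d).fintype

/-- The matrix of `replacePowers w g` on the polynomials of degree less than `d`. -/
noncomputable def replacePowersMatrix (w : ι → ℕ) [∀ i, NeZero (w i)] (g : ι → MvPolynomial ι A)
    (d : ℕ) : Matrix {γ : ι →₀ ℕ // γ.degree < d} {γ : ι →₀ ℕ // γ.degree < d} A :=
  .of fun γ δ => coeff γ.1 (replacePowers w g (monomial δ.1 1))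

theorem mapMatrix_replacePowersMatrix (φ : A →+* A') (d : ℕ) :
    φ.mapMatrix (replacePowersMatrix w g d) = replacePowersMatrix w (fun i => map φ (g i)) d := by
  ext γ δ
  simp only [replacePowersMatrix, RingHom.mapMatrix_apply, Matrix.map_apply, Matrix.of_apply,
    ← coeff_map, replacePowers_monomial, map_mul, map_monomial, map_one, map_prod, map_pow]

theorem degreeLT_le_map_of_isUnit_det {d : ℕ}
    (hg : ∀ i, g i ∈ degreeLT ι A (w i + 1)) (h : IsUnit (replacePowersMatrix w g d).det) :
    degreeLT ι A d ≤ (degreeLT ι A d).map (replacePowers w g) := by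
  intro q hq
  have hg' (i : ι) : (g i, g i) ∈ leadingPairs ι A (w i) :=
    mem_leadingPairs.2 ⟨hg i, by simp⟩
  let c := (replacePowersMatrix w g d)⁻¹.mulVec fun γ => coeff γ.1 q
  have hp : ∑ δ, c δ • monomial δ.1 1 ∈ degreeLT ι A d :=
    sum_mem fun δ _ => Submodule.smul_mem _ _ (monomial_mem_degreeLT δ.2 1)
  refine ⟨_, hp, ?_⟩
  ext γ
  by_cases hγ : γ.degree < d
  · have hc : (replacePowersMatrix w g d).mulVec c = fun γ => coeff γ.1 q := by
      rw [Matrix.mulVec_mulVec, Matrix.mul_nonsing_inv _ h, Matrix.one_mulVec]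
    refine Eq.trans ?_ (congrFun hc ⟨γ, hγ⟩)
    simp only [map_sum, map_smul, coeff_sum, coeff_smul, Matrix.mulVec, dotProduct,
      replacePowersMatrix, Matrix.of_apply, smul_eq_mul, mul_comm]
  · have hcoeff {p : MvPolynomial ι A} (hp : p ∈ degreeLT ι A d) : coeff γ p = 0 :=
      notMem_support_iff.1 fun h => hγ ((mem_restrictSupport_iff A).1 hp h)
    rw [hcoeff hq, hcoeff (replacePowers_mem_degreeLT hg' hp)]

theorem exists_discriminant (K : Type*) [Field K] (w : ι → ℕ) [∀ i, NeZero (w i)] :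
    ∃ Δ : MvPolynomial (FormIndex w) K, Δ ≠ 0 ∧ ∀ x, eval x Δ ≠ 0 →
      ∀ d ≤ ∑ i, w i + 2, IsUnit (replacePowersMatrix w (formOfCoeffs x) d).det := by
  let Δ : MvPolynomial (FormIndex w) K :=
    ∏ d ∈ Finset.range (∑ i, w i + 3), (replacePowersMatrix w (formOfCoeffs X) d).det
  have heval (x : FormIndex w → K) : eval x Δ =
      ∏ d ∈ Finset.range (∑ i, w i + 3), (replacePowersMatrix w (formOfCoeffs x) d).det := by
    simp only [Δ, map_prod, RingHom.map_det, mapMatrix_replacePowersMatrix, map_formOfCoeffs]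
    simp only [Function.comp_def, eval_X]
  refine ⟨Δ, fun hΔ => ?_, fun x hx d hd => ?_⟩
  · have hpow := heval fun p => coeff p.2.1 (X p.1 ^ w p.1)
    have hX (i : ι) : (X i ^ w i : MvPolynomial ι K).IsHomogeneous (w i) := by
      simpa only [one_mul] using (isHomogeneous_X K i).pow (w i)
    rw [formOfCoeffs_coeff hX, hΔ, map_zero] at hpow
    refine one_ne_zero (hpow.trans (Finset.prod_eq_one fun d _ => ?_)).symm
    rw [← Matrix.det_one (n := {γ : ι →₀ ℕ // γ.degree < d})]
    congr 1
    ext γ δ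
    rw [replacePowersMatrix, replacePowers_X_pow, Matrix.of_apply, LinearMap.id_apply,
      coeff_monomial, Matrix.one_apply]
    simp only [Subtype.ext_iff, eq_comm]
  · rw [heval, Finset.prod_ne_zero_iff] at hx
    exact (hx d (Finset.mem_range.2 (Nat.lt_succ_of_le hd))).isUnit

end Discriminant

section Translation

variable {K σ ι : Type*} [CommRing K] [Fintype ι]

/-- The translation `xₖ ↦ xₖ + ∑ⱼ vⱼₖ Xⱼ` by new variables. -/
noncomputable def translation (v : ι → σ → K) :
    MvPolynomial σ K →ₐ[K] MvPolynomial ι (MvPolynomial σ K) :=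
  aeval fun k => C (X k) + ∑ j, C (C (v j k)) * X j

theorem constantCoeff_translation (v : ι → σ → K) (f : MvPolynomial σ K) :
    constantCoeff (translation v f) = f := by
  suffices (constantCoeff.comp (translation v).toRingHom) = .id _ from DFunLike.congr_fun this f
  ext k <;> simp [translation, MvPolynomial.algebraMap_apply]

theorem translation_mem_leadingPairs (v : ι → σ → K) {f : MvPolynomial σ K} {e : ℕ}
    (hf : f.IsHomogeneous e) :
    (translation v f, map C (linearSubstitution v f)) ∈ leadingPairs ι (MvPolynomial σ K) e := by
  let y (k : σ) : MvPolynomial ι (MvPolynomial σ K) × MvPolynomial ι (MvPolynomial σ K) :=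
    (C (X k) + ∑ j, C (C (v j k)) * X j, ∑ j, C (C (v j k)) * X j)
  have hy (k : σ) : y k ∈ leadingPairs ι (MvPolynomial σ K) 1 := by
    have hC (a : MvPolynomial σ K) : C a ∈ degreeLT ι (MvPolynomial σ K) 1 :=
      monomial_mem_degreeLT (γ := 0) (by simp) a
    refine mem_leadingPairs.2 ⟨add_mem (degreeLT_mono one_le_two (hC _)) (sum_mem fun j _ => ?_),
      ?_⟩
    · rw [C_mul_X_eq_monomial]
      exact monomial_mem_degreeLT (by simp) _
    · rw [add_sub_cancel_right]
      exact hC _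
  have hmem := aeval_mem_of_isWeightedHomogeneous hy
    (IsHomogeneous.map hf (algebraMap K (MvPolynomial σ K)))
  rw [aeval_map_algebraMap] at hmem
  have hprod : aeval y f = (translation v f, map C (linearSubstitution v f)) := by
    suffices aeval y = (translation v).prod
        ((mapAlgHom (Algebra.ofId K (MvPolynomial σ K))).comp (linearSubstitution v)) from
      DFunLike.congr_fun this f
    ext1 k
    refine Prod.ext ?_ ?_
    · simp [y, translation]
    · simp [y, linearSubstitution, algebraMap_eq]
  rwa [hprod] at hmem

theorem isHomogeneous_linearSubstitution (v : ι → σ → K) {f : MvPolynomial σ K} {e : ℕ}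
    (hf : f.IsHomogeneous e) : (linearSubstitution v f).IsHomogeneous e := by
  have hv (k : σ) : (∑ j, C (v j k) * X j : MvPolynomial ι K).IsHomogeneous 1 :=
    .sum _ _ _ fun j _ => (isHomogeneous_X K j).C_mul (v j k)
  have h := hf.aeval _ hv
  rwa [one_mul] at h

end Translation

section GenericTranslation

variable {α : Type*} {U : Ultrafilter α} {K σ ι : Type*} [Field K] [CharZero K] [Fintype ι]
  [DecidableEq ι] {w : ι → ℕ}

theorem eventually_exists_boxSum_translation_bijective {a : ι → α → MvPolynomial σ K}
    (ha : IsIndecomposableFamily (homogeneousGerms (U : Filter α) σ K) w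
      fun i => (a i : Germ (U : Filter α) (MvPolynomial σ K))) :
    ∀ᶠ n in U, ∃ v : ι → σ → K, Function.Bijective (boxSum w fun i => translation v (a i n)) := by
  have (i : ι) : NeZero (w i) := ⟨(ha.pos i).ne'⟩
  obtain ⟨Δ, hΔ, hdet⟩ := exists_discriminant K w
  have hhom : ∀ᶠ n in U, ∀ i, (a i n).IsHomogeneous (w i) :=
    eventually_all.2 fun i => coe_mem_homogeneousGerms.1 (ha.mem i)
  filter_upwards [hhom, eventually_exists_eval_coeff_ne_zero ha hΔ] with n hn ⟨v, hv⟩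
  refine ⟨v, boxSum_bijective_iff.2 (replacePowers_bijective
    (fun i => translation_mem_leadingPairs v (hn i)) fun d hd => ?_)⟩
  have hlin (i : ι) := isHomogeneous_linearSubstitution v (hn i)
  have hunit := hdet _ hv d hd
  rw [formOfCoeffs_coeff (g := fun i => linearSubstitution v (a i n)) hlin] at hunit
  refine degreeLT_le_map_of_isUnit_det (fun i => ?_) ?_
  · exact mem_degreeLT_of_isHomogeneous ((hlin i).map C)
  · rw [← mapMatrix_replacePowersMatrix, ← RingHom.map_det]
    exact hunit.map C

end GenericTranslation

section TopCoefficients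

variable (A B : Type*) [CommRing A] [CommRing B] [Algebra A B]

/-- The pairs `(p, b)` where `p` has degree at most `e` and `b` is its coefficient of degree `e`. -/
def topCoeffPairs (e : ℕ) : Submodule A (B[X] × B) where
  carrier := {x | x.1.natDegree ≤ e ∧ x.1.coeff e = x.2}
  zero_mem' := ⟨Nat.zero_le e, rfl⟩
  add_mem' hx hy := ⟨Polynomial.natDegree_add_le_of_degree_le hx.1 hy.1, by
    rw [Prod.fst_add, Polynomial.coeff_add, hx.2, hy.2, Prod.snd_add]⟩
  smul_mem' c x hx := ⟨(Polynomial.natDegree_smul_le c x.1).trans hx.1, by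
    rw [Prod.smul_fst, Polynomial.coeff_smul, hx.2, Prod.smul_snd]⟩

variable {A B}

theorem mem_topCoeffPairs {e : ℕ} {x : B[X] × B} :
    x ∈ topCoeffPairs A B e ↔ x.1.natDegree ≤ e ∧ x.1.coeff e = x.2 :=
  Iff.rfl

instance : SetLike.GradedMonoid (topCoeffPairs A B) where
  one_mem := ⟨Polynomial.natDegree_one.le, Polynomial.coeff_one_zero⟩
  mul_mem d e x y hx hy := ⟨Polynomial.natDegree_mul_le_of_le hx.1 hy.1, by
    rw [Prod.fst_mul, Polynomial.coeff_mul_add_eq_of_natDegree_le hx.1 hy.1, hx.2, hy.2,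
      Prod.snd_mul]⟩

end TopCoefficients

section Shear

variable {A : Type*} [CommRing A] {N : ℕ}

/-- The isomorphism `A[X₀, …, X_N] ≃ A[X₀, …, X_{N-1}][X]` sending `X₀` to `X` and `Xᵢ₊₁` to
`Xᵢ + cᵢ X`. -/
noncomputable def shear (c : Fin N → A) :
    MvPolynomial (Fin (N + 1)) A ≃ₐ[A] (MvPolynomial (Fin N) A)[X] :=
  .trans
    (.ofAlgHom (aeval (Fin.cons (X 0) fun i => X i.succ + C (c i) * X 0))
      (aeval (Fin.cons (X 0) fun i => X i.succ - C (c i) * X 0))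
      (algHom_ext fun i => i.cases (by simp) fun i => by simp [algHom_C])
      (algHom_ext fun i => i.cases (by simp) fun i => by simp [algHom_C]))
    (finSuccEquiv A N)

theorem shear_C (c : Fin N → A) (a : A) : shear c (C a) = Polynomial.C (C a) :=
  (shear c).commutes a

theorem shear_X_zero (c : Fin N → A) : shear c (X 0) = Polynomial.X := by
  simp [shear, finSuccEquiv_X_zero]

theorem shear_X_succ (c : Fin N → A) (i : Fin N) :
    shear c (X i.succ) = Polynomial.C (X i) + Polynomial.C (C (c i)) * Polynomial.X := by
  have hC : finSuccEquiv A N (C (c i)) = Polynomial.C (C (c i)) := (finSuccEquiv A N).commutes (c i)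
  simp [shear, finSuccEquiv_X_zero, finSuccEquiv_X_succ, hC]

theorem shear_mem_topCoeffPairs (c : Fin N → A) {f : MvPolynomial (Fin (N + 1)) A} {e : ℕ}
    (hf : f.IsHomogeneous e) :
    (shear c f, C (aeval (Fin.cons 1 c : Fin (N + 1) → A) f)) ∈
      topCoeffPairs A (MvPolynomial (Fin N) A) e := by
  let y (i : Fin (N + 1)) := (shear c (X i), C (σ := Fin N) ((Fin.cons 1 c : Fin (N + 1) → A) i))
  have hy (i) : y i ∈ topCoeffPairs A (MvPolynomial (Fin N) A) 1 := by
    refine mem_topCoeffPairs.2 ?_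
    refine i.cases ?_ fun i => ?_
    · simp [y, shear_X_zero, Polynomial.natDegree_X_le]
    · simp only [y, shear_X_succ, Fin.cons_succ]
      refine ⟨by compute_degree, by simp⟩
  convert aeval_mem_of_isWeightedHomogeneous (w := 1) hy hf using 1
  refine Prod.ext ?_ ?_
  · suffices (shear c).toAlgHom = (AlgHom.fst A _ _).comp (aeval y) from DFunLike.congr_fun this f
    ext1 i
    simp [y]
  · suffices (Algebra.ofId A _).comp (aeval (Fin.cons 1 c : Fin (N + 1) → A)) =
      (AlgHom.snd A _ _).comp (aeval y) from DFunLike.congr_fun this f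
    ext1 i
    simp [y]

theorem homogeneousComponent_totalDegree_ne_zero {σ : Type*} {g : MvPolynomial σ A} (hg : g ≠ 0) :
    homogeneousComponent g.totalDegree g ≠ 0 := by
  obtain ⟨γ, hγ, hdeg⟩ := g.support.exists_mem_eq_sup (support_nonempty.2 hg) fun γ => γ.degree
  refine ne_zero_iff.2 ⟨γ, ?_⟩
  rw [coeff_homogeneousComponent, if_pos]
  · exact mem_support_iff.1 hγ
  · exact hdeg.symm

theorem exists_aeval_cons_one_ne_zero {K : Type*} [Field K] [Infinite K] {d : ℕ}
    {g : MvPolynomial (Fin (N + 1)) K} (hg : g.IsHomogeneous d) (hg₀ : g ≠ 0) :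
    ∃ c : Fin N → K, aeval (Fin.cons 1 c : Fin (N + 1) → K) g ≠ 0 := by
  by_contra! h
  refine mul_ne_zero (X_ne_zero 0) hg₀ (MvPolynomial.funext fun z => ?_)
  rw [map_mul, eval_X, map_zero]
  by_cases hz : z 0 = 0
  · rw [hz, zero_mul]
  · have hcons : z = fun i => (Fin.cons 1 fun i => z i.succ / z 0 : Fin (N + 1) → K) i * z 0 :=
      _root_.funext fun i => i.cases (by simp) fun i => by simp [hz]
    rw [← coe_aeval_eq_eval, RingHom.coe_coe, hcons, aeval_mul_of_isHomogeneous _ _ hg, h, zero_mul,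
      mul_zero]

theorem exists_isUnit_leadingCoeff_shear {K : Type*} [Field K] [Infinite K]
    {g : MvPolynomial (Fin (N + 1)) K} (hg : g ≠ 0) :
    ∃ c : Fin N → K, IsUnit (shear c g).leadingCoeff := by
  set d := g.totalDegree
  obtain ⟨c, hc⟩ := exists_aeval_cons_one_ne_zero (homogeneousComponent_isHomogeneous d g)
    (homogeneousComponent_totalDegree_ne_zero hg)
  have hmem (e : ℕ) := shear_mem_topCoeffPairs c (homogeneousComponent_isHomogeneous e g)
  have hsum : ∑ e ∈ Finset.range (d + 1), shear c (homogeneousComponent e g) = shear c g := by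
    rw [← map_sum, sum_homogeneousComponent]
  have hle : (shear c g).natDegree ≤ d := by
    rw [← hsum]
    exact Polynomial.natDegree_sum_le_of_forall_le _ _ fun e he =>
      (hmem e).1.trans (Nat.lt_succ_iff.1 (Finset.mem_range.1 he))
  have hcoeff : (shear c g).coeff d = C (aeval (Fin.cons 1 c : Fin (N + 1) → K)
      (homogeneousComponent d g)) := by
    rw [← hsum, Finset.sum_range_succ, Polynomial.coeff_add, (hmem d).2, Polynomial.finsetSum_coeff,
      Finset.sum_eq_zero fun e he => ?_, zero_add]
    exact Polynomial.coeff_eq_zero_of_natDegree_lt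
      ((hmem e).1.trans_lt (Finset.mem_range.1 he))
  refine ⟨c, ?_⟩
  have hunit : IsUnit ((shear c g).coeff d) := hcoeff ▸ (isUnit_iff_ne_zero.2 hc).map C
  rwa [Polynomial.leadingCoeff, hle.antisymm (Polynomial.le_natDegree_of_ne_zero hunit.ne_zero)]

end Shear

section FlatnessCriterion

theorem lift_lsmul_subtype_lTensor {R M M' : Type*} [CommRing R] [AddCommGroup M] [Module R M]
    [AddCommGroup M'] [Module R M'] (I : Ideal R) (f : M →ₗ[R] M') (z : I ⊗[R] M) :
    TensorProduct.lift (LinearMap.lsmul R M' ∘ₗ I.subtype) (f.lTensor I z) =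
      f (TensorProduct.lift (LinearMap.lsmul R M ∘ₗ I.subtype) z) := by
  induction z with
  | zero => simp only [map_zero]
  | add z z' hz hz' => simp only [map_add, hz, hz']
  | tmul i m => exact (map_smul f (i : R) m).symm

theorem flat_of_forall_exists_submodule {R M : Type*} [CommRing R] [AddCommGroup M] [Module R M]
    (h : ∀ g : R, g ≠ 0 → ∃ N : Submodule R M, Module.Flat R N ∧ (∀ m, ∃ q, m - g • q ∈ N) ∧
      ∀ m, g • m ∈ N → m ∈ N) : Module.Flat R M := by
  refine Module.Flat.iff_lift_lsmul_comp_subtype_injective.2 fun I hI => ?_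
  rw [injective_iff_map_eq_zero]
  intro z hz
  by_cases hbot : I = ⊥
  · subst hbot
    exact Subsingleton.elim _ _
  obtain ⟨g, hgI, hg⟩ := I.ne_bot_iff.1 hbot
  obtain ⟨N, hN, hsurj, hinj⟩ := h g hg
  have hquot (t : I ⊗[R] (M ⧸ N)) : ∃ p : M, t = ⟨g, hgI⟩ ⊗ₜ N.mkQ p := by
    induction t with
    | zero => exact ⟨0, by rw [map_zero, TensorProduct.tmul_zero]⟩
    | add t t' ht ht' =>
      obtain ⟨p, rfl⟩ := ht
      obtain ⟨p', rfl⟩ := ht'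
      exact ⟨p + p', by rw [map_add, TensorProduct.tmul_add]⟩
    | tmul i m =>
      obtain ⟨m, rfl⟩ := N.mkQ_surjective m
      obtain ⟨q, hq⟩ := hsurj m
      refine ⟨(i : R) • q, ?_⟩
      have hmq : N.mkQ m = g • N.mkQ q := (Submodule.Quotient.eq N).2 hq
      rw [hmq, map_smul, ← TensorProduct.smul_tmul, ← TensorProduct.smul_tmul]
      congr 1
      exact Subtype.ext (mul_comm g (i : R))
  have hzN : N.mkQ.lTensor I z = 0 := by
    obtain ⟨p, hp⟩ := hquot (N.mkQ.lTensor I z)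
    have hgp : N.mkQ (g • p) = 0 := by
      rw [← map_zero N.mkQ, ← hz, ← lift_lsmul_subtype_lTensor, hp, map_smul]
      rfl
    rw [hp, N.mkQ_apply, (Submodule.Quotient.mk_eq_zero N).2
      (hinj p ((Submodule.Quotient.mk_eq_zero N).1 hgp)), TensorProduct.tmul_zero]
  obtain ⟨t, rfl⟩ := (lTensor_exact I (LinearMap.exact_subtype_mkQ N) N.mkQ_surjective z).1 hzN
  rw [lift_lsmul_subtype_lTensor] at hz
  have ht := (injective_iff_map_eq_zero _).1
    (Module.Flat.iff_lift_lsmul_comp_subtype_injective.1 hN hI) t (N.subtype_injective hz)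
  rw [ht, map_zero]

theorem flat_of_forall_exists_comp_eq {A B : Type*} [CommRing A] [CommRing B] {f : A →+* B}
    (h : ∀ g ≠ 0, ∃ (S : Type _) (_ : CommRing S) (φ : A →+* S) (j : S →+* B),
      φ.Flat ∧ Function.Injective j ∧ j.comp φ = f ∧ (∀ b, ∃ q s, b = f g * q + j s) ∧
        ∀ b s, f g * b = j s → b ∈ j.range) : f.Flat := by
  algebraize [f]
  refine flat_of_forall_exists_submodule fun g hg => ?_
  obtain ⟨S, _, φ, j, hφ, hj, rfl, hsurj, hinj⟩ := h g hg
  algebraize [φ, j]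
  have : IsScalarTower A S B := .of_algebraMap_eq fun _ => rfl
  let jₗ := (IsScalarTower.toAlgHom A S B).toLinearMap
  refine ⟨jₗ.range, .of_linearEquiv (LinearEquiv.ofInjective jₗ hj).symm, fun b => ?_, fun b => ?_⟩
  · obtain ⟨q, s, hb⟩ := hsurj b
    exact ⟨q, s, (sub_eq_of_eq_add' hb).symm.trans (by rw [Algebra.smul_def]; rfl)⟩
  · rintro ⟨s, hs⟩
    obtain ⟨s', hs'⟩ := hinj b s ((Algebra.smul_def g b).symm.trans hs.symm)
    exact ⟨s', hs'⟩

end FlatnessCriterion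

section PolynomialGerms

variable {α R : Type*} {l : Filter α} [CommRing R]

/-- The canonical map from polynomials over germs to germs of polynomials. -/
noncomputable def polynomialGerm (l : Filter α) (R : Type*) [CommRing R] :
    (Germ l R)[X] →ₐ[Germ l R] Germ l R[X] :=
  Polynomial.aeval ((fun _ => Polynomial.X : α → R[X]) : Germ l R[X])

theorem polynomialGerm_X :
    polynomialGerm l R Polynomial.X = ((fun _ => Polynomial.X : α → R[X]) : Germ l R[X]) :=
  Polynomial.aeval_X _

theorem polynomialGerm_C (c : α → R) :
    polynomialGerm l R (Polynomial.C (c : Germ l R)) =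
      ((fun n => Polynomial.C (c n) : α → R[X]) : Germ l R[X]) :=
  (AlgHom.commutes _ _).trans (algebraMap_germ_coe c)

theorem polynomialGerm_C_mul_X_pow (c : α → R) (k : ℕ) :
    polynomialGerm l R (Polynomial.C (c : Germ l R) * Polynomial.X ^ k) =
      ((fun n => Polynomial.C (c n) * Polynomial.X ^ k : α → R[X]) : Germ l R[X]) := by
  rw [map_mul, map_pow, polynomialGerm_X, polynomialGerm_C]
  rfl

theorem polynomialGerm_sum (d : ℕ) (c : ℕ → α → R) :
    polynomialGerm l R (∑ k ∈ Finset.range d, Polynomial.C (c k : Germ l R) * Polynomial.X ^ k) =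
      ((fun n => ∑ k ∈ Finset.range d, Polynomial.C (c k n) * Polynomial.X ^ k : α → R[X]) :
        Germ l R[X]) := by
  simp only [map_sum, polynomialGerm_C_mul_X_pow, germ_coe_sum]

theorem mem_range_polynomialGerm {r : α → R[X]} {d : ℕ} (h : ∀ᶠ n in l, (r n).natDegree < d) :
    (r : Germ l R[X]) ∈ (polynomialGerm l R).range := by
  refine ⟨_, (polynomialGerm_sum d fun k n => (r n).coeff k).trans (Germ.coe_eq.2 ?_)⟩
  exact h.mono fun n hn => ((r n).as_sum_range_C_mul_X_pow' hn).symm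

theorem exists_polynomialGerm_eq_coe (p : (Germ l R)[X]) :
    ∃ r : α → R[X], polynomialGerm l R p = r ∧ (∀ n, (r n).natDegree ≤ p.natDegree) ∧
      ∀ k, p.coeff k = ((fun n => (r n).coeff k : α → R) : Germ l R) := by
  obtain ⟨a, ha⟩ := exists_germ_coe_eq p.coeff
  have ha (k) : p.coeff k = a k := (congrFun ha k).symm
  let r (n : α) := ∑ k ∈ Finset.range (p.natDegree + 1), Polynomial.C (a k n) * Polynomial.X ^ k
  have hr (n) : (r n).natDegree ≤ p.natDegree :=
    Polynomial.natDegree_sum_le_of_forall_le _ _ fun k hk =>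
      (Polynomial.natDegree_C_mul_X_pow_le _ k).trans (Nat.lt_succ_iff.1 (Finset.mem_range.1 hk))
  refine ⟨r, ?_, hr, fun k => ?_⟩
  · conv_lhs => rw [p.as_sum_range_C_mul_X_pow]
    simp only [ha, polynomialGerm_sum, r]
  · rcases lt_or_ge p.natDegree k with hk | hk
    · rw [Polynomial.coeff_eq_zero_of_natDegree_lt hk]
      exact Germ.coe_eq.2 <| .of_forall fun n =>
        (Polynomial.coeff_eq_zero_of_natDegree_lt ((hr n).trans_lt hk)).symm
    · rw [ha]
      refine Germ.coe_eq.2 <| .of_forall fun n => ?_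
      simp [r, Polynomial.finsetSum_coeff, Polynomial.coeff_X_pow, hk]

theorem polynomialGerm_injective : Function.Injective (polynomialGerm l R) := by
  refine (injective_iff_map_eq_zero _).2 fun p hp => ?_
  obtain ⟨r, hr, -, hcoeff⟩ := exists_polynomialGerm_eq_coe p
  ext k
  rw [hcoeff, Polynomial.coeff_zero]
  refine Germ.coe_eq.2 ((Germ.coe_eq.1 (hr.symm.trans hp)).mono fun n hn => ?_)
  exact congrArg (Polynomial.coeff · k) hn

theorem exists_polynomialGerm_eq_coe_of_monic {p : (Germ l R)[X]} (hp : p.Monic) :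
    ∃ r : α → R[X], polynomialGerm l R p = r ∧
      ∀ᶠ n in l, (r n).Monic ∧ (r n).natDegree ≤ p.natDegree := by
  obtain ⟨r, hr, hdeg, hcoeff⟩ := exists_polynomialGerm_eq_coe p
  refine ⟨r, hr, (Germ.coe_eq.1 ((hcoeff p.natDegree).symm.trans hp)).mono fun n hn => ⟨?_, hdeg n⟩⟩
  exact Polynomial.monic_of_natDegree_le_of_coeff_eq_one _ (hdeg n) hn

theorem exists_eq_polynomialGerm_mul_add_of_monic {p : (Germ l R)[X]} (hp : p.Monic)
    (b : Germ l R[X]) : ∃ q s, b = polynomialGerm l R p * q + polynomialGerm l R s := by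
  obtain ⟨r, hr, hmonic⟩ := exists_polynomialGerm_eq_coe_of_monic hp
  induction b using Germ.inductionOn with | _ b
  obtain ⟨s, hs⟩ := mem_range_polynomialGerm (l := l) (r := fun n => b n %ₘ r n)
    (hmonic.mono fun n hn =>
      Nat.lt_succ_of_le ((Polynomial.natDegree_modByMonic_le _ hn.1).trans hn.2))
  refine ⟨((fun n => b n /ₘ r n : α → R[X]) : Germ l R[X]), s, ?_⟩
  rw [hr, show polynomialGerm l R s = _ from hs]
  exact Germ.coe_eq.2 <| .of_forall fun n =>
    ((add_comm _ _).trans (Polynomial.modByMonic_add_div (b n) (r n))).symm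

theorem mem_range_polynomialGerm_of_monic_mul {p s : (Germ l R)[X]} (hp : p.Monic)
    {b : Germ l R[X]} (h : polynomialGerm l R p * b = polynomialGerm l R s) :
    b ∈ (polynomialGerm l R).range := by
  obtain ⟨r, hr, hmonic⟩ := exists_polynomialGerm_eq_coe_of_monic hp
  obtain ⟨t, ht, hdeg, -⟩ := exists_polynomialGerm_eq_coe s
  induction b using Germ.inductionOn with | _ b
  rw [hr, ht] at h
  refine mem_range_polynomialGerm (d := s.natDegree + 1) ?_
  filter_upwards [hmonic, Germ.coe_eq.1 h] with n hn hb
  refine Nat.lt_succ_of_le (le_trans ?_ (hdeg n))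
  rw [← show r n * b n = t n from hb]
  by_cases hb₀ : b n = 0
  · rw [hb₀, Polynomial.natDegree_zero]
    exact Nat.zero_le _
  · rw [hn.1.natDegree_mul' hb₀]
    exact Nat.le_add_left _ _

theorem exists_eq_polynomialGerm_mul_add {p : (Germ l R)[X]} (hp : IsUnit p.leadingCoeff)
    (b : Germ l R[X]) : ∃ q s, b = polynomialGerm l R p * q + polynomialGerm l R s := by
  obtain ⟨u, hu⟩ := hp.exists_left_inv
  obtain ⟨q, s, hb⟩ := exists_eq_polynomialGerm_mul_add_of_monic
    (Polynomial.monic_C_mul_of_mul_leadingCoeff_eq_one hu) b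
  exact ⟨polynomialGerm l R (Polynomial.C u) * q, s, by rw [hb, map_mul]; ring⟩

theorem mem_range_polynomialGerm_of_mul {p s : (Germ l R)[X]} (hp : IsUnit p.leadingCoeff)
    {b : Germ l R[X]} (h : polynomialGerm l R p * b = polynomialGerm l R s) :
    b ∈ (polynomialGerm l R).range := by
  obtain ⟨u, hu⟩ := hp.exists_left_inv
  refine mem_range_polynomialGerm_of_monic_mul (s := Polynomial.C u * s)
    (Polynomial.monic_C_mul_of_mul_leadingCoeff_eq_one hu) ?_
  rw [map_mul, map_mul, mul_assoc, h]

end PolynomialGerms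

section MvPolynomialGerms

variable {α K R : Type*} [Field K] [CommRing R] [Algebra K R]

/-- The canonical map from polynomials over germs of scalars to germs of polynomials. -/
noncomputable def mvPolynomialGerm (l : Filter α) (σ K R : Type*) [CommRing K] [CommRing R]
    [Algebra K R] : MvPolynomial σ (Germ l K) →ₐ[Germ l K] Germ l (MvPolynomial σ R) :=
  aeval fun i => ((fun _ => X i : α → MvPolynomial σ R) : Germ l (MvPolynomial σ R))

theorem mvPolynomialGerm_X {l : Filter α} {σ : Type*} (i : σ) :
    mvPolynomialGerm l σ K R (X i) =
      ((fun _ => X i : α → MvPolynomial σ R) : Germ l (MvPolynomial σ R)) :=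
  aeval_X _ i

theorem mvPolynomialGerm_C {l : Filter α} {σ : Type*} (c : α → K) :
    mvPolynomialGerm l σ K R (C (c : Germ l K)) =
      ((fun n => C (algebraMap K R (c n)) : α → MvPolynomial σ R) : Germ l (MvPolynomial σ R)) :=
  (AlgHom.commutes _ _).trans (algebraMap_germ_coe c)

theorem germRingHom_shear_comp {l : Filter α} {N : ℕ} (c : Fin N → α → K) :
    (germRingEquiv fun n => (shear fun i => algebraMap K R (c i n)).toRingEquiv).toRingHom.comp
        (mvPolynomialGerm l (Fin (N + 1)) K R).toRingHom =
      (polynomialGerm l (MvPolynomial (Fin N) R)).toRingHom.comp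
        ((Polynomial.mapRingHom (mvPolynomialGerm l (Fin N) K R).toRingHom).comp
          (shear fun i => (c i : Germ l K)).toAlgHom.toRingHom) := by
  refine MvPolynomial.ringHom_ext (fun a => ?_) fun i => ?_
  · induction a using Germ.inductionOn with | _ a
    change germRingHom _ (mvPolynomialGerm l _ K R (C (a : Germ l K))) = polynomialGerm l _
      (Polynomial.map (mvPolynomialGerm l (Fin N) K R).toRingHom (shear _ (C (a : Germ l K))))
    rw [mvPolynomialGerm_C, shear_C, Polynomial.map_C, AlgHom.toRingHom_eq_coe,
      RingHom.coe_coe, mvPolynomialGerm_C, polynomialGerm_C]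
    exact Germ.coe_eq.2 <| .of_forall fun n => shear_C _ _
  · change germRingHom _ (mvPolynomialGerm l _ K R (X i)) = polynomialGerm l _
      (Polynomial.map (mvPolynomialGerm l (Fin N) K R).toRingHom (shear _ (X i)))
    rw [mvPolynomialGerm_X]
    refine i.cases ?_ fun i => ?_
    · rw [shear_X_zero, Polynomial.map_X, polynomialGerm_X]
      exact Germ.coe_eq.2 <| .of_forall fun n => shear_X_zero _
    · rw [shear_X_succ, Polynomial.map_add, Polynomial.map_mul, Polynomial.map_C, Polynomial.map_C,
        Polynomial.map_X, AlgHom.toRingHom_eq_coe, RingHom.coe_coe, mvPolynomialGerm_X,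
        mvPolynomialGerm_C, map_add, map_mul, polynomialGerm_X, polynomialGerm_C, polynomialGerm_C]
      exact Germ.coe_eq.2 <| .of_forall fun n => shear_X_succ _ _

theorem flat_mapRingHom {A B : Type*} [CommRing A] [CommRing B] {f : A →+* B} (hf : f.Flat) :
    (Polynomial.mapRingHom f).Flat := by
  algebraize [f]
  algebraize [Polynomial.mapRingHom f]
  exact Module.Flat.isBaseChange A A[X] B B[X]
    (Algebra.IsPushout.out (R := A) (S := A[X]) (R' := B) (S' := B[X]))

theorem flat_mapRingHom_comp_shear {A B : Type*} [CommRing A] [CommRing B] {N : ℕ} (c : Fin N → A)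
    {f : MvPolynomial (Fin N) A →+* B} (hf : f.Flat) :
    ((Polynomial.mapRingHom f).comp (shear c).toAlgHom.toRingHom).Flat :=
  .comp (.of_bijective (shear c).bijective) (flat_mapRingHom hf)

theorem isUnit_leadingCoeff_map {A B : Type*} [CommRing A] [CommRing B] [Nontrivial B]
    (f : A →+* B) {p : A[X]} (hp : IsUnit p.leadingCoeff) : IsUnit (p.map f).leadingCoeff := by
  rw [Polynomial.leadingCoeff_map_eq_of_isUnit_leadingCoeff f hp]
  exact hp.map f

theorem flat_mvPolynomialGerm [CharZero K] [Nontrivial R] {U : Ultrafilter α} (N : ℕ) :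
    (mvPolynomialGerm (U : Filter α) (Fin N) K R).toRingHom.Flat := by
  induction N with
  | zero =>
    exact .of_isField ((isEmptyAlgEquiv (Germ (U : Filter α) K) (Fin 0)).toMulEquiv.isField
      (Field.toIsField _)) _
  | succ N ih =>
    refine flat_of_forall_exists_comp_eq fun g hg => ?_
    obtain ⟨c, hc⟩ := exists_isUnit_leadingCoeff_shear hg
    obtain ⟨c, rfl⟩ := exists_germ_coe_eq c
    let e : Germ (U : Filter α) (MvPolynomial (Fin (N + 1)) R) ≃+*
        Germ (U : Filter α) (MvPolynomial (Fin N) R)[X] :=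
      germRingEquiv fun n => (shear fun i => algebraMap K R (c i n)).toRingEquiv
    let φ := (Polynomial.mapRingHom (mvPolynomialGerm (U : Filter α) (Fin N) K R).toRingHom).comp
      (shear fun i => (c i : Germ (U : Filter α) K)).toAlgHom.toRingHom
    let j := (polynomialGerm (U : Filter α) (MvPolynomial (Fin N) R)).toRingHom
    have hcomp (f : MvPolynomial (Fin (N + 1)) (Germ (U : Filter α) K)) :
        e (mvPolynomialGerm (U : Filter α) (Fin (N + 1)) K R f) = j (φ f) :=
      RingHom.congr_fun (germRingHom_shear_comp (l := (U : Filter α)) (R := R) c) f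
    have hunit : IsUnit (φ g).leadingCoeff :=
      isUnit_leadingCoeff_map (mvPolynomialGerm (U : Filter α) (Fin N) K R).toRingHom hc
    refine ⟨_, _, φ, e.symm.toRingHom.comp j, flat_mapRingHom_comp_shear _ ih,
      e.symm.injective.comp polynomialGerm_injective,
      RingHom.ext fun f => e.symm_apply_eq.2 (hcomp f).symm, fun b => ?_, fun b s hbs => ?_⟩
    · obtain ⟨q, s, hb⟩ := exists_eq_polynomialGerm_mul_add hunit (e b)
      have hb : e b = j (φ g) * q + j s := hb
      refine ⟨e.symm q, s, (e.symm_apply_apply b).symm.trans ?_⟩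
      rw [hb, map_add, map_mul, ← hcomp, e.symm_apply_apply]
      rfl
    · have hmul : j (φ g) * e b = j s := by
        rw [← hcomp, ← map_mul]
        exact e.eq_symm_apply.1 hbs
      obtain ⟨s', hs'⟩ := mem_range_polynomialGerm_of_mul hunit hmul
      exact ⟨s', e.symm_apply_eq.2 hs'⟩

end MvPolynomialGerms

section FlatGerms

variable {α κ A B : Type*} {l : Filter α} [CommRing A] [CommRing B] [Fintype κ]

theorem flat_of_bijective_sum {f : A →+* B} (b : κ → B)
    (h : Function.Bijective fun u : κ → A => ∑ i, b i * f (u i)) : f.Flat := by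
  algebraize [f]
  have heq : ⇑(Fintype.linearCombination A b) = fun u : κ → A => ∑ i, b i * f (u i) := by
    ext u
    simp only [Fintype.linearCombination_apply, Algebra.smul_def, mul_comm]
    rfl
  exact .of_linearEquiv
    (LinearEquiv.ofBijective (Fintype.linearCombination A b) (heq ▸ h)).symm

theorem bijective_sum_germRingHom {b : κ → α → B} {f : α → A →+* B}
    (h : ∀ᶠ n in l, Function.Bijective fun u : κ → A => ∑ i, b i n * f n (u i)) :
    Function.Bijective fun u : κ → Germ l A =>
      ∑ i, (b i : Germ l B) * germRingHom f (u i) := by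
  have hsum (r : κ → α → A) : ∑ i, (b i : Germ l B) * germRingHom f (r i : Germ l A) =
      ((fun n => ∑ i, b i n * f n (r i n) : α → B) : Germ l B) :=
    (germ_coe_sum _ _).symm
  refine ⟨fun u u' huu' => ?_, fun q => ?_⟩
  · obtain ⟨r, rfl⟩ := exists_germ_coe_eq u
    obtain ⟨r', rfl⟩ := exists_germ_coe_eq u'
    have hrr' := Germ.coe_eq.1 ((hsum r).symm.trans (huu'.trans (hsum r')))
    ext i
    refine Germ.coe_eq.2 ?_
    filter_upwards [h, hrr'] with n hn hrn
    exact congrFun (hn.1 (a₁ := fun i => r i n) (a₂ := fun i => r' i n) hrn) i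
  · induction q using Germ.inductionOn with | _ q
    obtain ⟨r, hr⟩ := skolem.1 (h.mono fun n hn => hn.2 (q n))
    exact ⟨fun i => ((fun n => r n i : α → A) : Germ l A), (hsum _).trans (Germ.coe_eq.2 hr)⟩

theorem flat_germRingHom_of_boxSum_bijective {ι : Type*} [Fintype ι] [DecidableEq ι]
    {w : ι → ℕ} {G : α → ι → MvPolynomial ι A}
    (h : ∀ᶠ n in l, Function.Bijective (boxSum w (G n))) :
    (germRingHom (U := l) fun n =>
      (aeval (G n) : MvPolynomial ι A →ₐ[A] MvPolynomial ι A).toRingHom).Flat := by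
  let b (β : ∀ i, Fin (w i)) : α → MvPolynomial ι A := fun _ => monomial (boxExponent β) 1
  refine flat_of_bijective_sum (fun β => (b β : Germ l _)) ?_
  refine bijective_sum_germRingHom (h.mono fun n hn => ?_)
  convert hn using 1
  exact funext fun u => (boxSum_apply _ u).symm

end FlatGerms

section FlatGenerators

theorem flat_of_flat_comp_of_leftInverse {A B C : Type*} [CommRing A] [CommRing B] [CommRing C]
    {f : A →+* B} {g : B →+* C} {ρ : C →+* B} (hρ : Function.LeftInverse ρ g)
    (hgf : (g.comp f).Flat) : f.Flat := by
  algebraize [f, g, g.comp f]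
  have : Module.Flat A C := hgf
  let i : B →ₗ[A] C := (IsScalarTower.toAlgHom A B C).toLinearMap
  let r : C →ₗ[A] B :=
    { ρ with
      map_smul' a c := by
        change ρ (g (f a) * c) = f a * ρ c
        rw [map_mul, hρ] }
  exact Module.Flat.of_retract i r (LinearMap.ext hρ)

theorem flat_of_forall_flat_comp_rename {E A B : Type*} [CommRing A] [CommRing B]
    {f : MvPolynomial E A →+* B}
    (h : ∀ (N : ℕ) (κ : Fin N → E), Function.Injective κ →
      (f.comp (rename κ : MvPolynomial (Fin N) A →ₐ[A] _).toRingHom).Flat) : f.Flat := by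
  classical
  algebraize [f]
  refine Module.Flat.of_forall_isTrivialRelation fun {l p x} hpx => ?_
  let s : Finset E := Finset.univ.biUnion fun i => (p i).vars
  let κ (i : Fin s.card) : E := s.equivFin.symm i
  have hκ : Function.Injective κ := Subtype.val_injective.comp s.equivFin.symm.injective
  have hp (i) : ∃ q, rename κ q = p i :=
    exists_rename_eq_of_vars_subset_range (p i) κ hκ fun j hj =>
      ⟨s.equivFin ⟨j, Finset.mem_biUnion.2 ⟨i, Finset.mem_univ i, hj⟩⟩, by simp [κ]⟩
  choose q hq using hp
  have hflat := h _ κ hκ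
  algebraize [f.comp (rename κ : MvPolynomial (Fin s.card) A →ₐ[A] _).toRingHom]
  have hqx : ∑ i, rename κ (q i) • x i = 0 := by simpa only [hq] using hpx
  obtain ⟨k, a, z, hxz, hqa⟩ :=
    Module.Flat.isTrivialRelation_of_sum_smul_eq_zero (f := q) (x := x) hqx
  refine ⟨k, fun i j => rename κ (a i j), z, hxz, fun j => ?_⟩
  simp only [← hq, ← map_mul, ← map_sum, hqa, map_zero]

theorem IsIndecomposableFamily.comp {K S E E' : Type*} [Field K] [CommRing S] [Algebra K S]
    {H : ℕ → Submodule K S} {w : E → ℕ} {y : E → S} (h : IsIndecomposableFamily H w y)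
    {κ : E' → E} (hκ : Function.Injective κ) : IsIndecomposableFamily H (w ∘ κ) (y ∘ κ) :=
  ⟨fun i => h.pos (κ i), fun i => h.mem (κ i), h.linearIndependent.comp κ hκ⟩

variable {α σ K : Type*} [Field K] [CharZero K] {U : Ultrafilter α}

theorem IsIndecomposableFamily.flat_aeval_coe {N : ℕ} {w : Fin N → ℕ}
    {a : Fin N → α → MvPolynomial σ K}
    (ha : IsIndecomposableFamily (homogeneousGerms (U : Filter α) σ K) w
      fun i => (a i : Germ (U : Filter α) (MvPolynomial σ K))) :
    (aeval fun i => (a i : Germ (U : Filter α) (MvPolynomial σ K)) :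
      MvPolynomial (Fin N) (Germ (U : Filter α) K) →ₐ[Germ (U : Filter α) K] _).toRingHom.Flat := by
  obtain ⟨v, hv⟩ := skolem.1 (eventually_exists_boxSum_translation_bijective ha)
  have hflat := (flat_mvPolynomialGerm (K := K) (R := MvPolynomial σ K) (U := U) N).comp
    (flat_germRingHom_of_boxSum_bijective hv)
  refine flat_of_flat_comp_of_leftInverse (g := germRingHom fun n => (translation (v n)).toRingHom)
    (ρ := germRingHom fun _ => constantCoeff) (fun x => Germ.inductionOn x fun x =>
      Germ.coe_eq.2 <| .of_forall fun n => constantCoeff_translation (v n) (x n)) ?_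
  convert hflat using 1
  refine MvPolynomial.ringHom_ext (fun c => ?_) fun i => ?_
  · induction c using Germ.inductionOn with | _ c
    change germRingHom _ (aeval _ (C (c : Germ (U : Filter α) K))) =
      germRingHom _ (mvPolynomialGerm _ _ K _ (C (c : Germ (U : Filter α) K)))
    rw [aeval_C, algebraMap_germ_coe, mvPolynomialGerm_C]
    have hn (n : α) : translation (v n) (algebraMap K (MvPolynomial σ K) (c n)) =
        aeval (fun i => translation (v n) (a i n)) (C (algebraMap K (MvPolynomial σ K) (c n))) := by
      rw [aeval_C, AlgHom.commutes, MvPolynomial.algebraMap_apply]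
      rfl
    exact Germ.coe_eq.2 (.of_forall hn)
  · change germRingHom _ (aeval _ (X i)) = germRingHom _ (mvPolynomialGerm _ _ K _ (X i))
    rw [aeval_X, mvPolynomialGerm_X]
    exact Germ.coe_eq.2 <| .of_forall fun n =>
      (aeval_X (fun i => translation (v n) (a i n)) i).symm

theorem IsIndecomposableFamily.flat_aeval {E : Type*} {w : E → ℕ}
    {y : E → Germ (U : Filter α) (MvPolynomial σ K)}
    (hy : IsIndecomposableFamily (homogeneousGerms (U : Filter α) σ K) w y) :
    (aeval y :
      MvPolynomial E (Germ (U : Filter α) K) →ₐ[Germ (U : Filter α) K] _).toRingHom.Flat := by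
  refine flat_of_forall_flat_comp_rename fun N κ hκ => ?_
  obtain ⟨a, ha⟩ := exists_germ_coe_eq (y ∘ κ)
  have hcomp := hy.comp hκ
  rw [← ha] at hcomp
  convert hcomp.flat_aeval_coe using 1
  refine MvPolynomial.ringHom_ext (fun c => ?_) fun i => ?_
  · simp
  · simpa using (congrFun ha i).symm

end FlatGenerators

section BoundedSubproducts

theorem IsTameStep.mono {R : Type*} [CommRing R] {S S' : Set R} (hS : S ⊆ S') {I : Ideal R}
    {c : R} (h : IsTameStep S' I c) : IsTameStep S I c :=
  fun p hp => h p (hS hp)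

theorem exists_cyclicFiltration_of_flat_aeval {K A E : Type*} [Field K] [CommRing A] [Algebra K A]
    {y : E → A} (hy : (aeval y : MvPolynomial E K →ₐ[K] A).toRingHom.Flat) {S : Set A}
    (hS : ∀ x ∈ S, ∃ p : MvPolynomial E K, aeval y p = x) {k : ℕ} {Q : Fin k → A}
    (hQ : ∀ j, ∃ q : MvPolynomial E K, aeval y q = Q j) :
    ∃ l, CyclicFiltration (IsTameStep S) l (Ideal.span (Set.range Q)) := by
  classical
  choose q hq using hQ
  let s : Finset E := Finset.univ.biUnion fun j => (q j).vars
  have hvars (j) : ∃ q', rename ((↑) : s → E) q' = q j :=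
    exists_rename_eq_of_vars_subset_range _ _ Subtype.val_injective fun i hi => by
      simpa [s] using ⟨j, hi⟩
  choose q' hq' using hvars
  let ε : MvPolynomial {i // i ∉ s} (MvPolynomial s K) ≃ₐ[K] MvPolynomial E K :=
    (sumAlgEquiv K {i // i ∉ s} s).symm.trans
      (renameEquiv K ((Equiv.sumComm _ _).trans (Equiv.sumCompl (· ∈ s))))
  have hε (p : MvPolynomial s K) : ε (C p) = rename (↑) p := by
    suffices ε.toAlgHom.comp (IsScalarTower.toAlgHom K (MvPolynomial s K) _) =
      rename ((↑) : s → E) from DFunLike.congr_fun this p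
    ext i
    simp [ε]
  let φ := (aeval y : MvPolynomial E K →ₐ[K] A).toRingHom.comp ε.toAlgHom.toRingHom
  have hφ : φ.Flat := (RingHom.Flat.of_bijective ε.bijective).comp hy
  obtain ⟨l, hl⟩ := CyclicFiltration.exists_isPrimeStep (Ideal.span (Set.range q'))
  refine ⟨l, ?_⟩
  have hrange : S ⊆ Set.range φ := fun x hx => by
    obtain ⟨p, rfl⟩ := hS x hx
    exact ⟨ε.symm p, congrArg (aeval y) (ε.apply_symm_apply p)⟩
  have hspan : Ideal.span (Set.range Q) =
      ((Ideal.span (Set.range q')).map C).map φ := by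
    rw [Ideal.map_span, Ideal.map_span, ← Set.range_comp, ← Set.range_comp]
    refine congrArg _ (congrArg _ (funext fun j => ?_))
    rw [← hq, ← hq', ← hε]
    rfl
  rw [hspan]
  exact (hl.map C fun _ _ h => h.map_C).map φ fun _ _ h => (h.isTameStep_map hφ).mono hrange

theorem rename_mem_span_range_iff {R σ τ : Type*} [CommRing R] {f : σ → τ}
    (hf : Function.Injective f) {k : ℕ} {Q : Fin k → MvPolynomial σ R} {p : MvPolynomial σ R} :
    rename f p ∈ Ideal.span (Set.range fun j => rename f (Q j)) ↔
      p ∈ Ideal.span (Set.range Q) := by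
  simp only [Ideal.mem_span_range_iff_exists_fun]
  constructor
  · rintro ⟨c, hc⟩
    refine ⟨fun j => killCompl hf (c j), ?_⟩
    simpa only [map_sum, map_mul, killCompl_rename_app] using congrArg (killCompl hf) hc
  · rintro ⟨c, rfl⟩
    exact ⟨fun j => rename f (c j), by simp only [map_sum, map_mul]⟩

variable {α σ K : Type*} [Field K] {U : Ultrafilter α} {r : ℕ}

theorem exists_mem_homogeneousGerms_of_bounded {f : α → MvPolynomial σ K}
    (hf : ∀ᶠ n in U, ∃ e ≤ r, (f n).IsHomogeneous e) :
    ∃ e, (f : Germ (U : Filter α) (MvPolynomial σ K)) ∈ homogeneousGerms (U : Filter α) σ K e :=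
  let ⟨e, _, he⟩ := (Ultrafilter.eventually_exists_mem_iff (Set.finite_Iic r)).1 hf
  ⟨e, he⟩

theorem eventually_cyclicFiltration_isTameStep [CharZero K] {k : ℕ}
    (Q : α → Fin k → MvPolynomial σ K)
    (hQ : ∀ n j, ∃ e ≤ r, (Q n j).IsHomogeneous e) :
    ∃ l, ∀ᶠ n in U, CyclicFiltration (IsTameStep {p | ∃ e ≤ r, p.IsHomogeneous e}) l
      (Ideal.span (Set.range (Q n))) := by
  obtain ⟨E, w, y, -, -, -, hy, hgen⟩ :=
    (hasEnoughDerivations_homogeneousGerms (U := U) (σ := σ) (K := K)).exists_extension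
      (E := Empty) (w := nofun) (y := nofun) ⟨nofun, nofun, linearIndependent_empty_type⟩
  have hrange {f : α → MvPolynomial σ K} (hf : ∀ᶠ n in U, ∃ e ≤ r, (f n).IsHomogeneous e) :
      ∃ q : MvPolynomial E (Germ (U : Filter α) K), aeval y q = (f : Germ (U : Filter α) _) := by
    obtain ⟨e, he⟩ := exists_mem_homogeneousGerms_of_bounded hf
    obtain ⟨q, -, hq⟩ := hgen e he
    exact ⟨q, hq⟩
  obtain ⟨l, hl⟩ := exists_cyclicFiltration_of_flat_aeval hy.flat_aeval
    (S := {x | x.LiftPred (· ∈ {p | ∃ e ≤ r, p.IsHomogeneous e})})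
    (Q := fun j => ((fun n => Q n j : α → MvPolynomial σ K) : Germ (U : Filter α) _))
    (fun x => Germ.inductionOn x fun f hf => hrange hf) fun j => hrange (.of_forall fun n => hQ n j)
  exact ⟨l, CyclicFiltration.of_germIdeal (germIdeal_span_range Q ▸ hl)⟩

theorem exists_bounded_subproduct_mem_ideal_general (K : Type*) [Field K] [CharZero K] (k r : ℕ) :
    ∃ f : ℕ, ∀ (σ : Type*) {ι : Type*} (s : Finset ι), s.Nonempty →
      ∀ (P : ι → MvPolynomial σ K) (Q : Fin k → MvPolynomial σ K),
        (∀ i ∈ s, ∃ e ≤ r, (P i).IsHomogeneous e) →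
        (∀ j, ∃ e ≤ r, (Q j).IsHomogeneous e) →
        ∏ i ∈ s, P i ∈ Ideal.span (Set.range Q) →
        ∃ t ⊆ s, t.Nonempty ∧ t.card ≤ f ∧ ∏ i ∈ t, P i ∈ Ideal.span (Set.range Q) := by
  by_contra hcon
  push Not at hcon
  choose σ ι s hs P Q hP hQ hprod hbad using hcon
  let ν (m : ℕ) : MvPolynomial (σ m) K →ₐ[K] MvPolynomial (Σ m, σ m) K := rename (Sigma.mk m)
  have hν {m : ℕ} {p : MvPolynomial (σ m) K} (hp : ∃ e ≤ r, p.IsHomogeneous e) :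
      ∃ e ≤ r, (ν m p).IsHomogeneous e :=
    hp.imp fun e he => ⟨he.1, he.2.rename_isHomogeneous⟩
  have hmem {m : ℕ} {p : MvPolynomial (σ m) K} :
      ν m p ∈ Ideal.span (Set.range fun j => ν m (Q m j)) ↔ p ∈ Ideal.span (Set.range (Q m)) :=
    rename_mem_span_range_iff sigma_mk_injective
  obtain ⟨l, hl⟩ := eventually_cyclicFiltration_isTameStep (U := hyperfilter ℕ)
    (fun m j => ν m (Q m j)) fun m j => hν (hQ m j)
  have hlarge : ∀ᶠ m in hyperfilter ℕ, l + 1 ≤ m :=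
    Nat.hyperfilter_le_atTop (eventually_ge_atTop (l + 1))
  obtain ⟨m, hm, hfil⟩ := (hlarge.and hl).exists
  obtain ⟨t, hts, hne, htl, ht⟩ := hfil.exists_nonempty_subset_prod_mem (hs m)
    (fun i hi => hν (hP m i hi)) (by rw [← map_prod, hmem]; exact hprod m)
  rw [← map_prod, hmem] at ht
  exact hbad m t hts hne (htl.trans hm) ht

end BoundedSubproducts

/-- For every `k, r` there is a bound `f = f(k, r)` such that whenever homogeneous
polynomials `P₁, …, P_d, Q₁, …, Q_k ∈ ℂ[x₀, …, xₙ]`, all of degree at most `r`, satisfy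
`P₁ ⋯ P_d ∈ ⟨Q₁, …, Q_k⟩`, there is a non-empty subset of at most `f` of the `Pᵢ` whose
product already lies in `⟨Q₁, …, Q_k⟩`. -/
theorem exists_bounded_subproduct_mem_ideal (k r : ℕ) :
    ∃ f : ℕ, ∀ (n d : ℕ), 1 ≤ d →
      ∀ (P : Fin d → MvPolynomial (Fin (n + 1)) ℂ)
        (Q : Fin k → MvPolynomial (Fin (n + 1)) ℂ),
        (∀ i, ∃ e ≤ r, (P i).IsHomogeneous e) →
        (∀ j, ∃ e ≤ r, (Q j).IsHomogeneous e) →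
        (∏ i, P i) ∈ Ideal.span (Set.range Q) →
        ∃ s : Finset (Fin d), s.Nonempty ∧ s.card ≤ f ∧
          (∏ i ∈ s, P i) ∈ Ideal.span (Set.range Q) := by
  obtain ⟨f, hf⟩ := exists_bounded_subproduct_mem_ideal_general ℂ k r
  exact ⟨f, fun n d hd P Q hP hQ hprod =>
    (hf _ _ ⟨⟨0, hd⟩, Finset.mem_univ _⟩ P Q (fun i _ => hP i) hQ hprod).imp fun _ hs => hs.2⟩
end
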